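/- arXiv:1807.11465 — 2 statements merged into one kernel-verified Lean document; each statement's English description precedes it below -/
import Mathlib

section
/- Signed Vizing's Theorem: For every signed simple graph Σ = (Γ, σ) on a finite simple graph Γ, the chromatic index satisfies Δ(Σ) ≤ χ'(Σ) ≤ Δ(Σ) + 1. -/
open SimpleGraph

/-- The signed color set `M_n`: for `n = 2k+1` it is `{0, ±1, …, ±k}`,
and for `n = 2k` it is `{±1, …, ±k}`. -/
def Mset (n : ℕ) : Set ℤ :=
  {a : ℤ | 2 * a.natAbs ≤ n ∧ (a = 0 → Odd n)}

/-- An `n`-edge coloring of the signed graph `(G, σ)`: an assignment of colors from `Mset n`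
to the incidences of `G` such that `γ(v,e) = -σ(e)·γ(w,e)` for each edge `e : vw`. -/
structure SColoring {V : Type*} (G : SimpleGraph V) (σ : Sym2 V → ℤ) (n : ℕ) where
  col : V → Sym2 V → ℤ
  mem_colors : ∀ ⦃v w : V⦄, G.Adj v w → col v s(v, w) ∈ Mset n
  compat : ∀ ⦃v w : V⦄, G.Adj v w → col v s(v, w) = -σ s(v, w) * col w s(v, w)

namespace SColoring

variable {V : Type*} {G : SimpleGraph V} {σ : Sym2 V → ℤ} {n : ℕ}

/-- A coloring is proper if distinct edges incident to a common vertex receive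
distinct colors at that vertex. -/
def Proper (c : SColoring G σ n) : Prop :=
  ∀ ⦃v w x : V⦄, G.Adj v w → G.Adj v x → w ≠ x → c.col v s(v, w) ≠ c.col v s(v, x)

/-- A coloring is zero-free if the color `0` is never used. -/
def ZeroFree (c : SColoring G σ n) : Prop :=
  ∀ ⦃v w : V⦄, G.Adj v w → c.col v s(v, w) ≠ 0

/-- The color `a` is absent at the vertex `v` if no edge incident to `v` is
colored `a` at `v`. -/
def Absent (c : SColoring G σ n) (a : ℤ) (v : V) : Prop :=
  ∀ ⦃w : V⦄, G.Adj v w → c.col v s(v, w) ≠ a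

end SColoring

/-- The involution of `ℤ` exchanging `a` with `b` and `-a` with `-b`. -/
def signedSwap (a b x : ℤ) : ℤ :=
  if x = a then b else if x = b then a else if x = -a then -b else if x = -b then -a else x

/-- `M` assigns to every vertex a set of available colors; `HasSDR M X` says that the sets
attached to the members of `X` have a system of distinct representatives. -/
def HasSDR {V : Type*} (M : V → Set ℤ) (X : Finset V) : Prop :=
  ∃ A : V → ℤ, Set.InjOn A X ∧ ∀ w ∈ X, A w ∈ M w

/-- `M'` arises from `M` by applying `signedSwap a b` to the incidences `e` and `e'`. -/
def Flips {V : Type*} (M M' : V → Set ℤ) (a b : ℤ) (e e' : V × ℤ) : Prop :=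
  ∀ v x, x ∈ M v →
    ((v, x) = e ∨ (v, x) = e' → signedSwap a b x ∈ M' v) ∧
    ((v, x) ≠ e → (v, x) ≠ e' → x ∈ M' v)

/-- A family of color availabilities that is closed under Kempe changes. -/
structure KempeClosed {V : Type*} (C : Finset ℤ) (X : Finset V) (F : Set (V → Set ℤ)) : Prop where
  neg_mem : ∀ x ∈ C, -x ∈ C
  zero_notMem : (0 : ℤ) ∉ C
  mem_colors : ∀ M ∈ F, ∀ v, ∀ x ∈ M v, x ∈ C
  exists_ne : ∀ M ∈ F, ∀ w ∈ X, ∀ c, ∃ c' ∈ M w, c' ≠ c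
  kempe : ∀ M ∈ F, ∀ a ∈ C, ∀ b ∈ C, a ≠ b → ∃ P : V × ℤ → V × ℤ → Prop,
    (∀ e₁ e₂ e, P e₁ e → P e₂ e → e ≠ e₁ → e ≠ e₂ → e₁ = e₂) ∧
    ∀ v x, x ∈ M v → (x = a ∨ x = b ∨ x = -a ∨ x = -b) → ∃ M' ∈ F, ∃ e' : V × ℤ,
      (e'.2 = a ∨ e'.2 = b ∨ e'.2 = -a ∨ e'.2 = -b) ∧ (e' = (v, x) ∨ P (v, x) e') ∧
      Flips M M' a b (v, x) e'

section Shift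

variable {V : Type*}

/-- Shifting an injective assignment along a path moves the unassigned vertex from the
beginning of the path to its end. -/
lemma exists_shift {X : Finset V} {F : V → ℤ} {x : ℕ → V} :
    ∀ {t : ℕ}, Set.InjOn x (Set.Iic t) → (∀ s ≤ t, x s ∈ X) →
    (∀ w ∈ X, ∀ w' ∈ X, w ≠ x 0 → w' ≠ x 0 → F w = F w' → w = w') →
    ∃ F' : V → ℤ, (∀ s < t, F' (x s) = F (x (s + 1))) ∧
      (∀ w, (∀ s < t, w ≠ x s) → F' w = F w) ∧
      (∀ w ∈ X, ∀ w' ∈ X, w ≠ x t → w' ≠ x t → F' w = F' w' → w = w') := by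
  classical
  intro t
  induction t with
  | zero => intro _ _ h; exact ⟨F, by simp, by simp, h⟩
  | succ t ih =>
    intro hx hX hF
    obtain ⟨F', h1, h2, h3⟩ := ih (hx.mono (by intro s; simp; omega))
      (fun s hs => hX s (by omega)) hF
    have hne : ∀ s s', s ≤ t + 1 → s' ≤ t + 1 → x s = x s' → s = s' :=
      fun s s' hs hs' h => hx hs hs' h
    have hlast : F' (x (t + 1)) = F (x (t + 1)) :=
      h2 _ fun s hs h => by have := hne _ _ le_rfl (by omega) h; omega
    refine ⟨Function.update F' (x t) (F (x (t + 1))), ?_, ?_, ?_⟩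
    · intro s hs
      rcases Nat.lt_succ_iff_lt_or_eq.1 hs with h | rfl
      · rw [Function.update_of_ne, h1 s h]
        intro h'; have := hne _ _ (by omega) (by omega) h'; omega
      · simp
    · intro w hw
      rw [Function.update_of_ne (hw t (by omega)), h2 w fun s hs => hw s (by omega)]
    · intro w hw w' hw' hwt hwt' h
      have htt : x (t + 1) ≠ x t := fun h => by
        have := hne _ _ le_rfl (by omega) h; omega
      by_cases e1 : w = x t <;> by_cases e2 : w' = x t
      · rw [e1, e2]
      · subst e1
        rw [Function.update_self, Function.update_of_ne e2, ← hlast] at h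
        exact absurd (h3 _ (hX _ le_rfl) _ hw' htt e2 h) hwt'.symm
      · subst e2
        rw [Function.update_self, Function.update_of_ne e1, ← hlast] at h
        exact absurd (h3 _ hw _ (hX _ le_rfl) e1 htt h) hwt
      · rw [Function.update_of_ne e1, Function.update_of_ne e2] at h
        exact h3 _ hw _ hw' e1 e2 h

/-- Completing an assignment at the one unassigned vertex. -/
lemma HasSDR.of_update {M : V → Set ℤ} {X : Finset V} {F : V → ℤ} {y : V} {z : ℤ}
    (hF : ∀ w ∈ X, ∀ w' ∈ X, w ≠ y → w' ≠ y → F w = F w' → w = w')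
    (hM : ∀ w ∈ X, w ≠ y → F w ∈ M w) (hz : z ∈ M y) (hfree : ∀ w ∈ X, w ≠ y → F w ≠ z) :
    HasSDR M X := by
  classical
  refine ⟨Function.update F y z, ?_, ?_⟩
  · intro w hw w' hw' h
    by_cases e1 : w = y <;> by_cases e2 : w' = y
    · rw [e1, e2]
    · subst e1; rw [Function.update_self, Function.update_of_ne e2] at h
      exact absurd h.symm (hfree _ hw' e2)
    · subst e2; rw [Function.update_self, Function.update_of_ne e1] at h
      exact absurd h (hfree _ hw e1)
    · rw [Function.update_of_ne e1, Function.update_of_ne e2] at h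
      exact hF _ hw _ hw' e1 e2 h
  · intro w hw
    by_cases e1 : w = y
    · subst e1; simpa using hz
    · rw [Function.update_of_ne e1]; exact hM _ hw e1

end Shift

/-- An assignment `F` of available colors to `X` minus the vertex `v 0`, together with a closed
fan `v 1, …, v l` that `v 0` points into: the color of `v (t + 1)` is available at `v t`, and the
color of `v 1` is available at both `v 0` and `v l`. -/
structure FanLoop {V : Type*} (M : V → Set ℤ) (X : Finset V) (F : V → ℤ) (v : ℕ → V) (l : ℕ) :
    Prop where
  two_le : 2 ≤ l
  inj : ∀ s ≤ l, ∀ t ≤ l, v s = v t → s = t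
  mem : ∀ t ≤ l, v t ∈ X
  injF : ∀ w ∈ X, ∀ w' ∈ X, w ≠ v 0 → w' ≠ v 0 → F w = F w' → w = w'
  memF : ∀ w ∈ X, w ≠ v 0 → F w ∈ M w
  next : ∀ t < l, F (v (t + 1)) ∈ M (v t)
  close : F (v 1) ∈ M (v l)

namespace FanLoop

variable {V : Type*} {M M' : V → Set ℤ} {X : Finset V} {F : V → ℤ} {v : ℕ → V} {l : ℕ}

lemma ne_zero (L : FanLoop M X F v l) {t : ℕ} (h1 : 1 ≤ t) (h2 : t ≤ l) : v t ≠ v 0 := fun h => by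
  have := L.inj _ h2 _ (Nat.zero_le _) h; omega

lemma injF_loop (L : FanLoop M X F v l) {s t : ℕ} (h1 : 1 ≤ s) (h2 : s ≤ l) (h3 : 1 ≤ t)
    (h4 : t ≤ l) (h : F (v s) = F (v t)) : s = t :=
  L.inj _ h2 _ h4 (L.injF _ (L.mem _ h2) _ (L.mem _ h4) (L.ne_zero h1 h2) (L.ne_zero h3 h4) h)

/-- A fan loop can be traversed in the opposite direction. -/
lemma reverse (L : FanLoop M X F v l) : ∃ F' v', FanLoop M X F' v' l ∧ v' 0 = v 0 ∧
    (∀ t, 1 ≤ t → t ≤ l → v' t = v (l + 1 - t)) ∧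
    (∀ t, 1 ≤ t → t < l → F' (v t) = F (v (t + 1))) ∧ F' (v l) = F (v 1) ∧
    (∀ w, (∀ t, 1 ≤ t → t ≤ l → w ≠ v t) → F' w = F w) ∧
    (∀ w ∈ X, w ≠ v 0 → ∃ w' ∈ X, w' ≠ v 0 ∧ F' w = F w') := by
  classical
  have hl := L.two_le
  obtain ⟨p, hp1, hp2, hp3⟩ : ∃ p : V → V, (∀ t, 1 ≤ t → t < l → p (v t) = v (t + 1)) ∧
      p (v l) = v 1 ∧ (∀ w, (∀ t, 1 ≤ t → t ≤ l → w ≠ v t) → p w = w) := by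
    refine ⟨fun w => if h : ∃ t, 1 ≤ t ∧ t ≤ l ∧ w = v t then
      (if h.choose = l then v 1 else v (h.choose + 1)) else w, ?_, ?_, ?_⟩
    · intro t h1 h2
      have h : ∃ t', 1 ≤ t' ∧ t' ≤ l ∧ v t = v t' := ⟨t, h1, h2.le, rfl⟩
      have ht : h.choose = t :=
        (L.inj _ h2.le _ h.choose_spec.2.1 h.choose_spec.2.2).symm
      simp only [dif_pos h, ht, if_neg h2.ne]
    · have h : ∃ t', 1 ≤ t' ∧ t' ≤ l ∧ v l = v t' := ⟨l, by omega, le_rfl, rfl⟩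
      have ht : h.choose = l :=
        (L.inj _ le_rfl _ h.choose_spec.2.1 h.choose_spec.2.2).symm
      simp only [dif_pos h, ht, if_true]
    · intro w hw
      exact dif_neg fun ⟨t, h1, h2, h3⟩ => hw t h1 h2 h3
  have key : ∀ w ∈ X, w ≠ v 0 → p w ∈ X ∧ p w ≠ v 0 ∧ F (p w) ∈ M w := by
    intro w hw hw0
    by_cases h : ∃ t, 1 ≤ t ∧ t ≤ l ∧ w = v t
    · obtain ⟨t, h1, h2, rfl⟩ := h
      rcases h2.lt_or_eq with h | rfl
      · rw [hp1 t h1 h]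
        exact ⟨L.mem _ (by omega), L.ne_zero (by omega) (by omega), L.next _ h⟩
      · rw [hp2]
        exact ⟨L.mem _ (by omega), L.ne_zero (by omega) (by omega), L.close⟩
    · rw [hp3 w fun t h1 h2 h3 => h ⟨t, h1, h2, h3⟩]
      exact ⟨hw, hw0, L.memF _ hw hw0⟩
  have hpinj : ∀ w w', w ≠ v 0 → w' ≠ v 0 → p w = p w' → w = w' := by
    have aux : ∀ t, 1 ≤ t → t ≤ l → ∃ s, 1 ≤ s ∧ s ≤ l ∧ p (v t) = v s ∧
        (s = t + 1 ∨ (t = l ∧ s = 1)) := by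
      intro t h1 h2
      rcases h2.lt_or_eq with h | rfl
      · exact ⟨t + 1, by omega, by omega, hp1 t h1 h, Or.inl rfl⟩
      · exact ⟨1, by omega, by omega, hp2, Or.inr ⟨rfl, rfl⟩⟩
    intro w w' _ _ h
    by_cases e1 : ∃ t, 1 ≤ t ∧ t ≤ l ∧ w = v t <;> by_cases e2 : ∃ t, 1 ≤ t ∧ t ≤ l ∧ w' = v t
    · obtain ⟨t, h1, h2, rfl⟩ := e1
      obtain ⟨t', h1', h2', rfl⟩ := e2
      obtain ⟨s, a1, a2, a3, a4⟩ := aux t h1 h2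
      obtain ⟨s', b1, b2, b3, b4⟩ := aux t' h1' h2'
      rw [a3, b3] at h
      have := L.inj _ a2 _ b2 h
      congr 1; omega
    · obtain ⟨t, h1, h2, rfl⟩ := e1
      obtain ⟨s, a1, a2, a3, a4⟩ := aux t h1 h2
      rw [a3, hp3 w' fun t h1 h2 h3 => e2 ⟨t, h1, h2, h3⟩] at h
      exact absurd ⟨s, a1, a2, h.symm⟩ e2
    · obtain ⟨t, h1, h2, rfl⟩ := e2
      obtain ⟨s, a1, a2, a3, a4⟩ := aux t h1 h2
      rw [a3, hp3 w fun t h1 h2 h3 => e1 ⟨t, h1, h2, h3⟩] at h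
      exact absurd ⟨s, a1, a2, h⟩ e1
    · rwa [hp3 w fun t h1 h2 h3 => e1 ⟨t, h1, h2, h3⟩,
        hp3 w' fun t h1 h2 h3 => e2 ⟨t, h1, h2, h3⟩] at h
  have hv : ∀ t, 1 ≤ t → (if t = 0 then v 0 else v (l + 1 - t)) = v (l + 1 - t) := fun t ht => by
    rw [if_neg (by omega)]
  refine ⟨fun w => F (p w), fun t => if t = 0 then v 0 else v (l + 1 - t),
    ⟨hl, ?_, ?_, ?_, ?_, ?_, ?_⟩, by simp, fun t h1 _ => hv t h1, ?_, ?_, ?_,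
    fun w hw h0 => ⟨p w, (key w hw h0).1, (key w hw h0).2.1, rfl⟩⟩
  · intro s hs t ht h
    by_cases e1 : s = 0 <;> by_cases e2 : t = 0
    · omega
    · simp only [e1, e2, if_true, if_false] at h
      exact absurd h.symm (L.ne_zero (by omega) (by omega))
    · simp only [e1, e2, if_true, if_false] at h
      exact absurd h (L.ne_zero (by omega) (by omega))
    · simp only [e1, e2, if_false] at h
      have := L.inj _ (by omega) _ (by omega) h
      omega
  · intro t ht
    by_cases e : t = 0
    · simpa [e] using L.mem 0 (by omega)
    · simp only [e, if_false]; exact L.mem _ (by omega)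
  · intro w hw w' hw' h0 h0' h
    simp only [if_true] at h0 h0'
    obtain ⟨k1, k2, -⟩ := key w hw h0
    obtain ⟨k1', k2', -⟩ := key w' hw' h0'
    exact hpinj _ _ h0 h0' (L.injF _ k1 _ k1' k2 k2' h)
  · intro w hw h0
    exact (key w hw (by simpa using h0)).2.2
  · intro t ht
    by_cases e : t = 0
    · subst e
      simp only [zero_add, one_ne_zero, if_false, if_true, Nat.add_sub_cancel, hp2]
      exact L.next 0 (by omega)
    · simp only [e, if_false]
      rw [if_neg (by omega), show l + 1 - (t + 1) = l - t by omega, hp1 _ (by omega) (by omega),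
        show l - t + 1 = l + 1 - t by omega]
      exact L.memF _ (L.mem _ (by omega)) (L.ne_zero (by omega) (by omega))
  · simp only [one_ne_zero, if_false, Nat.add_sub_cancel, hp2]
    rw [if_neg (by omega), show l + 1 - l = 1 by omega]
    exact L.memF _ (L.mem _ (by omega)) (L.ne_zero (by omega) (by omega))
  · intro t h1 h2; simp only [hp1 t h1 h2]
  · simp only [hp2]
  · intro w hw; simp only [hp3 w hw]

end FanLoop

/-- Following the fan from an unassigned vertex either produces a free color or a fan loop. -/
lemma exists_free_or_fanLoop {V : Type*} {M : V → Set ℤ} {Y : Finset V} {y : V} {F : V → ℤ}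
    (hy : y ∈ Y) (hF : ∀ w ∈ Y, ∀ w' ∈ Y, w ≠ y → w' ≠ y → F w = F w' → w = w')
    (hM : ∀ w ∈ Y, w ≠ y → F w ∈ M w) (htwo : ∀ w ∈ Y, ∀ c, ∃ c' ∈ M w, c' ≠ c) :
    ∃ y' ∈ Y, ∃ F' : V → ℤ,
      (∀ w ∈ Y, ∀ w' ∈ Y, w ≠ y' → w' ≠ y' → F' w = F' w' → w = w') ∧
      (∀ w ∈ Y, w ≠ y' → F' w ∈ M w) ∧
      (∀ w ∈ Y, w ≠ y' → ∃ w' ∈ Y, w' ≠ y ∧ F' w = F w') ∧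
      ((∃ z ∈ M y', ∀ w ∈ Y, w ≠ y' → F' w ≠ z) ∨
        ∃ v l, v 0 = y' ∧ FanLoop M Y F' v l) := by
  classical
  have hch : ∀ w, ∃ c', w ∈ Y → c' ∈ M w ∧ c' ≠ F w := by
    intro w
    by_cases hw : w ∈ Y
    · obtain ⟨c', h1, h2⟩ := htwo w hw (F w); exact ⟨c', fun _ => ⟨h1, h2⟩⟩
    · exact ⟨0, fun h => absurd h hw⟩
  choose o ho using hch
  obtain ⟨nxt, hnxt⟩ : ∃ nxt : V → V, ∀ w, (∃ w' ∈ Y, w' ≠ y ∧ F w' = o w) →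
      nxt w ∈ Y ∧ nxt w ≠ y ∧ F (nxt w) = o w := by
    refine ⟨fun w => if h : ∃ w' ∈ Y, w' ≠ y ∧ F w' = o w then h.choose else w, fun w h => ?_⟩
    simp only [dif_pos h]; exact h.choose_spec
  set x : ℕ → V := fun t => nxt^[t] y with hx
  have hxs : ∀ t, x (t + 1) = nxt (x t) := fun t => by
    simp only [hx, Function.iterate_succ_apply']
  have hx0 : x 0 = y := rfl
  let B : ℕ → Prop := fun t => (¬ ∃ w' ∈ Y, w' ≠ y ∧ F w' = o (x t)) ∨ ∃ s ≤ t, x (t + 1) = x s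
  have hpre : ∀ t, (∀ s < t, ¬ B s) → (∀ s ≤ t, x s ∈ Y) ∧ Set.InjOn x (Set.Iic t) ∧
      (∀ s < t, F (x (s + 1)) = o (x s) ∧ x (s + 1) ≠ y) := by
    intro t
    induction t with
    | zero =>
      intro _
      refine ⟨fun s hs => ?_, ?_, fun s hs => by omega⟩
      · rw [Nat.le_zero.1 hs, hx0]; exact hy
      · intro s hs s' hs' _
        simp at hs hs'; omega
    | succ t ih =>
      intro h
      obtain ⟨i1, i2, i3⟩ := ih fun s hs => h s (by omega)
      have ht := h t (by omega)
      simp only [B, not_or, not_not] at ht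
      obtain ⟨k1, k2, k3⟩ := hnxt _ ht.1
      rw [← hxs] at k1 k2 k3
      refine ⟨fun s hs => ?_, ?_, fun s hs => ?_⟩
      · rcases Nat.le_succ_iff.1 hs with h | rfl
        exacts [i1 s h, k1]
      · intro s hs s' hs' e
        rcases Nat.le_succ_iff.1 hs with h | rfl <;> rcases Nat.le_succ_iff.1 hs' with h' | rfl
        · exact i2 h h' e
        · exact absurd ⟨s, h, e.symm⟩ ht.2
        · exact absurd ⟨s', h', e⟩ ht.2
        · rfl
      · rcases Nat.lt_succ_iff_lt_or_eq.1 hs with h | rfl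
        exacts [i3 s h, ⟨k3, k2⟩]
  have hB : ∃ t, B t := by
    by_contra hno
    push Not at hno
    have hinj : Function.Injective x := fun s s' e =>
      (hpre (max s s') fun s _ => hno s).2.1
        (Set.mem_Iic.2 (le_max_left _ _)) (Set.mem_Iic.2 (le_max_right _ _)) e
    have hmem : ∀ t, x t ∈ Y := fun t => (hpre t fun s _ => hno s).1 t le_rfl
    exact (Set.infinite_range_of_injective hinj)
      (Y.finite_toSet.subset (by rintro _ ⟨t, rfl⟩; exact hmem t))
  have hmin : ∀ s < Nat.find hB, ¬ B s := fun s hs => Nat.find_min hB hs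
  have hBt := Nat.find_spec hB
  generalize Nat.find hB = t at hmin hBt
  obtain ⟨i1, i2, i3⟩ := hpre t hmin
  have inext : ∀ s < t, F (x (s + 1)) ∈ M (x s) := fun s hs => by
    rw [(i3 s hs).1]; exact (ho _ (i1 s hs.le)).1
  -- shifting the assignment to position `k`
  have hshift : ∀ k ≤ t, ∃ F' : V → ℤ,
      (∀ w ∈ Y, ∀ w' ∈ Y, w ≠ x k → w' ≠ x k → F' w = F' w' → w = w') ∧
      (∀ w ∈ Y, w ≠ x k → F' w ∈ M w) ∧
      (∀ w ∈ Y, w ≠ x k → ∃ w' ∈ Y, w' ≠ y ∧ F' w = F w') ∧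
      (∀ w, (∀ s < k, w ≠ x s) → F' w = F w) := by
    intro k hk
    obtain ⟨F', h1, h2, h3⟩ := exists_shift (X := Y) (F := F) (x := x) (t := k)
      (i2.mono (Set.Iic_subset_Iic.2 hk)) (fun s hs => i1 s (hs.trans hk)) hF
    have h4 : ∀ w ∈ Y, w ≠ x k → (∃ w' ∈ Y, w' ≠ y ∧ F' w = F w') ∧ F' w ∈ M w := by
      intro w hw hwk
      by_cases e : ∃ s < k, w = x s
      · obtain ⟨s, hs, rfl⟩ := e
        rw [h1 s hs]
        exact ⟨⟨_, i1 _ (by omega), (i3 s (by omega)).2, rfl⟩, inext s (by omega)⟩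
      · push Not at e
        rw [h2 w e]
        have hwy : w ≠ y := by
          rcases Nat.eq_zero_or_pos k with rfl | hpos
          · exact hwk
          · exact e 0 hpos
        exact ⟨⟨w, hw, hwy, rfl⟩, hM w hw hwy⟩
    exact ⟨F', h3, fun w hw h => (h4 w hw h).2, fun w hw h => (h4 w hw h).1, h2⟩
  rcases hBt with hfree | ⟨j, hj, hloop⟩
  · obtain ⟨F', h1, h2, h3, -⟩ := hshift t le_rfl
    refine ⟨x t, i1 t le_rfl, F', h1, h2, h3, Or.inl ⟨o (x t), (ho _ (i1 t le_rfl)).1, ?_⟩⟩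
    intro w hw hwt e
    obtain ⟨w', a1, a2, a3⟩ := h3 w hw hwt
    exact hfree ⟨w', a1, a2, by rw [← a3, e]⟩
  · by_cases hown : ∃ w' ∈ Y, w' ≠ y ∧ F w' = o (x t)
    swap
    · obtain ⟨F', h1, h2, h3, -⟩ := hshift t le_rfl
      refine ⟨x t, i1 t le_rfl, F', h1, h2, h3, Or.inl ⟨o (x t), (ho _ (i1 t le_rfl)).1, ?_⟩⟩
      intro w hw hwt e
      obtain ⟨w', a1, a2, a3⟩ := h3 w hw hwt
      exact hown ⟨w', a1, a2, by rw [← a3, e]⟩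
    obtain ⟨k1, k2, k3⟩ := hnxt _ hown
    rw [← hxs, hloop] at k1 k2 k3
    have hj1 : 1 ≤ j := by
      rcases Nat.eq_zero_or_pos j with rfl | h
      · exact absurd hx0 k2
      · exact h
    have hjt : j < t := by
      rcases hj.lt_or_eq with h | rfl
      · exact h
      · exact absurd k3.symm (ho _ (i1 _ le_rfl)).2
    obtain ⟨F', h1, h2, h3, h4⟩ := hshift (j - 1) (by omega)
    have h5 : ∀ s, j ≤ s → s ≤ t → F' (x s) = F (x s) := fun s h h' =>
      h4 _ fun r hr e => by
        have : s = r := i2 (Set.mem_Iic.2 h') (Set.mem_Iic.2 (by omega)) e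
        omega
    refine ⟨x (j - 1), i1 _ (by omega), F', h1, h2, h3, Or.inr
      ⟨fun s => x (j - 1 + s), t - j + 1, rfl, ⟨by omega, ?_, ?_, h1, h2, ?_, ?_⟩⟩⟩
    · intro s hs s' hs' e
      have : j - 1 + s = j - 1 + s' :=
        i2 (Set.mem_Iic.2 (by omega)) (Set.mem_Iic.2 (by omega)) e
      omega
    · intro s hs; exact i1 _ (by omega)
    · intro s hs
      rw [h5 _ (by omega) (by omega)]
      exact inext _ (by omega)
    · rw [show j - 1 + 1 = j by omega, h5 j le_rfl (by omega), k3,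
        show j - 1 + (t - j + 1) = t by omega]
      exact (ho _ (i1 t le_rfl)).1

lemma signedSwap_right {a b : ℤ} (h : a ≠ b) : signedSwap a b b = a := by
  simp [signedSwap, h.symm]

lemma signedSwap_neg_right {a b : ℤ} (hb : b ≠ 0) (h : a ≠ b) :
    signedSwap a b (-b) = -a := by
  unfold signedSwap; split_ifs <;> omega

namespace FanLoop

variable {V : Type*} {M M' : V → Set ℤ} {X : Finset V} {F : V → ℤ} {v : ℕ → V} {l : ℕ}
  {a : ℤ} {e' : V × ℤ}

/-- Recoloring the color of `v 1` at `v 1` can only be obstructed by an assigned incidence. -/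
lemma partner_one (L : FanLoop M X F v l) (ha : ∀ w ∈ X, w ≠ v 0 → F w ≠ a)
    (hM : Flips M M' a (F (v 1)) (v 1, F (v 1)) e') (hno : ¬ HasSDR M' X)
    (he : e'.2 = a ∨ e'.2 = F (v 1) ∨ e'.2 = -a ∨ e'.2 = -F (v 1)) :
    ∃ w ∈ X, w ≠ v 0 ∧ e' = (w, F w) ∧ (F w = -a ∨ F w = -F (v 1)) := by
  classical
  have hl := L.two_le
  have h1X := L.mem 1 (by omega)
  have h10 : v 1 ≠ v 0 := L.ne_zero le_rfl (by omega)
  have hab : F (v 1) ≠ a := ha _ h1X h10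
  have hswap : signedSwap a (F (v 1)) (F (v 1)) = a := signedSwap_right hab.symm
  have hF1 : ∀ w ∈ X, w ≠ v 0 → w ≠ v 1 → F w ≠ F (v 1) := fun w hw h0 h1 h =>
    h1 (L.injF _ hw _ h1X h0 h10 h)
  have key : ∃ w ∈ X, w ≠ v 0 ∧ w ≠ v 1 ∧ e' = (w, F w) := by
    by_contra hcon
    push Not at hcon
    apply hno
    by_cases h0 : e' = (v 0, F (v 1))
    · obtain ⟨F', v', L', e0, -, hn, hcl, hoff, himg⟩ := L.reverse
      refine HasSDR.of_update (F := F') (y := v 0) (z := a) (e0 ▸ L'.injF) ?_ ?_ ?_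
      · intro w hw hw0
        refine (hM w _ (L'.memF w hw (e0 ▸ hw0))).2 ?_ ?_
        · rintro h
          obtain ⟨rfl, h⟩ := Prod.mk.inj h
          rw [hn 1 le_rfl (by omega)] at h
          have := L.injF_loop (by omega) (by omega) (by omega) (by omega) h
          omega
        · rw [h0]; intro h; exact hw0 (Prod.mk.inj h).1
      · have := (hM (v 0) _ (L.next 0 (by omega))).1 (Or.inr h0.symm)
        rwa [zero_add, hswap] at this
      · intro w hw hw0
        obtain ⟨w', h1, h2, h3⟩ := himg w hw hw0
        rw [h3]; exact ha w' h1 h2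
    · refine HasSDR.of_update (F := Function.update F (v 1) a) (y := v 0) (z := F (v 1)) ?_ ?_ ?_ ?_
      · intro w hw w' hw' h h' e
        by_cases e1 : w = v 1 <;> by_cases e2 : w' = v 1
        · rw [e1, e2]
        · subst e1; rw [Function.update_self, Function.update_of_ne e2] at e
          exact absurd e.symm (ha _ hw' h')
        · subst e2; rw [Function.update_self, Function.update_of_ne e1] at e
          exact absurd e (ha _ hw h)
        · rw [Function.update_of_ne e1, Function.update_of_ne e2] at e
          exact L.injF _ hw _ hw' h h' e
      · intro w hw h0
        by_cases e1 : w = v 1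
        · subst e1
          rw [Function.update_self]
          have := (hM _ _ (L.memF _ h1X h10)).1 (Or.inl rfl)
          rwa [hswap] at this
        · rw [Function.update_of_ne e1]
          exact (hM _ _ (L.memF _ hw h0)).2 (fun h => e1 (Prod.mk.inj h).1)
            (hcon w hw h0 e1).symm
      · exact (hM _ _ (L.next 0 (by omega))).2 (fun h => h10 (Prod.mk.inj h).1.symm) (Ne.symm h0)
      · intro w hw h0
        by_cases e1 : w = v 1
        · subst e1; rw [Function.update_self]; exact hab.symm
        · rw [Function.update_of_ne e1]; exact hF1 w hw h0 e1
  obtain ⟨w, hw, h0, h1, rfl⟩ := key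
  refine ⟨w, hw, h0, rfl, ?_⟩
  rcases he with h | h | h
  · exact absurd h (ha w hw h0)
  · exact absurd h (hF1 w hw h0 h1)
  · exact h

/-- Recoloring the color of `v 1` at `v 0` can only be obstructed by an assigned incidence off
the loop. -/
lemma partner_zero (L : FanLoop M X F v l) (ha : ∀ w ∈ X, w ≠ v 0 → F w ≠ a)
    (hM : Flips M M' a (F (v 1)) (v 0, F (v 1)) e') (hno : ¬ HasSDR M' X)
    (he : e'.2 = a ∨ e'.2 = F (v 1) ∨ e'.2 = -a ∨ e'.2 = -F (v 1)) :
    ∃ w ∈ X, w ≠ v 0 ∧ e' = (w, F w) ∧ (F w = -a ∨ F w = -F (v 1)) ∧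
      ∀ t, 1 ≤ t → t ≤ l → w ≠ v t := by
  have hl := L.two_le
  have h1X := L.mem 1 (by omega)
  have h10 : v 1 ≠ v 0 := L.ne_zero le_rfl (by omega)
  have hab : F (v 1) ≠ a := ha _ h1X h10
  have key : ∀ F' : V → ℤ, (∀ w ∈ X, ∀ w' ∈ X, w ≠ v 0 → w' ≠ v 0 → F' w = F' w' → w = w') →
      (∀ w ∈ X, w ≠ v 0 → F' w ∈ M w) → (∀ w ∈ X, w ≠ v 0 → F' w ≠ a) →
      ∃ w ∈ X, w ≠ v 0 ∧ e' = (w, F' w) := by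
    intro F' h1 h2 h3
    by_contra hcon
    push Not at hcon
    refine hno (HasSDR.of_update h1 ?_ ?_ h3)
    · intro w hw h0
      exact (hM _ _ (h2 w hw h0)).2 (fun h => h0 (Prod.mk.inj h).1) (hcon w hw h0).symm
    · have := (hM (v 0) _ (L.next 0 (by omega))).1 (Or.inl rfl)
      rwa [zero_add, signedSwap_right hab.symm] at this
  obtain ⟨w, hw, h0, h⟩ := key F L.injF L.memF ha
  obtain ⟨F', v', L', e0, -, hn, hcl, hoff, himg⟩ := L.reverse
  obtain ⟨w', hw', h0', h'⟩ := key F' (e0 ▸ L'.injF) (e0 ▸ L'.memF) (by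
    intro w hw hw0
    obtain ⟨w', h1, h2, h3⟩ := himg w hw hw0
    rw [h3]; exact ha w' h1 h2)
  have hloop : ∀ t, 1 ≤ t → t ≤ l → w ≠ v t := by
    rintro t h1 h2 rfl
    rw [h] at h'
    obtain ⟨rfl, h'⟩ := Prod.mk.inj h'
    rcases h2.lt_or_eq with h3 | rfl
    · rw [hn t h1 h3] at h'
      have := L.injF_loop (by omega) (by omega) (by omega) (by omega) h'
      omega
    · rw [hcl] at h'
      have := L.injF_loop (by omega) (by omega) (by omega) (by omega) h'
      omega
  refine ⟨w, hw, h0, h, ?_, hloop⟩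
  subst h
  rcases he with h | h | h
  · exact absurd h (ha w hw h0)
  · exact absurd (L.injF _ hw _ h1X h0 h10 h) (hloop 1 le_rfl (by omega))
  · exact h

/-- The reversed loop, in the form in which it is used below. -/
lemma exists_reverse (L : FanLoop M X F v l) : ∃ F' v', FanLoop M X F' v' l ∧ v' 0 = v 0 ∧
    v' 1 = v l ∧ F' (v' 1) = F (v 1) ∧
    (∀ t, 2 ≤ t → t ≤ l → v' (l + 2 - t) = v (t - 1) ∧ F' (v' (l + 2 - t)) = F (v t)) ∧
    (∀ t, 1 ≤ t → t ≤ l → ∃ s, 1 ≤ s ∧ s ≤ l ∧ F' (v' t) = F (v s)) ∧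
    (∀ w ∈ X, w ≠ v 0 → ∃ w' ∈ X, w' ≠ v 0 ∧ F' w = F w') ∧
    (∀ w ∈ X, w ≠ v 0 → (∀ s, 1 ≤ s → s ≤ l → F' w ≠ F (v s)) → F' w = F w) := by
  have hl := L.two_le
  obtain ⟨F', v', L', e0, hv, hn, hcl, hoff, himg⟩ := L.reverse
  have hcol : ∀ t, 1 ≤ t → t ≤ l → ∃ s, 1 ≤ s ∧ s ≤ l ∧ F' (v t) = F (v s) := by
    intro t h1 h2
    rcases h2.lt_or_eq with h3 | rfl
    · exact ⟨t + 1, by omega, by omega, hn t h1 h3⟩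
    · exact ⟨1, by omega, by omega, hcl⟩
  have hv1 : v' 1 = v l := by rw [hv 1 le_rfl (by omega), Nat.add_sub_cancel]
  refine ⟨F', v', L', e0, hv1, by rw [hv1, hcl], ?_, ?_, himg, ?_⟩
  · intro t h1 h2
    have : v' (l + 2 - t) = v (t - 1) := by
      rw [hv _ (by omega) (by omega)]; congr 1; omega
    refine ⟨this, ?_⟩
    rw [this, hn _ (by omega) (by omega), Nat.sub_add_cancel (by omega)]
  · intro t h1 h2
    rw [hv t h1 h2]; exact hcol _ (by omega) (by omega)
  · intro w hw h0 h
    refine hoff w fun t h1 h2 e => ?_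
    subst e
    obtain ⟨s, h3, h4, h5⟩ := hcol t h1 h2
    exact h s h3 h4 h5

end FanLoop

section Unsolvable

variable {V : Type*} {C : Finset ℤ} {X : Finset V} {𝓕 : Set (V → Set ℤ)} {M M' : V → Set ℤ}
  {F : V → ℤ} {v : ℕ → V} {l i : ℕ} {a : ℤ}

lemma FanLoop.color_mem (K : KempeClosed C X 𝓕) (hM : M ∈ 𝓕) (L : FanLoop M X F v l) :
    F (v 1) ∈ C ∧ F (v 1) ≠ 0 := by
  have h := K.mem_colors M hM _ _ (L.next 0 (by have := L.two_le; omega))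
  exact ⟨h, fun e => K.zero_notMem (e ▸ h)⟩

/-- The negative of the color closing a fan loop is in use. -/
lemma FanLoop.false_of_neg_free (K : KempeClosed C X 𝓕) (hno : ∀ M ∈ 𝓕, ¬ HasSDR M X)
    (hM : M ∈ 𝓕) (L : FanLoop M X F v l) (ha : ∀ w ∈ X, w ≠ v 0 → F w ≠ -F (v 1)) : False := by
  have hl := L.two_le
  obtain ⟨hb, hb0⟩ := L.color_mem K hM
  obtain ⟨P, -, hP⟩ := K.kempe M hM _ (K.neg_mem _ hb) _ hb (by omega)
  obtain ⟨M', hM', e', he', -, hfl⟩ := hP (v 0) (F (v 1)) (L.next 0 (by omega)) (Or.inr (Or.inl rfl))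
  obtain ⟨w, hw, h0, -, h, hloop⟩ := L.partner_zero ha hfl (hno M' hM') he'
  rcases h with h | h
  · rw [neg_neg] at h
    exact hloop 1 le_rfl (by omega)
      (L.injF _ hw _ (L.mem _ (by omega)) h0 (L.ne_zero le_rfl (by omega)) h)
  · exact ha w hw h0 h

/-- The negatives of a free color and of the closing color do not both avoid the loop. -/
lemma FanLoop.false_of_avoid (K : KempeClosed C X 𝓕) (hno : ∀ M ∈ 𝓕, ¬ HasSDR M X)
    (hM : M ∈ 𝓕) (L : FanLoop M X F v l) (haC : a ∈ C) (ha : ∀ w ∈ X, w ≠ v 0 → F w ≠ a)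
    (hna : ∀ t, 1 ≤ t → t ≤ l → F (v t) ≠ -a) (hnb : ∀ t, 1 ≤ t → t ≤ l → F (v t) ≠ -F (v 1)) :
    False := by
  have hl := L.two_le
  obtain ⟨hb, hb0⟩ := L.color_mem K hM
  have h1 := hna 1 le_rfl (by omega)
  have hab : F (v 1) ≠ a := ha _ (L.mem _ (by omega)) (L.ne_zero le_rfl (by omega))
  obtain ⟨F', v', L', e0, e1, eb, -, -, himg, hoff⟩ := L.exists_reverse
  obtain ⟨P, hPinj, hP⟩ := K.kempe M hM a haC _ hb hab.symm
  have final : ∀ x y, P (x, F (v 1)) y → ∀ x', P (x', F (v 1)) y → y.2 ≠ F (v 1) → x = x' := by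
    intro x y h x' h' hy
    exact (Prod.mk.inj (hPinj _ _ _ h h' (fun e => hy (by rw [e])) (fun e => hy (by rw [e])))).1
  have A1 : ∃ w ∈ X, w ≠ v 0 ∧ P (v 1, F (v 1)) (w, F w) ∧ (F w = -a ∨ F w = -F (v 1)) := by
    obtain ⟨M', hM', e', he', hPe, hfl⟩ := hP (v 1) _
      (L.memF _ (L.mem _ (by omega)) (L.ne_zero le_rfl (by omega))) (Or.inr (Or.inl rfl))
    obtain ⟨w, hw, h0, rfl, h⟩ := L.partner_one ha hfl (hno M' hM') he'
    exact ⟨w, hw, h0, hPe.resolve_left fun e => by have := (Prod.mk.inj e).2; omega, h⟩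
  have A2 : ∃ w ∈ X, w ≠ v 0 ∧ P (v l, F (v 1)) (w, F w) ∧ (F w = -a ∨ F w = -F (v 1)) := by
    obtain ⟨M', hM', e', he', hPe, hfl⟩ := hP (v l) _ L.close (Or.inr (Or.inl rfl))
    rw [← e1, ← eb] at hfl
    rw [← eb] at he'
    obtain ⟨w, hw, h0, rfl, h⟩ := L'.partner_one (fun w hw h0 => by
      obtain ⟨w', k1, k2, k3⟩ := himg w hw (e0 ▸ h0)
      rw [k3]; exact ha w' k1 k2) hfl (hno M' hM') he'
    rw [eb] at h
    have : F' w = F w := hoff w hw (e0 ▸ h0) fun s h1 h2 e => by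
      rw [e] at h
      exact h.elim (hna s h1 h2) (hnb s h1 h2)
    rw [this] at h hPe
    exact ⟨w, hw, e0 ▸ h0, hPe.resolve_left fun e => by have := (Prod.mk.inj e).2; omega, h⟩
  have A3 : ∃ w ∈ X, w ≠ v 0 ∧ P (v 0, F (v 1)) (w, F w) ∧ (F w = -a ∨ F w = -F (v 1)) := by
    obtain ⟨M', hM', e', he', hPe, hfl⟩ := hP (v 0) (F (v 1)) (L.next 0 (by omega)) (Or.inr (Or.inl rfl))
    obtain ⟨w, hw, h0, rfl, h, -⟩ := L.partner_zero ha hfl (hno M' hM') he'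
    exact ⟨w, hw, h0, hPe.resolve_left fun e => by have := (Prod.mk.inj e).2; omega, h⟩
  obtain ⟨w₁, x1, y1, p1, c1⟩ := A1
  obtain ⟨w₂, x2, y2, p2, c2⟩ := A2
  obtain ⟨w₃, x3, y3, p3, c3⟩ := A3
  have n12 : F w₁ ≠ F w₂ := fun h => by
    have := L.injF _ x1 _ x2 y1 y2 h
    subst this
    have := L.inj _ (by omega) _ le_rfl (final _ _ p1 _ p2 (by dsimp only; omega))
    omega
  have n13 : F w₁ ≠ F w₃ := fun h => by
    have := L.injF _ x1 _ x3 y1 y3 h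
    subst this
    have := L.inj _ (by omega) _ (by omega) (final _ _ p1 _ p3 (by dsimp only; omega))
    omega
  have n23 : F w₂ ≠ F w₃ := fun h => by
    have := L.injF _ x2 _ x3 y2 y3 h
    subst this
    have := L.inj _ (by omega) _ (by omega) (final _ _ p2 _ p3 (by dsimp only; omega))
    omega
  omega

/-- The negatives of a free color and of the closing color do not both lie on the loop. -/
lemma FanLoop.false_of_both (K : KempeClosed C X 𝓕) (hno : ∀ M ∈ 𝓕, ¬ HasSDR M X)
    (hM : M ∈ 𝓕) (L : FanLoop M X F v l) (haC : a ∈ C) (ha : ∀ w ∈ X, w ≠ v 0 → F w ≠ a)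
    {s t : ℕ} (hs : 1 ≤ s) (hsl : s ≤ l) (hsa : F (v s) = -a) (ht : 1 ≤ t) (htl : t ≤ l)
    (htb : F (v t) = -F (v 1)) : False := by
  have hl := L.two_le
  obtain ⟨hb, hb0⟩ := L.color_mem K hM
  have hab : F (v 1) ≠ a := ha _ (L.mem _ (by omega)) (L.ne_zero le_rfl (by omega))
  obtain ⟨P, -, hP⟩ := K.kempe M hM a haC _ hb hab.symm
  obtain ⟨M', hM', e', he', -, hfl⟩ := hP (v 0) (F (v 1)) (L.next 0 (by omega)) (Or.inr (Or.inl rfl))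
  obtain ⟨w, hw, h0, -, h, hloop⟩ := L.partner_zero ha hfl (hno M' hM') he'
  rcases h with h | h
  · exact hloop s hs hsl (L.injF _ hw _ (L.mem _ hsl) h0 (L.ne_zero hs hsl) (h.trans hsa.symm))
  · exact hloop t ht htl (L.injF _ hw _ (L.mem _ htl) h0 (L.ne_zero ht htl) (h.trans htb.symm))

end Unsolvable

/-- Any one color of `T` can be avoided by a system of distinct representatives of `D` with
values in `T`. -/
def TreeCert {V : Type*} (M : V → Set ℤ) (D : Finset V) (T : Finset ℤ) : Prop :=
  ∀ t ∈ T, ∃ h : V → ℤ, Set.InjOn h D ∧ ∀ w ∈ D, h w ∈ M w ∧ h w ∈ T ∧ h w ≠ t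

section Cert

variable {V : Type*} {M : V → Set ℤ}

lemma TreeCert.extend [DecidableEq V] {D : Finset V} {T : Finset ℤ} (h : TreeCert M D T) {w : V}
    {c t₀ : ℤ} (hw : w ∉ D) (hc : c ∉ T) (hcM : c ∈ M w) (ht₀ : t₀ ∈ T) (ht₀M : t₀ ∈ M w) :
    TreeCert M (insert w D) (insert c T) := by
  have ext : ∀ (g : V → ℤ) (x t : ℤ), Set.InjOn g D → (∀ w ∈ D, g w ∈ M w ∧ g w ∈ T ∧ g w ≠ t) →
      x ∈ M w → x ∈ insert c T → x ≠ t → (∀ w ∈ D, g w ≠ x) →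
      ∃ h : V → ℤ, Set.InjOn h (insert w D : Finset V) ∧
        ∀ w' ∈ insert w D, h w' ∈ M w' ∧ h w' ∈ insert c T ∧ h w' ≠ t := by
    intro g x t hg hgM hx hxT hxt hfr
    have hup : ∀ w' ∈ D, Function.update g w x w' = g w' := fun w' h' =>
      Function.update_of_ne (ne_of_mem_of_not_mem h' hw) _ _
    refine ⟨Function.update g w x, ?_, ?_⟩
    · intro p hp' q hq' e
      rcases Finset.mem_insert.1 hp' with rfl | hp <;> rcases Finset.mem_insert.1 hq' with rfl | hq
      · rfl
      · rw [Function.update_self, hup _ hq] at e; exact absurd e.symm (hfr _ hq)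
      · rw [Function.update_self, hup _ hp] at e; exact absurd e (hfr _ hp)
      · rw [hup _ hq, hup _ hp] at e; exact hg hp hq e
    · intro p hp
      rcases Finset.mem_insert.1 hp with rfl | hp
      · rw [Function.update_self]; exact ⟨hx, hxT, hxt⟩
      · rw [hup _ hp]
        exact ⟨(hgM _ hp).1, Finset.mem_insert_of_mem (hgM _ hp).2.1, (hgM _ hp).2.2⟩
  intro t ht
  rcases Finset.mem_insert.1 ht with rfl | ht
  · obtain ⟨g, hg, hgM⟩ := h t₀ ht₀
    exact ext g t₀ t hg (fun w hw => ⟨(hgM w hw).1, (hgM w hw).2.1, fun e => hc (e ▸ (hgM w hw).2.1)⟩)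
      ht₀M (Finset.mem_insert_of_mem ht₀) (fun e => hc (e ▸ ht₀)) fun w hw => (hgM w hw).2.2
  · obtain ⟨g, hg, hgM⟩ := h t ht
    exact ext g c t hg hgM hcM (Finset.mem_insert_self _ _) (fun e => hc (e ▸ ht))
      fun w hw e => hc (e ▸ (hgM w hw).2.1)

lemma treeCert_path [DecidableEq V] {x : ℕ → V} {κ : ℕ → ℤ} : ∀ m : ℕ,
    (∀ s < m, κ s ∈ M (x s) ∧ κ (s + 1) ∈ M (x s)) →
    (∀ s < m, ∀ t < m, x s = x t → s = t) → (∀ s ≤ m, ∀ t ≤ m, κ s = κ t → s = t) →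
    TreeCert M ((Finset.range m).image x) ((Finset.range (m + 1)).image κ) := by
  intro m
  induction m with
  | zero => intro _ _ _ t _; exact ⟨fun _ => 0, by simp, by simp⟩
  | succ m ih =>
    intro h1 h2 h3
    have := ih (fun s hs => h1 s (by omega)) (fun s hs t ht => h2 s (by omega) t (by omega))
      (fun s hs t ht => h3 s (by omega) t (by omega))
    rw [Finset.range_add_one, Finset.image_insert, Finset.range_add_one (n := m + 1),
      Finset.image_insert]
    refine this.extend (t₀ := κ m) ?_ ?_ (h1 m (by omega)).2 ?_ (h1 m (by omega)).1
    · simp only [Finset.mem_image, Finset.mem_range, not_exists, not_and]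
      intro s hs e
      have := h2 s (by omega) m (by omega) e; omega
    · simp only [Finset.mem_image, Finset.mem_range, not_exists, not_and]
      intro s hs e
      have := h3 s (by omega) (m + 1) (by omega) e; omega
    · exact Finset.mem_image_of_mem _ (by simp)

end Cert

section Unsolvable

variable {V : Type*} [DecidableEq V] {C : Finset ℤ} {X D : Finset V} {T : Finset ℤ}
  {𝓕 : Set (V → Set ℤ)} {M M' : V → Set ℤ} {F h : V → ℤ} {v : ℕ → V} {l i : ℕ} {a : ℤ} {y : V}

/-- Gluing assignments on `D` and on `X \ D`. -/
lemma injF_glue (hT : ∀ w ∈ X \ D, w ≠ y → F w ∉ T) (hh : Set.InjOn h D) (hhT : ∀ w ∈ D, h w ∈ T)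
    (hF : ∀ w ∈ X \ D, ∀ w' ∈ X \ D, w ≠ y → w' ≠ y → F w = F w' → w = w') :
    ∀ w ∈ X, ∀ w' ∈ X, w ≠ y → w' ≠ y → D.piecewise h F w = D.piecewise h F w' → w = w' := by
  intro w hw w' hw' h0 h0' e
  by_cases e1 : w ∈ D <;> by_cases e2 : w' ∈ D
  · rw [D.piecewise_eq_of_mem _ _ e1, D.piecewise_eq_of_mem _ _ e2] at e
    exact hh e1 e2 e
  · rw [D.piecewise_eq_of_mem _ _ e1, D.piecewise_eq_of_notMem _ _ e2] at e
    exact absurd (e ▸ hhT w e1) (hT w' (Finset.mem_sdiff.2 ⟨hw', e2⟩) h0')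
  · rw [D.piecewise_eq_of_notMem _ _ e1, D.piecewise_eq_of_mem _ _ e2] at e
    exact absurd (e ▸ hhT w' e2) (hT w (Finset.mem_sdiff.2 ⟨hw, e1⟩) h0)
  · rw [D.piecewise_eq_of_notMem _ _ e1, D.piecewise_eq_of_notMem _ _ e2] at e
    exact hF _ (Finset.mem_sdiff.2 ⟨hw, e1⟩) _ (Finset.mem_sdiff.2 ⟨hw', e2⟩) h0 h0' e

lemma memF_glue (hh : ∀ w ∈ D, h w ∈ M w) (hF : ∀ w ∈ X \ D, w ≠ y → F w ∈ M w) :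
    ∀ w ∈ X, w ≠ y → D.piecewise h F w ∈ M w := by
  intro w hw h0
  by_cases e1 : w ∈ D
  · rw [D.piecewise_eq_of_mem _ _ e1]; exact hh w e1
  · rw [D.piecewise_eq_of_notMem _ _ e1]; exact hF w (Finset.mem_sdiff.2 ⟨hw, e1⟩) h0

lemma ne_glue {z : ℤ} (hh : ∀ w ∈ D, h w ≠ z) (hF : ∀ w ∈ X \ D, w ≠ y → F w ≠ z) :
    ∀ w ∈ X, w ≠ y → D.piecewise h F w ≠ z := by
  intro w hw h0
  by_cases e1 : w ∈ D
  · rw [D.piecewise_eq_of_mem _ _ e1]; exact hh w e1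
  · rw [D.piecewise_eq_of_notMem _ _ e1]; exact hF w (Finset.mem_sdiff.2 ⟨hw, e1⟩) h0

lemma FanLoop.piecewise_eq (L : FanLoop M (X \ D) F v l) {t : ℕ} (ht : t ≤ l) :
    D.piecewise h F (v t) = F (v t) :=
  D.piecewise_eq_of_notMem _ _ (Finset.mem_sdiff.1 (L.mem t ht)).2

/-- A fan loop in `X \ D` extends to one in `X`. -/
lemma FanLoop.glue (L : FanLoop M (X \ D) F v l) (hT : ∀ w ∈ X \ D, w ≠ v 0 → F w ∉ T)
    (hh : Set.InjOn h D) (hhT : ∀ w ∈ D, h w ∈ T) (hhM : ∀ w ∈ D, h w ∈ M w) :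
    FanLoop M X (D.piecewise h F) v l := by
  have hl := L.two_le
  refine ⟨hl, L.inj, fun t ht => (Finset.mem_sdiff.1 (L.mem t ht)).1, injF_glue hT hh hhT L.injF,
    memF_glue hhM L.memF, fun t ht => ?_, ?_⟩
  · rw [L.piecewise_eq (by omega)]; exact L.next t ht
  · rw [L.piecewise_eq (by omega)]; exact L.close

/-- If the negative of the closing color lies on the loop, then the partner of the closing color
at `v 1` carries the color `-a` in `D`. -/
lemma FanLoop.partner_glue (L : FanLoop M (X \ D) F v l)
    (hT : ∀ w ∈ X \ D, w ≠ v 0 → F w ∉ T) (hcert : TreeCert M D T) (haT : a ∈ T) (hnaT : -a ∈ T)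
    (hb0 : F (v 1) ≠ 0) (hh : Set.InjOn h D) (hhT : ∀ w ∈ D, h w ∈ M w ∧ h w ∈ T ∧ h w ≠ a)
    (hi : 2 ≤ i) (hil : i ≤ l) (hib : F (v i) = -F (v 1)) {e' : V × ℤ}
    (hM : Flips M M' a (F (v 1)) (v 1, F (v 1)) e') (hno : ¬ HasSDR M' X)
    (he : e'.2 = a ∨ e'.2 = F (v 1) ∨ e'.2 = -a ∨ e'.2 = -F (v 1)) :
    ∃ w ∈ D, e' = (w, -a) ∧ h w = -a := by
  have hl := L.two_le
  have h1 : F (v 1) ∉ T := hT _ (L.mem _ (by omega)) (L.ne_zero (by omega) (by omega))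
  have hi1 : F (v i) ∉ T := hT _ (L.mem _ (by omega)) (L.ne_zero (by omega) (by omega))
  have hab : F (v 1) ≠ a := fun e => h1 (e ▸ haT)
  have hab' : -F (v 1) ≠ a := fun e => hi1 (by rw [hib, e]; exact haT)
  have L₁ := L.glue hT hh (fun w hw => (hhT w hw).2.1) fun w hw => (hhT w hw).1
  have e1 : D.piecewise h F (v 1) = F (v 1) := L.piecewise_eq (by omega)
  have ha : ∀ w ∈ X, w ≠ v 0 → D.piecewise h F w ≠ a :=
    ne_glue (fun w hw => (hhT w hw).2.2) fun w hw h0 e => hT w hw h0 (e ▸ haT)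
  obtain ⟨w, hw, h0, hew, hcol⟩ := L₁.partner_one ha (by rwa [e1]) hno (by rwa [e1])
  rw [e1] at hcol
  rcases hcol with hcol | hcol
  · have hwD : w ∈ D := by
      by_contra hwD
      rw [D.piecewise_eq_of_notMem _ _ hwD] at hcol
      exact hT w (Finset.mem_sdiff.2 ⟨hw, hwD⟩) h0 (hcol ▸ hnaT)
    refine ⟨w, hwD, by rw [hew, hcol], ?_⟩
    rwa [D.piecewise_eq_of_mem _ _ hwD] at hcol
  · exfalso
    have hwi : w = v i := L₁.injF _ hw _ (L₁.mem _ hil) h0 (L₁.ne_zero (by omega) hil)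
      (by rw [hcol, L.piecewise_eq hil, hib])
    rw [hcol, hwi] at hew
    subst hew
    obtain ⟨g, hg, hgT⟩ := hcert _ hnaT
    obtain ⟨G, hG1, hG2, hG3⟩ := exists_shift (X := X) (F := D.piecewise g F) (x := v) (t := i)
      (fun s hs t ht e => L.inj _ (le_trans hs hil) _ (le_trans ht hil) e)
      (fun s hs => L₁.mem s (hs.trans hil))
      (injF_glue hT hg (fun w hw => (hgT w hw).2.1) L.injF)
    have hgn : ∀ w ∈ X, w ≠ v 0 → D.piecewise g F w ≠ -a :=
      ne_glue (fun w hw => (hgT w hw).2.2) fun w hw h0 e => hT w hw h0 (e ▸ hnaT)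
    refine hno (HasSDR.of_update hG3 (z := -a) ?_ ?_ ?_)
    · intro w hw hwi
      by_cases e : ∃ s < i, w = v s
      · obtain ⟨s, hs, rfl⟩ := e
        rw [hG1 s hs, L.piecewise_eq (by omega)]
        refine (hM _ _ (L.next s (by omega))).2 (fun e => ?_) fun e => hwi (Prod.mk.inj e).1
        obtain ⟨e, e'⟩ := Prod.mk.inj e
        have k1 := L.inj _ (by omega) _ (by omega) e
        have k2 := L.injF_loop (by omega) (by omega) (by omega) (by omega) e'
        omega
      · push Not at e
        rw [hG2 w e]
        refine (hM _ _ (memF_glue (fun w hw => (hgT w hw).1) L.memF w hw (e 0 (by omega)))).2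
          (fun k => e 1 (by omega) (Prod.mk.inj k).1) fun k => hwi (Prod.mk.inj k).1
    · have := (hM (v i) _ (L.memF _ (L.mem _ hil) (L.ne_zero (by omega) hil))).1
        (Or.inr (by rw [hib]))
      rwa [hib, signedSwap_neg_right hb0 hab.symm] at this
    · intro w hw hwi
      by_cases e : ∃ s < i, w = v s
      · obtain ⟨s, hs, rfl⟩ := e
        rw [hG1 s hs]
        exact hgn _ (L₁.mem _ (by omega)) (L₁.ne_zero (by omega) (by omega))
      · push Not at e
        rw [hG2 w e]
        exact hgn w hw (e 0 (by omega))

/-- A certificate containing two opposite colors, together with a compatible assignment of all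
but one of the remaining vertices, leads to a system of distinct representatives. -/
lemma TreeCert.false (K : KempeClosed C X 𝓕) (hno : ∀ M ∈ 𝓕, ¬ HasSDR M X)
    (hM : M ∈ 𝓕) (hcert : TreeCert M D T) (haC : a ∈ C) (haT : a ∈ T) (hnaT : -a ∈ T)
    (hyX : y ∈ X \ D)
    (hF : ∀ w ∈ X \ D, ∀ w' ∈ X \ D, w ≠ y → w' ≠ y → F w = F w' → w = w')
    (hFM : ∀ w ∈ X \ D, w ≠ y → F w ∈ M w) (hFT : ∀ w ∈ X \ D, w ≠ y → F w ∉ T) : False := by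
  obtain ⟨y', hy', F', i1, i2, i3, i4⟩ := exists_free_or_fanLoop hyX hF hFM
    fun w hw c => K.exists_ne M hM w (Finset.mem_sdiff.1 hw).1 c
  have hT : ∀ w ∈ X \ D, w ≠ y' → F' w ∉ T := by
    intro w hw h0
    obtain ⟨w', k1, k2, k3⟩ := i3 w hw h0
    rw [k3]; exact hFT w' k1 k2
  obtain ⟨h, hh, hhT⟩ := hcert a haT
  rcases i4 with ⟨z, hz, hzf⟩ | ⟨v, l, rfl, L⟩
  · have : ∃ g : V → ℤ, Set.InjOn g D ∧ ∀ w ∈ D, g w ∈ M w ∧ g w ∈ T ∧ g w ≠ z := by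
      by_cases hzT : z ∈ T
      · exact hcert z hzT
      · exact ⟨h, hh, fun w hw => ⟨(hhT w hw).1, (hhT w hw).2.1, fun e => hzT (e ▸ (hhT w hw).2.1)⟩⟩
    obtain ⟨g, hg, hgT⟩ := this
    exact hno M hM (HasSDR.of_update (injF_glue hT hg (fun w hw => (hgT w hw).2.1) i1)
      (memF_glue (fun w hw => (hgT w hw).1) i2) hz (ne_glue (fun w hw => (hgT w hw).2.2) hzf))
  · have hl := L.two_le
    have L₁ := L.glue hT hh (fun w hw => (hhT w hw).2.1) fun w hw => (hhT w hw).1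
    have e1 : D.piecewise h F' (v 1) = F' (v 1) := L.piecewise_eq (by omega)
    have ha : ∀ w ∈ X, w ≠ v 0 → D.piecewise h F' w ≠ a :=
      ne_glue (fun w hw => (hhT w hw).2.2) fun w hw h0 e => hT w hw h0 (e ▸ haT)
    obtain ⟨hb, hb0⟩ := L₁.color_mem K hM
    rw [e1] at hb hb0
    have hcolT : ∀ t, 1 ≤ t → t ≤ l → F' (v t) ∉ T := fun t h1 h2 =>
      hT _ (L.mem _ h2) (L.ne_zero h1 h2)
    by_cases hi : ∃ i, 1 ≤ i ∧ i ≤ l ∧ F' (v i) = -F' (v 1)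
    swap
    · push Not at hi
      refine L₁.false_of_avoid K hno hM haC ha (fun t h1 h2 e => ?_) fun t h1 h2 => ?_
      · rw [L.piecewise_eq h2] at e
        exact hcolT t h1 h2 (e ▸ hnaT)
      · rw [L.piecewise_eq h2, e1]; exact hi t h1 h2
    obtain ⟨i, hi1, hil, hib⟩ := hi
    have hi2 : 2 ≤ i := by
      rcases hi1.lt_or_eq with h | rfl
      · exact h
      · omega
    have hab : F' (v 1) ≠ a := fun e => hcolT 1 le_rfl (by omega) (e ▸ haT)
    have hab' : F' (v 1) ≠ -a := fun e => hcolT 1 le_rfl (by omega) (e ▸ hnaT)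
    obtain ⟨P, hPinj, hP⟩ := K.kempe M hM a haC _ hb hab.symm
    obtain ⟨F'', v', L', e0, ev, eb, hrev, -, himg, -⟩ := L.exists_reverse
    obtain ⟨M₁, hM₁, p₁, hp₁, hP₁, hfl₁⟩ := hP (v 1) (F' (v 1))
      (L.memF _ (L.mem _ (by omega)) (L.ne_zero le_rfl (by omega))) (Or.inr (Or.inl rfl))
    obtain ⟨M₂, hM₂, p₂, hp₂, hP₂, hfl₂⟩ := hP (v l) (F' (v 1)) L.close (Or.inr (Or.inl rfl))
    obtain ⟨w₁, hw₁, rfl, c₁⟩ := L.partner_glue hT hcert haT hnaT hb0 hh hhT hi2 hil hib hfl₁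
      (hno _ hM₁) hp₁
    rw [← ev, ← eb] at hfl₂
    rw [← eb] at hp₂
    obtain ⟨w₂, hw₂, rfl, c₂⟩ := L'.partner_glue (i := l + 2 - i) (fun w hw h0 => by
        obtain ⟨w', k1, k2, k3⟩ := himg w hw (e0 ▸ h0)
        rw [k3]; exact hT w' k1 k2) hcert haT hnaT (by rwa [eb]) hh hhT (by omega) (by omega)
      (by rw [(hrev i hi2 hil).2, hib, eb]) hfl₂ (hno _ hM₂) hp₂
    have hw : w₁ = w₂ := hh hw₁ hw₂ (c₁.trans c₂.symm)
    subst hw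
    have n₁ : (w₁, -a) ≠ (v 1, F' (v 1)) := fun e => hab' (Prod.mk.inj e).2.symm
    have n₂ : (w₁, -a) ≠ (v l, F' (v 1)) := fun e => hab' (Prod.mk.inj e).2.symm
    have := L.inj _ (by omega) _ le_rfl
      (Prod.mk.inj (hPinj _ _ _ (hP₁.resolve_left n₁) (hP₂.resolve_left n₂) n₁ n₂)).1
    omega

end Unsolvable

section Unsolvable

variable {V : Type*} {C : Finset ℤ} {X : Finset V} {𝓕 : Set (V → Set ℤ)} {M M' : V → Set ℤ}
  {F : V → ℤ} {v : ℕ → V} {l i : ℕ} {a : ℤ}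

lemma mem_image_initial [DecidableEq V] {w : V} :
    w ∈ (Finset.range (i - 1)).image (fun s => v (s + 1)) ↔ ∃ t, 1 ≤ t ∧ t < i ∧ w = v t := by
  simp only [Finset.mem_image, Finset.mem_range]
  constructor
  · rintro ⟨s, hs, rfl⟩; exact ⟨s + 1, by omega, by omega, rfl⟩
  · rintro ⟨t, h1, h2, rfl⟩; exact ⟨t - 1, by omega, by rw [Nat.sub_add_cancel h1]⟩

/-- The closing color at `v 1` is not linked to the incidence of color `-a` on the loop. -/
lemma FanLoop.false_of_link_free (K : KempeClosed C X 𝓕) (hno : ∀ M ∈ 𝓕, ¬ HasSDR M X)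
    (hM' : M' ∈ 𝓕) (L : FanLoop M X F v l) (haC : a ∈ C) (ha : ∀ w ∈ X, w ≠ v 0 → F w ≠ a)
    (hi : 2 ≤ i) (hil : i ≤ l) (hia : F (v i) = -a)
    (hfl : Flips M M' a (F (v 1)) (v 1, F (v 1)) (v i, F (v i))) : False := by
  classical
  have hl := L.two_le
  have h10 : v 1 ≠ v 0 := L.ne_zero le_rfl (by omega)
  have hab : F (v 1) ≠ a := ha _ (L.mem _ (by omega)) h10
  set κ : ℕ → ℤ := fun s => if s = 0 then a else F (v (s + 1)) with hκ
  have hκ0 : κ 0 = a := rfl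
  have hκs : ∀ s, s ≠ 0 → κ s = F (v (s + 1)) := fun s hs => if_neg hs
  have hcert : TreeCert M' ((Finset.range (i - 1)).image fun s => v (s + 1))
      ((Finset.range (i - 1 + 1)).image κ) := by
    refine treeCert_path _ (fun s hs => ⟨?_, ?_⟩) (fun s hs t ht e => ?_) fun s hs t ht e => ?_
    · rcases Nat.eq_zero_or_pos s with rfl | hpos
      · have := (hfl _ _ (L.memF _ (L.mem 1 (by omega)) h10)).1 (Or.inl rfl)
        rwa [signedSwap_right hab.symm] at this
      · rw [hκs s (by omega)]
        refine (hfl _ _ (L.memF _ (L.mem _ (by omega)) (L.ne_zero (by omega) (by omega)))).2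
          (fun e => ?_) fun e => ?_
        · have := L.inj _ (by omega) _ (by omega) (Prod.mk.inj e).1; omega
        · have := L.inj _ (by omega) _ (by omega) (Prod.mk.inj e).1; omega
    · rw [hκs (s + 1) (by omega)]
      refine (hfl _ _ (L.next _ (by omega))).2 (fun e => ?_) fun e => ?_
      · have := L.injF_loop (by omega) (by omega) (by omega) (by omega) (Prod.mk.inj e).2; omega
      · have := L.inj _ (by omega) _ (by omega) (Prod.mk.inj e).1; omega
    · have := L.inj _ (by omega) _ (by omega) e; omega
    · rcases Nat.eq_zero_or_pos s with rfl | hs0 <;> rcases Nat.eq_zero_or_pos t with rfl | ht0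
      · rfl
      · rw [hκ0, hκs t (by omega)] at e
        exact absurd e.symm (ha _ (L.mem _ (by omega)) (L.ne_zero (by omega) (by omega)))
      · rw [hκ0, hκs s (by omega)] at e
        exact absurd e (ha _ (L.mem _ (by omega)) (L.ne_zero (by omega) (by omega)))
      · rw [hκs s (by omega), hκs t (by omega)] at e
        have := L.injF_loop (by omega) (by omega) (by omega) (by omega) e; omega
  have hD : ∀ w, w ∈ X \ (Finset.range (i - 1)).image (fun s => v (s + 1)) → w ∈ X ∧
      ∀ t, 1 ≤ t → t < i → w ≠ v t := by
    intro w hw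
    rw [Finset.mem_sdiff, mem_image_initial] at hw
    exact ⟨hw.1, fun t h1 h2 e => hw.2 ⟨t, h1, h2, e⟩⟩
  have hF1 : ∀ w ∈ X, w ≠ v 0 → w ≠ v 1 → F w ≠ F (v 1) := fun w hw h0 h1 h =>
    h1 (L.injF _ hw _ (L.mem 1 (by omega)) h0 h10 h)
  refine hcert.false K hno hM' (a := a) (y := v i) (F := Function.update F (v 0) (F (v 1))) haC
    ?_ ?_ ?_ ?_ ?_ ?_
  · exact Finset.mem_image.2 ⟨0, by simp, rfl⟩
  · refine Finset.mem_image.2 ⟨i - 1, by simp, ?_⟩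
    rw [hκs _ (by omega), Nat.sub_add_cancel (by omega), hia]
  · rw [Finset.mem_sdiff, mem_image_initial]
    refine ⟨L.mem i hil, ?_⟩
    rintro ⟨t, h1, h2, e⟩
    have := L.inj _ (by omega) _ (by omega) e; omega
  · intro w hw w' hw' hwi hwi' e
    obtain ⟨k1, k2⟩ := hD w hw
    obtain ⟨k1', k2'⟩ := hD w' hw'
    by_cases e1 : w = v 0 <;> by_cases e2 : w' = v 0
    · rw [e1, e2]
    · rw [e1, Function.update_self, Function.update_of_ne e2] at e
      exact absurd e.symm (hF1 _ k1' e2 (k2' 1 le_rfl (by omega)))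
    · rw [e2, Function.update_self, Function.update_of_ne e1] at e
      exact absurd e (hF1 _ k1 e1 (k2 1 le_rfl (by omega)))
    · rw [Function.update_of_ne e1, Function.update_of_ne e2] at e
      exact L.injF _ k1 _ k1' e1 e2 e
  · intro w hw hwi
    obtain ⟨k1, k2⟩ := hD w hw
    by_cases e1 : w = v 0
    · rw [e1, Function.update_self]
      exact (hfl _ _ (L.next 0 (by omega))).2 (fun e => h10 (Prod.mk.inj e).1.symm)
        fun e => L.ne_zero (by omega) hil (Prod.mk.inj e).1.symm
    · rw [Function.update_of_ne e1]
      exact (hfl _ _ (L.memF _ k1 e1)).2 (fun e => k2 1 le_rfl (by omega) (Prod.mk.inj e).1)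
        fun e => hwi (Prod.mk.inj e).1
  · intro w hw hwi hmem
    obtain ⟨k1, k2⟩ := hD w hw
    obtain ⟨s, hs, hse⟩ := Finset.mem_image.1 hmem
    rw [Finset.mem_range] at hs
    by_cases e1 : w = v 0
    · rw [e1, Function.update_self] at hse
      rcases Nat.eq_zero_or_pos s with rfl | hs0
      · exact hab (hse ▸ hκ0)
      · rw [hκs s (by omega)] at hse
        have := L.injF_loop (by omega) (by omega) (by omega) (by omega) hse; omega
    · rw [Function.update_of_ne e1] at hse
      rcases Nat.eq_zero_or_pos s with rfl | hs0
      · exact ha w k1 e1 (hse ▸ hκ0)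
      · rw [hκs s (by omega)] at hse
        have := L.injF _ (L.mem _ (by omega)) _ k1 (L.ne_zero (by omega) (by omega)) e1 hse
        rcases (show s + 1 ≤ i by omega).lt_or_eq with h | h
        · exact k2 (s + 1) (by omega) h this.symm
        · exact hwi (h ▸ this.symm)

/-- The negative of a free color does not lie on the loop alone. -/
lemma FanLoop.false_of_free_mem (K : KempeClosed C X 𝓕) (hno : ∀ M ∈ 𝓕, ¬ HasSDR M X)
    (hM : M ∈ 𝓕) (L : FanLoop M X F v l) (haC : a ∈ C) (ha : ∀ w ∈ X, w ≠ v 0 → F w ≠ a)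
    (hi : 2 ≤ i) (hil : i ≤ l) (hia : F (v i) = -a)
    (hnb : ∀ t, 1 ≤ t → t ≤ l → F (v t) ≠ -F (v 1)) : False := by
  have hl := L.two_le
  have h10 : v 1 ≠ v 0 := L.ne_zero le_rfl (by omega)
  have hab : F (v 1) ≠ a := ha _ (L.mem _ (by omega)) h10
  obtain ⟨hb, hb0⟩ := L.color_mem K hM
  obtain ⟨P, hPinj, hP⟩ := K.kempe M hM a haC _ hb hab.symm
  obtain ⟨F', v', L', e0, ev, eb, hrev, hcol, himg, hoff⟩ := L.exists_reverse
  have ha' : ∀ w ∈ X, w ≠ v' 0 → F' w ≠ a := fun w hw h0 => by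
    obtain ⟨w', k1, k2, k3⟩ := himg w hw (e0 ▸ h0)
    rw [k3]; exact ha w' k1 k2
  obtain ⟨M₁, hM₁, p₁, hp₁, hP₁, hfl₁⟩ := hP (v 1) (F (v 1))
    (L.memF _ (L.mem _ (by omega)) (L.ne_zero le_rfl (by omega))) (Or.inr (Or.inl rfl))
  obtain ⟨M₂, hM₂, p₂, hp₂, hP₂, hfl₂⟩ := hP (v l) (F (v 1)) L.close (Or.inr (Or.inl rfl))
  rw [← ev, ← eb] at hfl₂
  rw [← eb] at hp₂
  obtain ⟨w₁, hw₁, h₁, rfl, c₁⟩ := L.partner_one ha hfl₁ (hno _ hM₁) hp₁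
  obtain ⟨w₂, hw₂, h₂, rfl, c₂⟩ := L'.partner_one ha' hfl₂ (hno _ hM₂) hp₂
  have d₁ : F w₁ = -F (v 1) := c₁.resolve_left fun c => by
    have : w₁ = v i := L.injF _ hw₁ _ (L.mem _ hil) h₁ (L.ne_zero (by omega) hil)
      (c.trans hia.symm)
    subst this
    exact L.false_of_link_free K hno hM₁ haC ha hi hil hia hfl₁
  have d₂ : F' w₂ = -F (v 1) := eb ▸ c₂.resolve_left fun c => by
    have hi' := (hrev i hi hil).2.trans hia
    have : w₂ = v' (l + 2 - i) := L'.injF _ hw₂ _ (L'.mem _ (by omega)) h₂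
      (L'.ne_zero (by omega) (by omega)) (c.trans hi'.symm)
    subst this
    exact L'.false_of_link_free K hno hM₂ haC ha' (by omega) (by omega) hi' hfl₂
  have d₃ : F' w₂ = F w₂ := hoff w₂ hw₂ (e0 ▸ h₂) fun s h1 h2 e => hnb s h1 h2 (e ▸ d₂)
  have hw : w₁ = w₂ := L.injF _ hw₁ _ hw₂ h₁ (e0 ▸ h₂) (by rw [← d₃, d₁, d₂])
  subst hw
  rw [d₁] at hP₁
  rw [d₂] at hP₂
  have n₁ : (w₁, -F (v 1)) ≠ (v 1, F (v 1)) := fun e => by have := (Prod.mk.inj e).2; omega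
  have n₂ : (w₁, -F (v 1)) ≠ (v l, F (v 1)) := fun e => by have := (Prod.mk.inj e).2; omega
  have := L.inj _ (by omega) _ le_rfl
    (Prod.mk.inj (hPinj _ _ _ (hP₁.resolve_left n₁) (hP₂.resolve_left n₂) n₁ n₂)).1
  omega

/-- The negative of the closing color at its owner is not linked to the same color at the
preceding vertex of the loop. -/
lemma FanLoop.false_of_link_pred (K : KempeClosed C X 𝓕) (hno : ∀ M ∈ 𝓕, ¬ HasSDR M X)
    (hM' : M' ∈ 𝓕) (L : FanLoop M X F v l) (ha : ∀ w ∈ X, w ≠ v 0 → F w ≠ a) (hb0 : F (v 1) ≠ 0)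
    (hi : 2 ≤ i) (hil : i ≤ l) (hib : F (v i) = -F (v 1))
    (hfl : Flips M M' a (-F (v 1)) (v i, -F (v 1)) (v (i - 1), -F (v 1))) : False := by
  classical
  have hl := L.two_le
  have h1i : v 1 ≠ v i := fun e => by have := L.inj _ (by omega) _ (by omega) e; omega
  have hab : -F (v 1) ≠ a := hib ▸ ha _ (L.mem _ hil) (L.ne_zero (by omega) hil)
  have hswap := signedSwap_right hab.symm
  have hkeep : ∀ w, ∀ x ∈ M w, x ≠ -F (v 1) → x ∈ M' w := fun w x hx hn =>
    (hfl w x hx).2 (fun e => hn (Prod.mk.inj e).2) fun e => hn (Prod.mk.inj e).2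
  have hnot : ∀ w ∈ X, w ≠ v 0 → w ≠ v i → F w ≠ -F (v 1) := fun w hw h0 hwi e =>
    hwi (L.injF _ hw _ (L.mem _ hil) h0 (L.ne_zero (by omega) hil) (e.trans hib.symm))
  have hup1 : Function.update F (v i) a (v 1) = F (v 1) := Function.update_of_ne h1i _ _
  have L₁ : FanLoop M' X (Function.update F (v i) a) v l := by
    refine ⟨hl, L.inj, L.mem, ?_, ?_, ?_, ?_⟩
    · intro w hw w' hw' h0 h0' e
      by_cases e1 : w = v i <;> by_cases e2 : w' = v i
      · rw [e1, e2]
      · rw [e1, Function.update_self, Function.update_of_ne e2] at e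
        exact absurd e.symm (ha _ hw' h0')
      · rw [e2, Function.update_self, Function.update_of_ne e1] at e
        exact absurd e (ha _ hw h0)
      · rw [Function.update_of_ne e1, Function.update_of_ne e2] at e
        exact L.injF _ hw _ hw' h0 h0' e
    · intro w hw h0
      by_cases e1 : w = v i
      · subst e1
        rw [Function.update_self]
        have := (hfl _ _ (L.memF _ hw h0)).1 (Or.inl (by rw [hib]))
        rwa [hib, hswap] at this
      · rw [Function.update_of_ne e1]
        exact hkeep _ _ (L.memF _ hw h0) (hnot w hw h0 e1)
    · intro t ht
      by_cases e1 : t + 1 = i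
      · subst e1
        rw [Function.update_self]
        have := (hfl _ _ (L.next t ht)).1 (Or.inr (by rw [hib, Nat.add_sub_cancel]))
        rwa [hib, hswap] at this
      · have e2 : v (t + 1) ≠ v i := fun e => e1 (L.inj _ (by omega) _ hil e)
        rw [Function.update_of_ne e2]
        exact hkeep _ _ (L.next t ht)
          (hnot _ (L.mem _ (by omega)) (L.ne_zero (by omega) (by omega)) e2)
    · rw [hup1]; exact hkeep _ _ L.close (by omega)
  refine L₁.false_of_neg_free K hno hM' fun w hw h0 => ?_
  rw [hup1]
  by_cases e1 : w = v i
  · rw [e1, Function.update_self]; exact hab.symm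
  · rw [Function.update_of_ne e1]; exact hnot w hw h0 e1

/-- The negative of the closing color at its owner is not linked to the closing color at
`v 0`. -/
lemma FanLoop.false_of_link_zero (K : KempeClosed C X 𝓕) (hno : ∀ M ∈ 𝓕, ¬ HasSDR M X)
    (hM' : M' ∈ 𝓕) (L : FanLoop M X F v l) (hbC : F (v 1) ∈ C)
    (ha : ∀ w ∈ X, w ≠ v 0 → F w ≠ a)
    (hi : 2 ≤ i) (hil : i ≤ l) (hib : F (v i) = -F (v 1))
    (hfl : Flips M M' a (-F (v 1)) (v i, -F (v 1)) (v 0, F (v 1))) : False := by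
  classical
  have hl := L.two_le
  have hab : -F (v 1) ≠ a := hib ▸ ha _ (L.mem _ hil) (L.ne_zero (by omega) hil)
  have hkeep : ∀ t, 1 ≤ t → t < i → ∀ x ∈ M (v t), x ∈ M' (v t) := fun t h1 h2 x hx =>
    (hfl _ x hx).2 (fun e => by have := L.inj _ (by omega) _ (by omega) (Prod.mk.inj e).1; omega)
      fun e => L.ne_zero h1 (by omega) (Prod.mk.inj e).1
  have hcert : TreeCert M' ((Finset.range (i - 1)).image fun s => v (s + 1))
      ((Finset.range (i - 1 + 1)).image fun s => F (v (s + 1))) := by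
    refine treeCert_path _ (fun s hs => ⟨?_, ?_⟩) (fun s hs t ht e => ?_) fun s hs t ht e => ?_
    · exact hkeep _ (by omega) (by omega) _
        (L.memF _ (L.mem _ (by omega)) (L.ne_zero (by omega) (by omega)))
    · exact hkeep _ (by omega) (by omega) _ (L.next _ (by omega))
    · have := L.inj _ (by omega) _ (by omega) e; omega
    · have := L.injF_loop (by omega) (by omega) (by omega) (by omega) e; omega
  have hD : ∀ w, w ∈ X \ (Finset.range (i - 1)).image (fun s => v (s + 1)) → w ∈ X ∧
      ∀ t, 1 ≤ t → t < i → w ≠ v t := by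
    intro w hw
    rw [Finset.mem_sdiff, mem_image_initial] at hw
    exact ⟨hw.1, fun t h1 h2 e => hw.2 ⟨t, h1, h2, e⟩⟩
  refine hcert.false K hno hM' (a := F (v 1)) (y := v 0) (F := Function.update F (v i) a) hbC
    ?_ ?_ ?_ ?_ ?_ ?_
  · exact Finset.mem_image.2 ⟨0, by simp, rfl⟩
  · refine Finset.mem_image.2 ⟨i - 1, by simp, ?_⟩
    rw [Nat.sub_add_cancel (by omega), hib]
  · rw [Finset.mem_sdiff, mem_image_initial]
    refine ⟨L.mem 0 (by omega), ?_⟩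
    rintro ⟨t, h1, h2, e⟩
    exact L.ne_zero h1 (by omega) e.symm
  · intro w hw w' hw' h0 h0' e
    obtain ⟨k1, k2⟩ := hD w hw
    obtain ⟨k1', k2'⟩ := hD w' hw'
    by_cases e1 : w = v i <;> by_cases e2 : w' = v i
    · rw [e1, e2]
    · rw [e1, Function.update_self, Function.update_of_ne e2] at e
      exact absurd e.symm (ha _ k1' h0')
    · rw [e2, Function.update_self, Function.update_of_ne e1] at e
      exact absurd e (ha _ k1 h0)
    · rw [Function.update_of_ne e1, Function.update_of_ne e2] at e
      exact L.injF _ k1 _ k1' h0 h0' e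
  · intro w hw h0
    obtain ⟨k1, k2⟩ := hD w hw
    by_cases e1 : w = v i
    · subst e1
      rw [Function.update_self]
      have := (hfl _ _ (L.memF _ k1 h0)).1 (Or.inl (by rw [hib]))
      rwa [hib, signedSwap_right hab.symm] at this
    · rw [Function.update_of_ne e1]
      exact (hfl _ _ (L.memF _ k1 h0)).2 (fun e => e1 (Prod.mk.inj e).1)
        fun e => h0 (Prod.mk.inj e).1
  · intro w hw h0 hmem
    obtain ⟨k1, k2⟩ := hD w hw
    obtain ⟨s, hs, hse⟩ := Finset.mem_image.1 hmem
    rw [Finset.mem_range] at hs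
    have hs0 : v (s + 1) ≠ v 0 := L.ne_zero (by omega) (by omega)
    by_cases e1 : w = v i
    · rw [e1, Function.update_self] at hse
      exact ha _ (L.mem _ (by omega)) hs0 hse
    · rw [Function.update_of_ne e1] at hse
      have := L.injF _ (L.mem _ (by omega)) _ k1 hs0 h0 hse
      rcases (show s + 1 ≤ i by omega).lt_or_eq with h | h
      · exact k2 (s + 1) (by omega) h this.symm
      · exact e1 (h ▸ this.symm)

/-- If the negative of the closing color lies on the loop while that of the free color `a` does
not, then the former is linked to the latter. -/
lemma FanLoop.partner_neg (K : KempeClosed C X 𝓕) (hno : ∀ M ∈ 𝓕, ¬ HasSDR M X) (hM : M ∈ 𝓕)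
    (hM' : M' ∈ 𝓕) (L : FanLoop M X F v l) (ha : ∀ w ∈ X, w ≠ v 0 → F w ≠ a)
    (hna : ∀ t, 1 ≤ t → t ≤ l → F (v t) ≠ -a)
    (hi : 2 ≤ i) (hil : i ≤ l) (hib : F (v i) = -F (v 1)) {e' : V × ℤ}
    (he : e'.2 = a ∨ e'.2 = -F (v 1) ∨ e'.2 = -a ∨ e'.2 = - -F (v 1))
    (hfl : Flips M M' a (-F (v 1)) (v i, -F (v 1)) e') :
    ∃ w ∈ X, w ≠ v 0 ∧ e' = (w, -a) ∧ F w = -a := by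
  have hl := L.two_le
  obtain ⟨hb, hb0⟩ := L.color_mem K hM
  have hab : -F (v 1) ≠ a := hib ▸ ha _ (L.mem _ hil) (L.ne_zero (by omega) hil)
  by_contra hcon
  push Not at hcon
  have hpred : e' ≠ (v (i - 1), -F (v 1)) := fun e =>
    L.false_of_link_pred K hno hM' ha hb0 hi hil hib (e ▸ hfl)
  have hzero : e' ≠ (v 0, F (v 1)) := fun e =>
    L.false_of_link_zero K hno hM' hb ha hi hil hib (e ▸ hfl)
  obtain ⟨G, hG1, hG2, hG3⟩ := exists_shift (X := X) (F := F) (x := v) (t := i)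
    (fun s hs t ht e => L.inj _ (le_trans hs hil) _ (le_trans ht hil) e)
    (fun s hs => L.mem s (hs.trans hil)) L.injF
  refine hno M' hM' (HasSDR.of_update hG3 (z := a) ?_ ?_ ?_)
  · intro w hw hwi
    by_cases e : ∃ s < i, w = v s
    · obtain ⟨s, hs, rfl⟩ := e
      rw [hG1 s hs]
      refine (hfl _ _ (L.next s (by omega))).2 (fun e => hwi (Prod.mk.inj e).1) fun e => ?_
      subst e
      rw [neg_neg] at he
      have hX := L.mem (s + 1) (by omega)
      have hs0 : v (s + 1) ≠ v 0 := L.ne_zero (by omega) (by omega)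
      rcases he with he | he | he | he
      · exact ha _ hX hs0 he
      · have := L.injF_loop (by omega) (by omega) (by omega) hil (he.trans hib.symm)
        exact hpred (by rw [← this, Nat.add_sub_cancel, this, hib])
      · exact hna _ (by omega) (by omega) he
      · have := L.injF_loop (by omega) (by omega) le_rfl (by omega) he
        exact hzero (by rw [show s = 0 by omega])
    · push Not at e
      rw [hG2 w e]
      have h0 := e 0 (by omega)
      refine (hfl _ _ (L.memF w hw h0)).2 (fun k => hwi (Prod.mk.inj k).1) fun k => ?_
      subst k
      rw [neg_neg] at he
      rcases he with he | he | he | he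
      · exact ha _ hw h0 he
      · exact hwi (L.injF _ hw _ (L.mem _ hil) h0 (L.ne_zero (by omega) hil) (he.trans hib.symm))
      · exact hcon w hw h0 (Prod.ext rfl he) he
      · exact e 1 (by omega) (L.injF _ hw _ (L.mem _ (by omega)) h0
          (L.ne_zero (by omega) (by omega)) he)
  · have := (hfl (v i) _ (L.memF _ (L.mem _ hil) (L.ne_zero (by omega) hil))).1
      (Or.inl (by rw [hib]))
    rwa [hib, signedSwap_right hab.symm] at this
  · intro w hw hwi
    by_cases e : ∃ s < i, w = v s
    · obtain ⟨s, hs, rfl⟩ := e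
      rw [hG1 s hs]
      exact ha _ (L.mem _ (by omega)) (L.ne_zero (by omega) (by omega))
    · push Not at e
      rw [hG2 w e]
      exact ha w hw (e 0 (by omega))

/-- The negative of the closing color does not lie on the loop alone. -/
lemma FanLoop.false_of_close_mem (K : KempeClosed C X 𝓕) (hno : ∀ M ∈ 𝓕, ¬ HasSDR M X)
    (hM : M ∈ 𝓕) (L : FanLoop M X F v l) (haC : a ∈ C) (ha : ∀ w ∈ X, w ≠ v 0 → F w ≠ a)
    (hna : ∀ t, 1 ≤ t → t ≤ l → F (v t) ≠ -a)
    (hi : 2 ≤ i) (hil : i ≤ l) (hib : F (v i) = -F (v 1)) : False := by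
  have hl := L.two_le
  have h10 : v 1 ≠ v 0 := L.ne_zero le_rfl (by omega)
  have hab : F (v 1) ≠ a := ha _ (L.mem _ (by omega)) h10
  have hab' : -F (v 1) ≠ a := hib ▸ ha _ (L.mem _ hil) (L.ne_zero (by omega) hil)
  obtain ⟨hb, hb0⟩ := L.color_mem K hM
  obtain ⟨P, hPinj, hP⟩ := K.kempe M hM a haC _ (K.neg_mem _ hb) hab'.symm
  obtain ⟨F', v', L', e0, ev, eb, hrev, hcol, himg, hoff⟩ := L.exists_reverse
  have ha' : ∀ w ∈ X, w ≠ v' 0 → F' w ≠ a := fun w hw h0 => by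
    obtain ⟨w', k1, k2, k3⟩ := himg w hw (e0 ▸ h0)
    rw [k3]; exact ha w' k1 k2
  have hna' : ∀ t, 1 ≤ t → t ≤ l → F' (v' t) ≠ -a := fun t h1 h2 => by
    obtain ⟨s, k1, k2, k3⟩ := hcol t h1 h2
    rw [k3]; exact hna s k1 k2
  obtain ⟨hr1, hr2⟩ := hrev i hi hil
  have hpm : -F (v 1) ∈ M (v (i - 1)) := by
    have := L.next (i - 1) (by omega)
    rwa [Nat.sub_add_cancel (by omega), hib] at this
  obtain ⟨M₁, hM₁, p₁, hp₁, hP₁, hfl₁⟩ := hP (v i) (-F (v 1))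
    (hib ▸ L.memF _ (L.mem _ hil) (L.ne_zero (by omega) hil)) (Or.inr (Or.inl rfl))
  obtain ⟨M₂, hM₂, p₂, hp₂, hP₂, hfl₂⟩ := hP (v (i - 1)) (-F (v 1)) hpm (Or.inr (Or.inl rfl))
  rw [← hr1, ← eb] at hfl₂
  rw [← eb] at hp₂
  obtain ⟨w₁, hw₁, h₁, rfl, d₁⟩ := L.partner_neg K hno hM hM₁ ha hna hi hil hib hp₁ hfl₁
  obtain ⟨w₂, hw₂, h₂, rfl, d₂⟩ := L'.partner_neg K hno hM hM₂ ha' hna' (by omega) (by omega)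
    (by rw [hr2, hib, eb]) hp₂ hfl₂
  have d₃ : F' w₂ = F w₂ := hoff w₂ hw₂ (e0 ▸ h₂) fun s h1 h2 e => hna s h1 h2 (e ▸ d₂)
  have hw : w₁ = w₂ := L.injF _ hw₁ _ hw₂ h₁ (e0 ▸ h₂) (by rw [← d₃, d₁, d₂])
  subst hw
  have n₁ : (w₁, -a) ≠ (v i, -F (v 1)) := fun e => by have := (Prod.mk.inj e).2; omega
  have n₂ : (w₁, -a) ≠ (v (i - 1), -F (v 1)) := fun e => by have := (Prod.mk.inj e).2; omega
  have := L.inj _ hil _ (by omega)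
    (Prod.mk.inj (hPinj _ _ _ (hP₁.resolve_left n₁) (hP₂.resolve_left n₂) n₁ n₂)).1
  omega

/-- In a family of color availabilities closed under Kempe changes, a system of distinct
representatives for all but one vertex of `X` yields one for `X` within the family. -/
theorem KempeClosed.exists_hasSDR (K : KempeClosed C X 𝓕) (hM : M ∈ 𝓕) (hcard : X.card ≤ C.card)
    {y : V} (hy : y ∈ X) (hF : ∀ w ∈ X, ∀ w' ∈ X, w ≠ y → w' ≠ y → F w = F w' → w = w')
    (hFM : ∀ w ∈ X, w ≠ y → F w ∈ M w) : ∃ M ∈ 𝓕, HasSDR M X := by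
  classical
  by_contra hno
  push Not at hno
  obtain ⟨y', hy', F, hF, hFM, -, hz | ⟨v, l, rfl, L⟩⟩ :=
    exists_free_or_fanLoop hy hF hFM (K.exists_ne M hM)
  · obtain ⟨z, hz, hzf⟩ := hz
    exact hno M hM (HasSDR.of_update hF hFM hz hzf)
  have hl := L.two_le
  obtain ⟨hb, hb0⟩ := L.color_mem K hM
  obtain ⟨a, haC, haF⟩ : ∃ a ∈ C, a ∉ (X.erase (v 0)).image F := by
    apply Finset.exists_mem_notMem_of_card_lt_card
    have h1 := Finset.card_image_le (s := X.erase (v 0)) (f := F)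
    have h2 := Finset.card_erase_lt_of_mem hy'
    omega
  have ha : ∀ w ∈ X, w ≠ v 0 → F w ≠ a := fun w hw h0 e =>
    haF (Finset.mem_image.2 ⟨w, Finset.mem_erase.2 ⟨h0, hw⟩, e⟩)
  by_cases hab : a = -F (v 1)
  · exact L.false_of_neg_free K hno hM (hab ▸ ha)
  have htwo : ∀ {t : ℕ} {x : ℤ}, 1 ≤ t → F (v t) = -x → F (v 1) ≠ -x → 2 ≤ t := by
    intro t x h1 h2 h3
    rcases h1.lt_or_eq with h | rfl
    · exact h
    · exact absurd h2 h3
  by_cases h1 : ∃ s, 1 ≤ s ∧ s ≤ l ∧ F (v s) = -a <;>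
    by_cases h2 : ∃ t, 1 ≤ t ∧ t ≤ l ∧ F (v t) = -F (v 1)
  · obtain ⟨s, a1, a2, a3⟩ := h1
    obtain ⟨t, b1, b2, b3⟩ := h2
    exact L.false_of_both K hno hM haC ha a1 a2 a3 b1 b2 b3
  · obtain ⟨s, a1, a2, a3⟩ := h1
    push Not at h2
    exact L.false_of_free_mem K hno hM haC ha (htwo a1 a3 (by omega)) a2 a3 h2
  · obtain ⟨t, b1, b2, b3⟩ := h2
    push Not at h1
    exact L.false_of_close_mem K hno hM haC ha h1 (htwo b1 b3 (by omega)) b2 b3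
  · push Not at h1 h2
    exact L.false_of_avoid K hno hM haC ha h1 h2

end Unsolvable

section TwoEnds

variable {N : Type*}

/-- The orbits of the group generated by `i` and `j`. -/
def JointOrbit (i j : Equiv.Perm N) : N → N → Prop :=
  Relation.EqvGen fun p q => q = i p ∨ q = j p

lemma JointOrbit.iff_of_rel {i j : Equiv.Perm N} {A : N → Prop} (hi : ∀ p, A (i p) ↔ A p)
    (hj : ∀ p, A (j p) ↔ A p) {p q : N} (h : JointOrbit i j p q) : A p ↔ A q := by
  induction h with
  | rel p q h =>
    rcases h with rfl | rfl
    exacts [(hi p).symm, (hj p).symm]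
  | refl => rfl
  | symm _ _ _ ih => exact ih.symm
  | trans _ _ _ _ _ ih₁ ih₂ => exact ih₁.trans ih₂

/-- An orbit of two involutions contains at most two fixed points of the second. -/
lemma JointOrbit.eq_of_fixed {i j : Equiv.Perm N} (hi : ∀ p, i (i p) = p) (hj : ∀ p, j (j p) = p)
    {p q s : N} (hq : JointOrbit i j p q) (hs : JointOrbit i j p s) (jp : j p = p) (jq : j q = q)
    (js : j s = s) (hqp : q ≠ p) (hsp : s ≠ p) : q = s := by
  set f : Equiv.Perm N := j * i with hf
  have hij : ∀ x, i x = f⁻¹ (j x) := fun x => by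
    rw [Equiv.Perm.eq_inv_iff_eq, hf, Equiv.Perm.mul_apply, hi]
  have hinv : f⁻¹ = j * f * j⁻¹ := by
    rw [eq_mul_inv_iff_mul_eq, inv_mul_eq_iff_eq_mul]
    ext x
    simp [hf, hi, hj]
  have hjf : ∀ (n : ℤ), j ((f ^ n) p) = (f ^ (-n)) p := by
    intro n
    have : f ^ (-n) = j * f ^ n * j⁻¹ := by rw [← conj_zpow, ← hinv, inv_zpow, zpow_neg]
    rw [this, Equiv.Perm.mul_apply, Equiv.Perm.mul_apply, Equiv.Perm.inv_eq_iff_eq.2 jp.symm]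
  have hA : ∀ {x}, JointOrbit i j p x → ∃ n : ℤ, x = (f ^ n) p := by
    have hj' : ∀ x, (∃ n : ℤ, x = (f ^ n) p) → ∃ n : ℤ, j x = (f ^ n) p := by
      rintro _ ⟨n, rfl⟩; exact ⟨-n, hjf n⟩
    have hi' : ∀ x, (∃ n : ℤ, x = (f ^ n) p) → ∃ n : ℤ, i x = (f ^ n) p := by
      intro x hx
      obtain ⟨n, hn⟩ := hj' x hx
      refine ⟨-1 + n, ?_⟩
      rw [hij, hn, zpow_add, zpow_neg_one, Equiv.Perm.mul_apply]
    intro x hx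
    refine (JointOrbit.iff_of_rel (A := fun x => ∃ n : ℤ, x = (f ^ n) p)
      (fun x => ⟨fun h => ?_, hi' x⟩) (fun x => ⟨fun h => ?_, hj' x⟩) hx).1 ⟨0, rfl⟩
    · have := hi' _ h; rwa [hi] at this
    · have := hj' _ h; rwa [hj] at this
  have hper : ∀ n : ℤ, (f ^ n) p = p ↔ (Function.minimalPeriod (f • ·) p : ℤ) ∣ n := fun n =>
    MulAction.zpow_smul_eq_iff_minimalPeriod_dvd (a := f) (b := p) (n := n)
  have hfix : ∀ n : ℤ, j ((f ^ n) p) = (f ^ n) p → (f ^ (n + n)) p = p := by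
    intro n h
    rw [hjf] at h
    rw [zpow_add, Equiv.Perm.mul_apply, ← h, ← Equiv.Perm.mul_apply, ← zpow_add]
    simp
  obtain ⟨n, rfl⟩ := hA hq
  obtain ⟨k, rfl⟩ := hA hs
  rw [Ne, hper] at hqp hsp
  have h1 := (hper _).1 (hfix n jq)
  have h2 := (hper _).1 (hfix k js)
  generalize (Function.minimalPeriod (f • ·) p : ℤ) = m at *
  obtain ⟨c, hc⟩ := h1
  obtain ⟨d, hd⟩ := h2
  have hodd : ∀ {x c : ℤ}, x + x = m * c → ¬ m ∣ x → c % 2 = 1 := by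
    intro x c hx hn
    by_contra hc
    refine hn ⟨c / 2, ?_⟩
    have : c = 2 * (c / 2) := by omega
    rw [this] at hx
    linarith
  have hc' := hodd hc hqp
  have hd' := hodd hd hsp
  have hdvd : m ∣ n - k := by
    refine ⟨(c - d) / 2, ?_⟩
    have : c - d = 2 * ((c - d) / 2) := by omega
    have : m * c - m * d = 2 * (m * ((c - d) / 2)) := by
      rw [← mul_sub, this]; ring_nf; simp
    linarith
  have hkn := (hper (-k + n)).2 (by rwa [neg_add_eq_sub])
  rw [zpow_add, zpow_neg, Equiv.Perm.mul_apply, Equiv.Perm.inv_eq_iff_eq] at hkn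
  exact hkn

end TwoEnds

lemma signedSwap_signedSwap {a b : ℤ} (ha : a ≠ 0) (hb : b ≠ 0) (hab : a ≠ b) (x : ℤ) :
    signedSwap a b (signedSwap a b x) = x := by
  unfold signedSwap; split_ifs <;> omega

lemma signedSwap_neg {a b : ℤ} (ha : a ≠ 0) (hb : b ≠ 0) (x : ℤ) :
    signedSwap a b (-x) = -signedSwap a b x := by
  unfold signedSwap; split_ifs <;> omega

lemma signedSwap_sign_mul {a b ε : ℤ} (ha : a ≠ 0) (hb : b ≠ 0) (hε : ε = 1 ∨ ε = -1) (x : ℤ) :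
    signedSwap a b (ε * x) = ε * signedSwap a b x := by
  rcases hε with rfl | rfl
  · simp
  · rw [neg_one_mul, neg_one_mul, signedSwap_neg ha hb]

lemma signedSwap_mem {C : Finset ℤ} (hC : ∀ x ∈ C, -x ∈ C) {a b x : ℤ} (ha : a ∈ C) (hb : b ∈ C)
    (hx : x ∈ C) : signedSwap a b x ∈ C := by
  unfold signedSwap
  split_ifs
  exacts [hb, ha, hC _ hb, hC _ ha, hx]

/-- `γ v w` is the color at `v` of the edge `vw` in a proper coloring, with colors in `C`, of the
graph `G` signed by `ε`. -/
structure IsCol {V : Type*} (G : SimpleGraph V) (ε : Sym2 V → ℤ) (C : Finset ℤ) (γ : V → V → ℤ) :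
    Prop where
  mem : ∀ ⦃v w⦄, G.Adj v w → γ v w ∈ C
  compat : ∀ ⦃v w⦄, G.Adj v w → γ v w = -ε s(v, w) * γ w v
  inj : ∀ ⦃v w x⦄, G.Adj v w → G.Adj v x → γ v w = γ v x → w = x

section Kempe

variable {V : Type*} {G : SimpleGraph V} {ε : Sym2 V → ℤ} {C : Finset ℤ} {γ : V → V → ℤ}

/-- Passing from one end of a colored edge to the other. -/
lemma IsCol.exists_across (hγ : IsCol G ε C γ) : ∃ j : Equiv.Perm (V × ℤ), (∀ p, j (j p) = p) ∧
    (∀ v w, G.Adj v w → j (v, γ v w) = (w, γ w v)) ∧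
    (∀ v x, (∀ w, G.Adj v w → γ v w ≠ x) → j (v, x) = (v, x)) := by
  classical
  let j : V × ℤ → V × ℤ := fun p =>
    if h : ∃ w, G.Adj p.1 w ∧ γ p.1 w = p.2 then (h.choose, γ h.choose p.1) else p
  have h1 : ∀ v w, G.Adj v w → j (v, γ v w) = (w, γ w v) := by
    intro v w hvw
    have h : ∃ w', G.Adj v w' ∧ γ v w' = γ v w := ⟨w, hvw, rfl⟩
    have hw : h.choose = w := hγ.inj h.choose_spec.1 hvw h.choose_spec.2
    simp only [j]
    rw [dif_pos h, hw]
  have h2 : ∀ v x, (∀ w, G.Adj v w → γ v w ≠ x) → j (v, x) = (v, x) := by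
    intro v x h
    exact dif_neg fun ⟨w, h1, h2⟩ => h w h1 h2
  have h3 : Function.Involutive j := by
    rintro ⟨v, x⟩
    by_cases h : ∃ w, G.Adj v w ∧ γ v w = x
    · obtain ⟨w, hw, rfl⟩ := h
      rw [h1 v w hw, h1 w v hw.symm]
    · push Not at h
      rw [h2 v x h, h2 v x h]
  exact ⟨h3.toPerm, h3, h1, h2⟩

/-- Kempe changes in signed edge colorings. -/
lemma IsCol.exists_kempe (hC : ∀ x ∈ C, -x ∈ C) (hC0 : (0 : ℤ) ∉ C)
    (hε : ∀ e, ε e = 1 ∨ ε e = -1) (hγ : IsCol G ε C γ) {a b : ℤ} (ha : a ∈ C) (hb : b ∈ C)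
    (hab : a ≠ b) : ∃ r : V × ℤ → V × ℤ → Prop,
    (∀ p q, r p q → r q p) ∧ (∀ p, r p p) ∧
    (∀ p q s : V × ℤ, (∀ w, G.Adj p.1 w → γ p.1 w ≠ p.2) → (∀ w, G.Adj q.1 w → γ q.1 w ≠ q.2) →
      (∀ w, G.Adj s.1 w → γ s.1 w ≠ s.2) → r p q → r p s → q ≠ p → s ≠ p → q = s) ∧
    (∀ p q, r p q → (p.2 = a ∨ p.2 = b ∨ p.2 = -a ∨ p.2 = -b) →
      (q.2 = a ∨ q.2 = b ∨ q.2 = -a ∨ q.2 = -b)) ∧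
    ∀ p, ∃ γ', IsCol G ε C γ' ∧ ∀ v x, (∀ w, G.Adj v w → γ v w ≠ x) →
      (r p (v, x) → ∀ w, G.Adj v w → γ' v w ≠ signedSwap a b x) ∧
      (¬ r p (v, x) → ∀ w, G.Adj v w → γ' v w ≠ x) := by
  classical
  have ha0 : a ≠ 0 := fun h => hC0 (h ▸ ha)
  have hb0 : b ≠ 0 := fun h => hC0 (h ▸ hb)
  have hτ := signedSwap_signedSwap ha0 hb0 hab
  obtain ⟨j, hj, hj1, hj2⟩ := hγ.exists_across
  have hinv : Function.Involutive fun p : V × ℤ => (p.1, signedSwap a b p.2) := fun p => by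
    simp [hτ]
  set i : Equiv.Perm (V × ℤ) := hinv.toPerm with hi_def
  have hi : ∀ p, i p = (p.1, signedSwap a b p.2) := fun p => rfl
  have hii : ∀ p, i (i p) = p := hinv
  have hri : ∀ p v x, JointOrbit i j p (v, signedSwap a b x) ↔ JointOrbit i j p (v, x) :=
    fun p v x => ⟨fun h => h.trans _ _ _ (.symm _ _ (.rel _ _ (Or.inl rfl))),
      fun h => h.trans _ _ _ (.rel _ _ (Or.inl rfl))⟩
  have hrj : ∀ p v w, G.Adj v w → (JointOrbit i j p (v, γ v w) ↔ JointOrbit i j p (w, γ w v)) :=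
    fun p v w h => ⟨fun k => k.trans _ _ _ (.rel _ _ (Or.inr (hj1 v w h).symm)),
      fun k => k.trans _ _ _ (.rel _ _ (Or.inr (hj1 w v h.symm).symm))⟩
  refine ⟨JointOrbit i j, fun p q h => h.symm, fun p => .refl p, ?_, ?_, ?_⟩
  · intro p q s hp hq hs
    exact fun h h' => JointOrbit.eq_of_fixed hii hj h h' (hj2 _ _ hp) (hj2 _ _ hq) (hj2 _ _ hs)
  · intro p q h
    refine (JointOrbit.iff_of_rel
      (A := fun p : V × ℤ => p.2 = a ∨ p.2 = b ∨ p.2 = -a ∨ p.2 = -b) ?_ ?_ h).1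
    · rintro ⟨v, x⟩
      rw [hi]
      unfold signedSwap; split_ifs <;> omega
    · rintro ⟨v, x⟩
      by_cases h : ∃ w, G.Adj v w ∧ γ v w = x
      · obtain ⟨w, hw, rfl⟩ := h
        rw [hj1 v w hw]
        have := hγ.compat hw
        rcases hε s(v, w) with e | e <;> rw [e] at this <;> dsimp only <;> omega
      · push Not at h
        rw [hj2 v x h]
  · intro p
    refine ⟨fun v w => if JointOrbit i j p (v, γ v w) then signedSwap a b (γ v w) else γ v w,
      ⟨?_, ?_, ?_⟩, ?_⟩
    · intro v w h
      split_ifs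
      · exact signedSwap_mem hC ha hb (hγ.mem h)
      · exact hγ.mem h
    · intro v w h
      by_cases k : JointOrbit i j p (v, γ v w)
      · rw [if_pos k, if_pos ((hrj p v w h).1 k)]
        conv_lhs => rw [hγ.compat h]
        rw [signedSwap_sign_mul ha0 hb0]
        have := hε s(v, w)
        omega
      · rw [if_neg k, if_neg (mt (hrj p v w h).2 k)]
        exact hγ.compat h
    · intro v w x hw hx e
      split_ifs at e with k1 k2 k2
      · exact hγ.inj hw hx (by rw [← hτ (γ v w), e, hτ])
      · rw [← e, hri] at k2; exact absurd k1 k2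
      · rw [e, hri] at k1; exact absurd k2 k1
      · exact hγ.inj hw hx e
    · intro v x hx
      refine ⟨fun hr w hw e => ?_, fun hr w hw e => ?_⟩
      · dsimp only at e
        split_ifs at e with k
        · exact hx w hw (by rw [← hτ (γ v w), e, hτ])
        · rw [e, hri] at k; exact k hr
      · dsimp only at e
        split_ifs at e with k
        · rw [← hri, e] at k; exact hr k
        · exact hx w hw e

/-- The colors which are available at `v` for an edge to a further vertex, measured at
the far end of that edge; `sg v` is minus the sign of this edge. -/
def avail (G : SimpleGraph V) (C : Finset ℤ) (sg : V → ℤ) (γ : V → V → ℤ) (v : V) : Set ℤ :=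
  {x | x ∈ C ∧ ∀ w, G.Adj v w → γ v w ≠ sg v * x}

lemma kempeClosed_avail [Finite V] (hC : ∀ x ∈ C, -x ∈ C) (hC0 : (0 : ℤ) ∉ C)
    (hε : ∀ e, ε e = 1 ∨ ε e = -1) {sg : V → ℤ} (hsg : ∀ v, sg v = 1 ∨ sg v = -1) {X : Finset V}
    (hX : ∀ w ∈ X, (G.neighborSet w).ncard + 2 ≤ C.card) :
    KempeClosed C X {M | ∃ γ, IsCol G ε C γ ∧ M = avail G C sg γ} := by
  classical
  have hsg2 : ∀ v x, sg v * (sg v * x) = x := fun v x => by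
    rcases hsg v with h | h <;> rw [h] <;> ring
  refine ⟨hC, hC0, ?_, ?_, ?_⟩
  · rintro _ ⟨γ, -, rfl⟩ v x hx
    exact hx.1
  · rintro _ ⟨γ, -, rfl⟩ w hw c
    have hfin := Set.toFinite (G.neighborSet w)
    obtain ⟨c', h1, h2⟩ : ∃ c' ∈ C,
        c' ∉ insert c (hfin.toFinset.image fun x => sg w * γ w x) := by
      apply Finset.exists_mem_notMem_of_card_lt_card
      have h1 := Finset.card_insert_le c (hfin.toFinset.image fun x => sg w * γ w x)
      have h2 := Finset.card_image_le (s := hfin.toFinset) (f := fun x => sg w * γ w x)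
      rw [← Set.ncard_eq_toFinset_card] at h2
      have := hX w hw
      omega
    rw [Finset.mem_insert, not_or] at h2
    refine ⟨c', ⟨h1, fun x hx e => h2.2 (Finset.mem_image.2 ⟨x, by simpa using hx, ?_⟩)⟩, h2.1⟩
    rw [e, hsg2]
  · rintro _ ⟨γ, hγ, rfl⟩ a ha b hb hab
    have ha0 : a ≠ 0 := fun h => hC0 (h ▸ ha)
    have hb0 : b ≠ 0 := fun h => hC0 (h ▸ hb)
    obtain ⟨r, hsymm, hrefl, hends, hcol, hflip⟩ := hγ.exists_kempe hC hC0 hε ha hb hab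
    set φ : V × ℤ → V × ℤ := fun p => (p.1, sg p.1 * p.2) with hφ
    have hφinj : ∀ p q, φ p = φ q → p = q := by
      rintro ⟨v, x⟩ ⟨w, y⟩ h
      obtain ⟨rfl, h⟩ := Prod.mk.inj h
      have h : sg v * x = sg v * y := h
      rw [← hsg2 v x, h, hsg2]
    have habs : ∀ p : V × ℤ, p.2 ∈ avail G C sg γ p.1 →
        ∀ w, G.Adj (φ p).1 w → γ (φ p).1 w ≠ (φ p).2 := fun p hp => hp.2
    have hU : ∀ p : V × ℤ, ((φ p).2 = a ∨ (φ p).2 = b ∨ (φ p).2 = -a ∨ (φ p).2 = -b) ↔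
        (p.2 = a ∨ p.2 = b ∨ p.2 = -a ∨ p.2 = -b) := by
      rintro ⟨v, x⟩
      rcases hsg v with h | h <;> simp only [hφ, h] <;> omega
    refine ⟨fun p q => p.2 ∈ avail G C sg γ p.1 ∧ q.2 ∈ avail G C sg γ q.1 ∧ r (φ p) (φ q), ?_, ?_⟩
    · rintro p q e ⟨hp, he, hr⟩ ⟨hq, -, hr'⟩ h1 h2
      exact hφinj _ _ (hends (φ e) (φ p) (φ q) (habs e he) (habs p hp) (habs q hq)
        (hsymm _ _ hr) (hsymm _ _ hr') (fun h => h1 (hφinj _ _ h).symm)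
        fun h => h2 (hφinj _ _ h).symm)
    · intro v x hx hxU
      obtain ⟨γ', hγ', hfl⟩ := hflip (φ (v, x))
      obtain ⟨e', h1, h2, h4⟩ : ∃ e' : V × ℤ, e'.2 ∈ avail G C sg γ e'.1 ∧
          r (φ (v, x)) (φ e') ∧ ∀ s : V × ℤ, s.2 ∈ avail G C sg γ s.1 →
            r (φ (v, x)) (φ s) → s = (v, x) ∨ s = e' := by
        by_cases h : ∃ e' : V × ℤ, e'.2 ∈ avail G C sg γ e'.1 ∧ r (φ (v, x)) (φ e') ∧ e' ≠ (v, x)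
        · obtain ⟨e', h1, h2, h3⟩ := h
          refine ⟨e', h1, h2, fun s hs hr => ?_⟩
          by_contra hcon
          push Not at hcon
          exact hcon.2 (hφinj _ _ (hends (φ (v, x)) (φ s) (φ e') (habs (v, x) hx) (habs s hs)
            (habs e' h1) hr h2 (fun h => hcon.1 (hφinj _ _ h)) fun h => h3 (hφinj _ _ h)))
        · push Not at h
          exact ⟨(v, x), hx, hrefl _, fun s hs hr => Or.inl (h s hs hr)⟩
      refine ⟨_, ⟨γ', hγ', rfl⟩, e', (hU _).1 (hcol _ _ h2 ((hU _).2 hxU)), Or.inr ⟨hx, h1, h2⟩, ?_⟩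
      intro w z hz
      obtain ⟨f1, f2⟩ := hfl w (sg w * z) hz.2
      refine ⟨fun h => ⟨signedSwap_mem hC ha hb hz.1, ?_⟩, fun h h' => ⟨hz.1, f2 fun hr => ?_⟩⟩
      · have hr : r (φ (v, x)) (φ (w, z)) := by
          rcases h with h | h <;> rw [h]
          exacts [hrefl _, h2]
        have := f1 hr
        rwa [signedSwap_sign_mul ha0 hb0 (hsg w)] at this
      · exact (h4 (w, z) hz hr).elim h h'

/-- A coloring can be changed so that the vertices of `X` receive distinct available colors. -/
lemma IsCol.exists_hasSDR [Finite V] (hC : ∀ x ∈ C, -x ∈ C) (hC0 : (0 : ℤ) ∉ C)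
    (hε : ∀ e, ε e = 1 ∨ ε e = -1) {sg : V → ℤ} (hsg : ∀ v, sg v = 1 ∨ sg v = -1)
    (hγ : IsCol G ε C γ) (X : Finset V) (hX : ∀ w ∈ X, (G.neighborSet w).ncard + 2 ≤ C.card)
    (hcard : X.card ≤ C.card) : ∃ γ, IsCol G ε C γ ∧ HasSDR (avail G C sg γ) X := by
  classical
  induction X using Finset.induction_on with
  | empty => exact ⟨γ, hγ, fun _ => 0, by simp, by simp⟩
  | insert y S hy ih =>
    obtain ⟨γ₁, hγ₁, A, hA, hAM⟩ := ih (fun w hw => hX w (Finset.mem_insert_of_mem hw))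
      ((Finset.card_le_card (Finset.subset_insert _ _)).trans hcard)
    have hS : ∀ w ∈ insert y S, w ≠ y → w ∈ S := fun w hw h =>
      (Finset.mem_insert.1 hw).resolve_left h
    obtain ⟨_, ⟨γ₂, hγ₂, rfl⟩, h⟩ := (kempeClosed_avail hC hC0 hε hsg hX).exists_hasSDR
      ⟨γ₁, hγ₁, rfl⟩ hcard (Finset.mem_insert_self y S) (F := A)
      (fun w hw w' hw' h h' e => hA (hS w hw h) (hS w' hw' h') e)
      fun w hw h => hAM w (hS w hw h)
    exact ⟨γ₂, hγ₂, h⟩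

end Kempe

section Graph

variable {V : Type*} [Finite V] {ε : Sym2 V → ℤ} {C : Finset ℤ}

/-- A coloring of the graph without the edges at `u` can be changed and extended to these edges. -/
lemma IsCol.exists_star (hC : ∀ x ∈ C, -x ∈ C) (hC0 : (0 : ℤ) ∉ C)
    (hε : ∀ e, ε e = 1 ∨ ε e = -1) {H H' : SimpleGraph V} {u : V}
    (hH' : ∀ v w, H'.Adj v w ↔ H.Adj v w ∧ v ≠ u ∧ w ≠ u) {γ : V → V → ℤ}
    (hγ : IsCol H' ε C γ) (hu : (H.neighborSet u).ncard ≤ C.card)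
    (hdeg : ∀ w, H.Adj u w → (H'.neighborSet w).ncard + 2 ≤ C.card) : ∃ γ, IsCol H ε C γ := by
  classical
  have hsg : ∀ v, -ε s(u, v) = 1 ∨ -ε s(u, v) = -1 := fun v => by have := hε s(u, v); omega
  have hfin := Set.toFinite (H.neighborSet u)
  obtain ⟨γ, hγ, A, hA, hAM⟩ := hγ.exists_hasSDR hC hC0 hε hsg hfin.toFinset
    (fun w hw => hdeg w (by simpa using hw)) (by rwa [← Set.ncard_eq_toFinset_card])
  have hAC : ∀ w, H.Adj u w → A w ∈ avail H' C (fun v => -ε s(u, v)) γ w := fun w hw =>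
    hAM w (by simpa using hw)
  have hAinj : ∀ w w', H.Adj u w → H.Adj u w' → A w = A w' → w = w' := fun w w' h h' e =>
    hA (by simpa using h) (by simpa using h') e
  have hne : ∀ {v w}, v ≠ u → w ≠ u → H.Adj v w → H'.Adj v w := fun h1 h2 h =>
    (hH' _ _).2 ⟨h, h1, h2⟩
  set g : V → V → ℤ := fun v w =>
    if v = u then A w else if w = u then -ε s(u, v) * A v else γ v w with hg
  have g1 : ∀ w, g u w = A w := fun w => by simp [hg]
  have g2 : ∀ v, v ≠ u → g v u = -ε s(u, v) * A v := fun v hv => by simp [hg, hv]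
  have g3 : ∀ v w, v ≠ u → w ≠ u → g v w = γ v w := fun v w hv hw => by simp [hg, hv, hw]
  refine ⟨g, ?_, ?_, ?_⟩
  · intro v w h
    by_cases hv : v = u
    · subst hv; rw [g1]; exact (hAC w h).1
    by_cases hw : w = u
    · subst hw
      rw [g2 v hv]
      have := (hAC v h.symm).1
      rcases hsg v with e | e <;> rw [e]
      · rwa [one_mul]
      · rw [neg_one_mul]; exact hC _ this
    · rw [g3 v w hv hw]; exact hγ.mem (hne hv hw h)
  · intro v w h
    by_cases hv : v = u
    · subst hv
      rw [g1, g2 w h.ne']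
      rcases hsg w with e | e <;> rw [e] <;> ring
    by_cases hw : w = u
    · subst hw
      rw [g1, g2 v hv, Sym2.eq_swap]
    · rw [g3 v w hv hw, g3 w v hw hv]; exact hγ.compat (hne hv hw h)
  · intro v w x hw hx e
    by_cases hv : v = u
    · subst hv
      rw [g1, g1] at e
      exact hAinj _ _ hw hx e
    by_cases hwu : w = u <;> by_cases hxu : x = u
    · rw [hwu, hxu]
    · subst hwu
      rw [g2 v hv, g3 v x hv hxu] at e
      exact absurd e.symm ((hAC v hw.symm).2 x (hne hv hxu hx))
    · subst hxu
      rw [g2 v hv, g3 v w hv hwu] at e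
      exact absurd e ((hAC v hx.symm).2 w (hne hv hwu hw))
    · rw [g3 v w hv hwu, g3 v x hv hxu] at e
      exact hγ.inj (hne hv hwu hw) (hne hv hxu hx) e

/-- A signed graph whose degrees are at most the number of colors and whose vertices attaining
this bound are pairwise nonadjacent can be colored. -/
theorem exists_isCol (hC : ∀ x ∈ C, -x ∈ C) (hC0 : (0 : ℤ) ∉ C)
    (hε : ∀ e, ε e = 1 ∨ ε e = -1) (H : SimpleGraph V)
    (hdeg : ∀ v, (H.neighborSet v).ncard ≤ C.card)
    (hfull : ∀ v w, H.Adj v w → (H.neighborSet v).ncard = C.card →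
      (H.neighborSet w).ncard ≠ C.card) : ∃ γ, IsCol H ε C γ := by
  induction H using WellFoundedLT.induction with
  | ind H ih =>
  by_cases hbot : ∀ v w, ¬ H.Adj v w
  · exact ⟨fun _ _ => 0, fun v w h => absurd h (hbot v w), fun v w h => absurd h (hbot v w),
      fun v w _ h => absurd h (hbot v w)⟩
  push Not at hbot
  obtain ⟨v₀, w₀, hvw₀⟩ := hbot
  obtain ⟨u, w₁, huw₁, hu⟩ : ∃ u w₁, H.Adj u w₁ ∧
      ∀ w, H.Adj u w → (H.neighborSet w).ncard ≠ C.card := by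
    by_cases h : ∃ u, (H.neighborSet u).ncard = C.card
    · obtain ⟨u, hu⟩ := h
      have hpos : 0 < (H.neighborSet u).ncard := by
        rw [hu]
        exact ((Set.ncard_pos (Set.toFinite _)).2 ⟨w₀, hvw₀⟩).trans_le (hdeg v₀)
      obtain ⟨w₁, hw₁⟩ := (Set.ncard_pos (Set.toFinite _)).1 hpos
      exact ⟨u, w₁, hw₁, fun w hw => hfull u w hw hu⟩
    · push Not at h
      exact ⟨v₀, w₀, hvw₀, fun w _ => h w⟩
  have hH' : ∀ v w, (H.deleteIncidenceSet u).Adj v w ↔ H.Adj v w ∧ v ≠ u ∧ w ≠ u :=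
    fun v w => H.deleteIncidenceSet_adj
  have hle : H.deleteIncidenceSet u ≤ H := fun v w h => ((hH' v w).1 h).1
  have hlt : H.deleteIncidenceSet u < H :=
    lt_of_le_of_ne hle fun e => ((hH' u w₁).1 (by rw [e]; exact huw₁)).2.1 rfl
  have hmono : ∀ v, ((H.deleteIncidenceSet u).neighborSet v).ncard ≤ (H.neighborSet v).ncard :=
    fun v => Set.ncard_le_ncard (fun w h => hle h) (Set.toFinite _)
  obtain ⟨γ, hγ⟩ := ih _ hlt (fun v => (hmono v).trans (hdeg v)) fun v w h hv hw =>
    hfull v w (hle h) (le_antisymm (hdeg v) (hv ▸ hmono v)) (le_antisymm (hdeg w) (hw ▸ hmono w))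
  refine hγ.exists_star hC hC0 hε hH' (hdeg u) fun w hw => ?_
  have h1 : ((H.deleteIncidenceSet u).neighborSet w).ncard < (H.neighborSet w).ncard :=
    Set.ncard_lt_ncard (Set.ssubset_iff_subset_ne.2 ⟨fun x h => hle h, fun e =>
      ((hH' w u).1 (show u ∈ (H.deleteIncidenceSet u).neighborSet w from e ▸ hw.symm)).2.2 rfl⟩)
      (Set.toFinite _)
  have h2 := hu w hw
  have h3 := hdeg w
  omega

/-- Every finite graph has a maximal matching. -/
lemma SimpleGraph.exists_maximal_matching (G : SimpleGraph V) : ∃ M ≤ G,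
    (∀ v w x, M.Adj v w → M.Adj v x → w = x) ∧
    ∀ v w, G.Adj v w → (∃ x, M.Adj v x) ∨ ∃ x, M.Adj w x := by
  have hfin : {M : SimpleGraph V | M ≤ G ∧ ∀ v w x, M.Adj v w → M.Adj v x → w = x}.Finite :=
    Set.toFinite _
  obtain ⟨M, hM⟩ := hfin.exists_maximal ⟨⊥, bot_le, by simp⟩
  refine ⟨M, hM.1.1, hM.1.2, fun v w hvw => ?_⟩
  by_contra hcon
  push Not at hcon
  have hmem : M ⊔ edge v w ∈
      {M : SimpleGraph V | M ≤ G ∧ ∀ v w x, M.Adj v w → M.Adj v x → w = x} := by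
    refine ⟨sup_le hM.1.1 ?_, ?_⟩
    · intro p q h
      rw [edge_adj] at h
      rcases h.1 with ⟨rfl, rfl⟩ | ⟨rfl, rfl⟩
      exacts [hvw, hvw.symm]
    · intro p q x hq hx
      rw [sup_adj, edge_adj] at hq hx
      have h1 := hcon.1
      have h2 := hcon.2
      have h3 := hM.1.2 p q x
      rcases hq with hq | hq <;> rcases hx with hx | hx
      · exact h3 hq hx
      · rcases hx.1 with ⟨rfl, rfl⟩ | ⟨rfl, rfl⟩
        exacts [absurd hq (h1 q), absurd hq (h2 q)]
      · rcases hq.1 with ⟨rfl, rfl⟩ | ⟨rfl, rfl⟩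
        exacts [absurd hx (h1 x), absurd hx (h2 x)]
      · have := hvw.ne
        aesop
  have := hM.2 hmem le_sup_left
  exact hcon.1 w (this (Or.inr ((edge_adj ..).2 ⟨Or.inl ⟨rfl, rfl⟩, hvw.ne⟩)))

end Graph

section Assembly

variable {V : Type*} {G : SimpleGraph V} {σ : Sym2 V → ℤ} {n : ℕ}

lemma SColoring.ncard_neighborSet_le [Finite V] (c : SColoring G σ n) (hc : c.Proper) (v : V) :
    (G.neighborSet v).ncard ≤ n := by
  classical
  have hmem : ∀ w ∈ G.neighborSet v, c.col v s(v, w) ∈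
      ({a ∈ Finset.Icc (-(n / 2 : ℤ)) (n / 2) | a = 0 → Odd n} : Finset ℤ) := by
    intro w hw
    obtain ⟨h1, h2⟩ := c.mem_colors hw
    rw [Finset.mem_filter, Finset.mem_Icc]
    exact ⟨by omega, h2⟩
  have hinj : Set.InjOn (fun w => c.col v s(v, w)) (G.neighborSet v) := fun w hw x hx e => by
    by_contra hne
    exact hc hw hx hne e
  have h1 := Set.ncard_le_ncard_of_injOn (t := ↑({a ∈ Finset.Icc (-(n / 2 : ℤ)) (n / 2) |
    a = 0 → Odd n} : Finset ℤ)) _ hmem hinj (Finset.finite_toSet _)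
  rw [Set.ncard_coe_finset] at h1
  refine h1.trans ?_
  by_cases hn : Odd n
  · have : n % 2 = 1 := Nat.odd_iff.1 hn
    refine (Finset.card_filter_le _ _).trans ?_
    rw [Int.card_Icc]; omega
  · have hn2 : n % 2 = 0 := Nat.even_iff.1 (Nat.not_odd_iff_even.1 hn)
    have hsub : ({a ∈ Finset.Icc (-(n / 2 : ℤ)) (n / 2) | a = 0 → Odd n} : Finset ℤ) ⊆
        (Finset.Icc (-(n / 2 : ℤ)) (n / 2)).erase 0 := by
      intro a ha
      rw [Finset.mem_filter] at ha
      exact Finset.mem_erase.2 ⟨fun h => hn (ha.2 h), ha.1⟩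
    refine (Finset.card_le_card hsub).trans ?_
    rw [Finset.card_erase_of_mem (Finset.mem_Icc.2 (by omega)), Int.card_Icc]
    omega

/-- Colors given on ordered pairs of adjacent vertices define a coloring. -/
lemma SColoring.exists_of_fun (g : V → V → ℤ) (hmem : ∀ v w, G.Adj v w → g v w ∈ Mset n)
    (hcompat : ∀ v w, G.Adj v w → g v w = -σ s(v, w) * g w v)
    (hinj : ∀ v w x, G.Adj v w → G.Adj v x → g v w = g v x → w = x) :
    ∃ c : SColoring G σ n, c.Proper := by
  classical
  have hcol : ∃ col : V → Sym2 V → ℤ, ∀ v w, col v s(v, w) = g v w := by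
    refine ⟨fun v e => if h : v ∈ e then g v (Sym2.Mem.other h) else 0, fun v w => ?_⟩
    have h : v ∈ s(v, w) := Sym2.mem_mk_left v w
    beta_reduce
    rw [dif_pos h, Sym2.congr_right.1 (Sym2.other_spec h)]
  obtain ⟨col, hcol⟩ := hcol
  refine ⟨⟨col, fun v w h => ?_, fun v w h => ?_⟩, fun v w x hw hx hne e => hne ?_⟩
  · rw [hcol]; exact hmem v w h
  · rw [hcol, Sym2.eq_swap, hcol, Sym2.eq_swap]; exact hcompat v w h
  · have e : col v s(v, w) = col v s(v, x) := e
    rw [hcol, hcol] at e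
    exact hinj v w x hw hx e

/-- The `2 * k` nonzero colors of absolute value at most `k`. -/
noncomputable def nonzeroColors (k : ℕ) : Finset ℤ := (Finset.Icc (-(k : ℤ)) k).erase 0

lemma mem_nonzeroColors {k : ℕ} {x : ℤ} : x ∈ nonzeroColors k ↔ x ≠ 0 ∧ x.natAbs ≤ k := by
  rw [nonzeroColors, Finset.mem_erase, Finset.mem_Icc]; omega

lemma card_nonzeroColors (k : ℕ) : (nonzeroColors k).card = 2 * k := by
  rw [nonzeroColors, Finset.card_erase_of_mem (Finset.mem_Icc.2 (by omega)), Int.card_Icc]; omega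

/-- A signed graph with all degrees at most `d` has a proper coloring with `d + 1` colors. -/
lemma exists_proper [Finite V] (hσ : ∀ e ∈ G.edgeSet, σ e = 1 ∨ σ e = -1) {d : ℕ}
    (hd : ∀ v, (G.neighborSet v).ncard ≤ d) : ∃ c : SColoring G σ (d + 1), c.Proper := by
  classical
  set ε : Sym2 V → ℤ := fun e => if σ e = -1 then -1 else 1 with hε_def
  have hε : ∀ e, ε e = 1 ∨ ε e = -1 := fun e => by
    simp only [hε_def]; split_ifs <;> simp
  have hεσ : ∀ v w, G.Adj v w → ε s(v, w) = σ s(v, w) := fun v w h => by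
    rcases hσ s(v, w) h with e | e <;> simp [hε_def, e]
  have hneg : ∀ k, ∀ x ∈ nonzeroColors k, -x ∈ nonzeroColors k := fun k x hx => by
    rw [mem_nonzeroColors] at hx ⊢; omega
  have hzero : ∀ k, (0 : ℤ) ∉ nonzeroColors k := fun k hx => (mem_nonzeroColors.1 hx).1 rfl
  rcases Nat.even_or_odd' d with ⟨k, rfl | rfl⟩
  · obtain ⟨M, hMG, hMm, hMmax⟩ := G.exists_maximal_matching
    have hle : ∀ v, ((G \ M).neighborSet v).ncard ≤ (G.neighborSet v).ncard := fun v =>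
      Set.ncard_le_ncard (fun w h => h.1) (Set.toFinite _)
    have hcov : ∀ v x, M.Adj v x → ((G \ M).neighborSet v).ncard ≠ 2 * k := fun v x hx e => by
      have : ((G \ M).neighborSet v).ncard < (G.neighborSet v).ncard :=
        Set.ncard_lt_ncard (Set.ssubset_iff_subset_ne.2 ⟨fun w h => h.1, fun e =>
          (show x ∈ (G \ M).neighborSet v from e ▸ hMG hx).2 hx⟩) (Set.toFinite _)
      have := hd v
      omega
    obtain ⟨γ, hγ⟩ := exists_isCol (hneg k) (hzero k) hε (G \ M)
      (fun v => by rw [card_nonzeroColors]; exact (hle v).trans (hd v)) fun v w h hv hw => by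
        rw [card_nonzeroColors] at hv hw
        rcases hMmax v w h.1 with ⟨x, hx⟩ | ⟨x, hx⟩
        exacts [hcov v x hx hv, hcov w x hx hw]
    have hne : ∀ v w, G.Adj v w → ¬ M.Adj v w → γ v w ≠ 0 := fun v w h h' =>
      (mem_nonzeroColors.1 (hγ.mem ⟨h, h'⟩)).1
    refine SColoring.exists_of_fun (fun v w => if M.Adj v w then 0 else γ v w) ?_ ?_ ?_
    · intro v w h
      split_ifs with hm
      · exact ⟨by simp, fun _ => ⟨k, rfl⟩⟩
      · have := mem_nonzeroColors.1 (hγ.mem (show (G \ M).Adj v w from ⟨h, hm⟩))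
        exact ⟨by omega, fun _ => ⟨k, rfl⟩⟩
    · intro v w h
      by_cases hm : M.Adj v w
      · simp [hm, hm.symm]
      · rw [if_neg hm, if_neg fun e => hm e.symm, ← hεσ v w h]
        exact hγ.compat ⟨h, hm⟩
    · intro v w x hw hx e
      split_ifs at e with h1 h2 h2
      · exact hMm v w x h1 h2
      · exact absurd e.symm (hne v x hx h2)
      · exact absurd e (hne v w hw h1)
      · exact hγ.inj ⟨hw, h1⟩ ⟨hx, h2⟩ e
  · obtain ⟨γ, hγ⟩ := exists_isCol (hneg (k + 1)) (hzero (k + 1)) hε G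
      (fun v => by rw [card_nonzeroColors]; have := hd v; omega) fun v w _ hv => by
        rw [card_nonzeroColors] at hv; have := hd v; omega
    refine SColoring.exists_of_fun γ ?_ ?_ fun v w x hw hx e => hγ.inj hw hx e
    · intro v w h
      have := mem_nonzeroColors.1 (hγ.mem h)
      exact ⟨by omega, fun e => absurd e this.1⟩
    · intro v w h
      rw [← hεσ v w h]; exact hγ.compat h

end Assembly

/-- **Signed Vizing's Theorem.** For every signed simple graph `Σ = (Γ, σ)` on a finite
simple graph `Γ`, the chromatic index satisfies `Δ(Σ) ≤ χ'(Σ) ≤ Δ(Σ) + 1`. -/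
theorem signed_vizing {V : Type*} [Fintype V] (G : SimpleGraph V) [DecidableRel G.Adj]
    (σ : Sym2 V → ℤ) (hσ : ∀ e ∈ G.edgeSet, σ e = 1 ∨ σ e = -1) :
    G.maxDegree ≤ sInf {n : ℕ | ∃ c : SColoring G σ n, c.Proper} ∧
      ∃ n ≤ G.maxDegree + 1, ∃ c : SColoring G σ n, c.Proper := by
  have hdeg : ∀ v, (G.neighborSet v).ncard = G.degree v := fun v => by
    rw [← G.card_neighborSet_eq_degree, Set.ncard_eq_toFinset_card', Set.toFinset_card]
  obtain ⟨c, hc⟩ := exists_proper hσ (d := G.maxDegree) fun v => by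
    rw [hdeg]; exact G.degree_le_maxDegree v
  refine ⟨?_, _, le_rfl, c, hc⟩
  obtain ⟨c', hc'⟩ := Nat.sInf_mem (s := {n : ℕ | ∃ c : SColoring G σ n, c.Proper}) ⟨_, c, hc⟩
  exact G.maxDegree_le_of_forall_degree_le _ fun v => hdeg v ▸ c'.ncard_neighborSet_le hc' v
end

section
/- Zero-free Signed Vizing's Theorem: Let Σ = (Γ, σ) be a signed simple graph. Then Δ(Σ) ≤ χ'(Σ), and moreover Σ admits a proper zero-free edge coloring with Δ(Σ)+1 colors if Δ(Σ) is odd, and a proper zero-free edge coloring with Δ(Σ)+2 colors if Δ(Σ) is even. -/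
open SimpleGraph

namespace SignedVizing

section SetSystems

variable {ι κ : Type*} [DecidableEq κ]

/-- The indices in `N` whose list `M y` meets the set of colors `R`. -/
def meeting (N : Finset ι) (M : ι → Finset κ) (R : Finset κ) : Finset ι :=
  N.filter fun y => ¬Disjoint (M y) R

/-- The surplus `|R| - |meeting R|` of a set of colors. -/
def surplus (N : Finset ι) (M : ι → Finset κ) (R : Finset κ) : ℤ :=
  (R.card : ℤ) - (meeting N M R).card

/-- A potential whose maximizers have the largest surplus and, among these, the least size. -/
def weight (C : Finset κ) (N : Finset ι) (M : ι → Finset κ) (R : Finset κ) : ℤ :=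
  (C.card + 1) * surplus N M R - R.card

/-- The largest value of `weight` on subsets of `C`. -/
def potential (C : Finset κ) (N : Finset ι) (M : ι → Finset κ) : ℕ :=
  C.powerset.sup fun R => (weight C N M R).toNat

variable {C : Finset κ} {N : Finset ι} {M : ι → Finset κ}

lemma mem_meeting {R : Finset κ} {y : ι} :
    y ∈ meeting N M R ↔ y ∈ N ∧ ∃ a ∈ M y, a ∈ R := by
  simp [meeting, Finset.not_disjoint_iff]

lemma meeting_mono {R S : Finset κ} (h : R ⊆ S) : meeting N M R ⊆ meeting N M S := by
  intro y
  simp only [mem_meeting]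
  rintro ⟨hy, a, ha, haR⟩
  exact ⟨hy, a, ha, h haR⟩

lemma potential_congr {M' : ι → Finset κ} (h : ∀ y ∈ N, M y = M' y) :
    potential C N M = potential C N M' := by
  have hm : ∀ R, meeting N M R = meeting N M' R := fun R =>
    Finset.filter_congr fun y hy => by rw [h y hy]
  simp only [potential, weight, surplus, hm]

lemma potential_lt_potential {M' : ι → Finset κ} {t : ℤ} {T : Finset κ} (ht : 1 ≤ t) (hTC : T ⊆ C)
    (hT : surplus N M T = t)
    (h : ∀ R ⊆ C, t ≤ surplus N M' R → surplus N M' R = t ∧ T.card < R.card) :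
    potential C N M' < potential C N M := by
  have hTcard := Finset.card_le_card hTC
  have hpos : 0 < weight C N M T := by
    rw [weight, hT]; nlinarith
  have hle : (weight C N M T).toNat ≤ potential C N M :=
    Finset.le_sup (f := fun R => (weight C N M R).toNat) (Finset.mem_powerset.2 hTC)
  refine lt_of_lt_of_le ?_ hle
  rw [potential, Finset.sup_lt_iff (by simpa using hpos)]
  intro R hR
  rw [Finset.mem_powerset] at hR
  have hRcard := Finset.card_le_card hR
  have hlt : weight C N M' R < weight C N M T := by
    rw [weight, weight, hT]
    by_cases hRt : t ≤ surplus N M' R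
    · obtain ⟨h1, h2⟩ := h R hR hRt
      rw [h1]; lia
    · nlinarith
  lia

/-- The maximum `t` of the surplus on subsets of `C`, together with the least maximizer `T`
and the greatest maximizer `S`. -/
structure IsExtremal (C : Finset κ) (N : Finset ι) (M : ι → Finset κ) (t : ℤ)
    (T S : Finset κ) : Prop where
  le : ∀ R ⊆ C, surplus N M R ≤ t
  bot_subset : T ⊆ C
  bot_eq : surplus N M T = t
  bot_le : ∀ R ⊆ C, t ≤ surplus N M R → T ⊆ R
  top_subset : S ⊆ C
  top_eq : surplus N M S = t
  le_top : ∀ R ⊆ C, t ≤ surplus N M R → R ⊆ S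

lemma IsExtremal.surplus_lt {t : ℤ} {T S : Finset κ} (h : IsExtremal C N M t T S) {β : κ}
    (hβ : β ∈ T) {R : Finset κ} (hR : R ⊆ C) (hβR : β ∉ R) : surplus N M R < t := by
  by_contra! hlt
  exact hβR (h.bot_le R hR hlt hβ)

variable [DecidableEq ι]

/-- Replace the color `a` by `b` in the list at `u`. -/
def move (M : ι → Finset κ) (u : ι) (a b : κ) : ι → Finset κ :=
  fun y => if y = u then insert b ((M y).erase a) else M y

lemma surplus_supermodular (R S : Finset κ) :
    surplus N M R + surplus N M S ≤ surplus N M (R ∪ S) + surplus N M (R ∩ S) := by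
  have h1 := Finset.card_union_add_card_inter R S
  have h2 := Finset.card_union_add_card_inter (meeting N M R) (meeting N M S)
  have h3 : meeting N M (R ∪ S) = meeting N M R ∪ meeting N M S := by
    ext y; simp only [mem_meeting, Finset.mem_union]; grind
  have h4 : (meeting N M (R ∩ S)).card ≤ (meeting N M R ∩ meeting N M S).card :=
    Finset.card_le_card (Finset.subset_inter (meeting_mono Finset.inter_subset_left)
      (meeting_mono Finset.inter_subset_right))
  simp only [surplus, h3]
  lia

lemma surplus_supermodular_strict {R S : Finset κ} {v : ι} (hR : v ∈ meeting N M R)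
    (hS : v ∈ meeting N M S) (hRS : v ∉ meeting N M (R ∩ S)) :
    surplus N M R + surplus N M S < surplus N M (R ∪ S) + surplus N M (R ∩ S) := by
  have h1 := Finset.card_union_add_card_inter R S
  have h2 := Finset.card_union_add_card_inter (meeting N M R) (meeting N M S)
  have h3 : meeting N M (R ∪ S) = meeting N M R ∪ meeting N M S := by
    ext y; simp only [mem_meeting, Finset.mem_union]; grind
  have h4 : (meeting N M (R ∩ S)).card < (meeting N M R ∩ meeting N M S).card := by
    refine Finset.card_lt_card ⟨Finset.subset_inter (meeting_mono Finset.inter_subset_left)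
      (meeting_mono Finset.inter_subset_right), fun h => hRS (h ?_)⟩
    exact Finset.mem_inter.2 ⟨hR, hS⟩
  simp only [surplus, h3]
  lia

lemma surplus_move_le_add_one (u : ι) (a b : κ) (R : Finset κ) :
    surplus N (move M u a b) R ≤ surplus N M R + 1 := by
  have h : meeting N M R ⊆ insert u (meeting N (move M u a b) R) := by
    intro y
    simp only [Finset.mem_insert, mem_meeting, move]
    grind
  have h1 := Finset.card_le_card h
  have h2 := Finset.card_insert_le u (meeting N (move M u a b) R)
  simp only [surplus]
  lia

lemma surplus_move_le {u : ι} {a b : κ} {R : Finset κ}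
    (h : ¬(a ∈ R ∧ b ∉ R ∧ ∀ c ∈ M u, c ∈ R → c = a)) :
    surplus N (move M u a b) R ≤ surplus N M R := by
  have h : meeting N M R ⊆ meeting N (move M u a b) R := by
    intro y
    simp only [mem_meeting, move]
    grind
  have h1 := Finset.card_le_card h
  simp only [surplus]
  lia

lemma surplus_move_lt {u : ι} {a b : κ} {R : Finset κ} (hu : u ∈ N) (hb : b ∈ R)
    (h : u ∉ meeting N M R) :
    surplus N (move M u a b) R < surplus N M R := by
  have h : insert u (meeting N M R) ⊆ meeting N (move M u a b) R := by
    intro y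
    simp only [Finset.mem_insert, mem_meeting, move]
    grind
  have h1 := Finset.card_le_card h
  rw [Finset.card_insert_of_notMem (by assumption)] at h1
  simp only [surplus]
  lia

/-- If the lists have no system of distinct representatives, then some set of colors has
large surplus. -/
lemma exists_surplus_gt (hM : ∀ y ∈ N, M y ⊆ C)
    (hN : ¬∃ f : N → κ, Function.Injective f ∧ ∀ y : N, f y ∈ M y) :
    ∃ R ⊆ C, (C.card : ℤ) - N.card < surplus N M R := by
  by_contra! hcon
  apply hN
  have hall : ∀ s : Finset N, s.card ≤ (s.biUnion fun y => M y).card := by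
    intro s
    set B := s.biUnion fun y => M y
    have hB : B ⊆ C := Finset.biUnion_subset.2 fun y _ => hM y y.2
    have h := hcon (C \ B) Finset.sdiff_subset
    have h1 : meeting N M (C \ B) ⊆ N \ s.map (Function.Embedding.subtype _) := by
      intro y
      simp only [mem_meeting, Finset.mem_sdiff, Finset.mem_map]
      rintro ⟨hy, a, ha, -, haB⟩
      refine ⟨hy, ?_⟩
      rintro ⟨z, hz, rfl⟩
      exact haB (Finset.mem_biUnion.2 ⟨z, hz, ha⟩)
    have h2 := Finset.card_le_card h1
    have h3 : s.map (Function.Embedding.subtype _) ⊆ N := by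
      intro y hy
      obtain ⟨z, -, rfl⟩ := Finset.mem_map.1 hy
      exact z.2
    have h4 := Finset.card_le_card h3
    have h5 := Finset.card_le_card hB
    rw [Finset.card_sdiff_of_subset h3] at h2
    rw [surplus, Finset.card_sdiff_of_subset hB] at h
    rw [Finset.card_map] at h2 h4
    lia
  exact (Finset.all_card_le_biUnion_card_iff_exists_injective _).1 hall

lemma exists_isExtremal (C : Finset κ) (N : Finset ι) (M : ι → Finset κ) :
    ∃ t T S, IsExtremal C N M t T S := by
  obtain ⟨R₀, hR₀, hmax⟩ := C.powerset.exists_max_image (surplus N M) ⟨∅, by simp⟩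
  simp only [Finset.mem_powerset] at hR₀ hmax
  set t := surplus N M R₀ with ht
  let F := C.powerset.filter fun R => surplus N M R = t
  have hF : ∀ R, R ∈ F ↔ R ⊆ C ∧ surplus N M R = t := by simp [F]
  have hne : F.Nonempty := ⟨R₀, (hF _).2 ⟨hR₀, rfl⟩⟩
  obtain ⟨T, hT, hTmin⟩ := F.exists_min_image Finset.card hne
  obtain ⟨S, hS, hSmax⟩ := F.exists_max_image Finset.card hne
  rw [hF] at hT hS
  refine ⟨t, T, S, hmax, hT.1, hT.2, ?_, hS.1, hS.2, ?_⟩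
  · intro R hR hRt
    have h := surplus_supermodular (N := N) (M := M) T R
    have h1 := hmax (T ∪ R) (Finset.union_subset hT.1 hR)
    have hTR : T ∩ R ⊆ C := Finset.inter_subset_left.trans hT.1
    have h2 := hmax (T ∩ R) hTR
    have h3 := hTmin (T ∩ R) ((hF _).2 ⟨hTR, by linarith⟩)
    exact Finset.inter_eq_left.1 (Finset.eq_of_subset_of_card_le Finset.inter_subset_left h3)
  · intro R hR hRt
    have h := surplus_supermodular (N := N) (M := M) S R
    have hSR := Finset.union_subset hS.1 hR
    have h1 := hmax (S ∪ R) hSR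
    have h2 := hmax (S ∩ R) (Finset.inter_subset_left.trans hS.1)
    have h3 := hSmax (S ∪ R) ((hF _).2 ⟨hSR, by linarith⟩)
    exact Finset.union_eq_left.1 (Finset.eq_of_subset_of_card_le Finset.subset_union_left h3).symm

/-- The indices in `N` whose list misses `S` and contains `c`. -/
def star (N : Finset ι) (M : ι → Finset κ) (S : Finset κ) (c : κ) : Finset ι :=
  (N \ meeting N M S).filter fun y => c ∈ M y

lemma sum_card_star (S A : Finset κ) :
    ∑ c ∈ A, (star N M S c).card = ∑ y ∈ N \ meeting N M S, (M y ∩ A).card := by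
  simp only [star, Finset.card_filter]
  rw [Finset.sum_comm]
  refine Finset.sum_congr rfl fun y _ => ?_
  rw [← Finset.card_filter, Finset.inter_comm, ← Finset.filter_mem_eq_inter]

namespace IsExtremal

variable {t : ℤ} {T S : Finset κ}

lemma two_le_card_star (h : IsExtremal C N M t T S) {c : κ} (hc : c ∈ C) (hcS : c ∉ S) :
    2 ≤ (star N M S c).card := by
  by_contra! hlt
  have hsub : insert c S ⊆ C := Finset.insert_subset hc h.top_subset
  have h1 : meeting N M (insert c S) ⊆ meeting N M S ∪ star N M S c := by
    intro y
    simp only [star, mem_meeting, Finset.mem_union, Finset.mem_filter, Finset.mem_sdiff,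
      Finset.mem_insert]
    grind
  have h2 := (Finset.card_le_card h1).trans (Finset.card_union_le _ _)
  have h3 := h.top_eq
  refine hcS (h.le_top _ hsub ?_ (Finset.mem_insert_self c S))
  rw [surplus] at h3 ⊢
  rw [Finset.card_insert_of_notMem hcS]
  lia

lemma exists_three_le_card_star (h : IsExtremal C N M t T S) (hM : ∀ y ∈ N, M y ⊆ C)
    (hM2 : ∀ y ∈ N, (M y).card = 2) (ht : (C.card : ℤ) - N.card < t) :
    ∃ c ∈ C, c ∉ S ∧ 3 ≤ (star N M S c).card := by
  by_contra! hcon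
  have h1 : ∑ c ∈ C \ S, (star N M S c).card ≤ (C \ S).card * 2 :=
    Finset.sum_le_card_nsmul _ _ _ fun c hc => by
      rw [Finset.mem_sdiff] at hc
      have := hcon c hc.1 hc.2
      lia
  have h2 : ∑ y ∈ N \ meeting N M S, (M y ∩ (C \ S)).card = (N \ meeting N M S).card * 2 := by
    refine Finset.sum_const_nat fun y hy => ?_
    simp only [Finset.mem_sdiff, mem_meeting, not_and, not_exists] at hy
    rw [Finset.inter_eq_left.2, hM2 y hy.1]
    intro a ha
    exact Finset.mem_sdiff.2 ⟨hM y hy.1 ha, hy.2 hy.1 a ha⟩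
  rw [sum_card_star, h2] at h1
  have h3 : meeting N M S ⊆ N := Finset.filter_subset _ _
  rw [Finset.card_sdiff_of_subset h3, Finset.card_sdiff_of_subset h.top_subset] at h1
  have h4 := Finset.card_le_card h3
  have h5 := Finset.card_le_card h.top_subset
  have h6 := h.top_eq
  rw [surplus] at h6
  lia

/-- The color `p` is critical for `v`: it lies in a set of almost maximal surplus avoiding `β`
in which it is the only color from the list at `v`. -/
def Critical (C : Finset κ) (N : Finset ι) (M : ι → Finset κ) (t : ℤ) (S : Finset κ) (β p : κ)
    (v : ι) : Prop :=
  v ∈ N ∧ p ∈ S ∧ p ∈ M v ∧ ∃ R ⊆ C, β ∉ R ∧ t ≤ surplus N M R + 1 ∧ p ∈ R ∧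
    ∀ c ∈ M v, c ∈ R → c = p

lemma critical_unique (h : IsExtremal C N M t T S) {β p : κ} (hβ : β ∈ T) {v w : ι}
    (hv : Critical C N M t S β p v) (hw : Critical C N M t S β p w) : v = w := by
  obtain ⟨hvN, -, hpv, R, hR, hβR, hRt, hpR, hRp⟩ := hv
  obtain ⟨hwN, -, hpw, Q, hQ, hβQ, hQt, hpQ, hQp⟩ := hw
  by_contra hvw
  have h1 := surplus_supermodular (N := N) (M := M) R Q
  have h2 := h.surplus_lt hβ (Finset.union_subset hR hQ) (by simp [hβR, hβQ])
  have hRQ : R ∩ Q ⊆ C := Finset.inter_subset_left.trans hR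
  have h3 := h.surplus_lt hβ ((Finset.erase_subset p _).trans hRQ) (by simp [hβR])
  have hp : p ∈ R ∩ Q := Finset.mem_inter.2 ⟨hpR, hpQ⟩
  have h4 : meeting N M ((R ∩ Q).erase p) ⊆ ((meeting N M (R ∩ Q)).erase v).erase w := by
    intro y
    simp only [mem_meeting, Finset.mem_erase, Finset.mem_inter]
    grind
  have h5 := Finset.card_le_card h4
  have hvm : v ∈ meeting N M (R ∩ Q) := mem_meeting.2 ⟨hvN, p, hpv, hp⟩
  have hwm : w ∈ meeting N M (R ∩ Q) := mem_meeting.2 ⟨hwN, p, hpw, hp⟩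
  rw [Finset.card_erase_of_mem (Finset.mem_erase.2 ⟨Ne.symm hvw, hwm⟩),
    Finset.card_erase_of_mem hvm] at h5
  have h6 := Finset.one_lt_card.2 ⟨v, hvm, w, hwm, hvw⟩
  have h7 := Finset.card_pos.2 ⟨p, hp⟩
  simp only [surplus, Finset.card_erase_of_mem hp] at *
  lia

variable {α β : κ} {u : ι}

/-- Moving `u` from `α` to a color of `T` lowers the maximal surplus. -/
lemma surplus_move_lt (h : IsExtremal C N M t T S) (hα : α ∉ S) (hβ : β ∈ T)
    (hu : u ∈ star N M S α) {R : Finset κ} (hR : R ⊆ C) :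
    surplus N (move M u α β) R < t := by
  simp only [star, Finset.mem_filter, Finset.mem_sdiff] at hu
  obtain ⟨⟨huN, huS⟩, -⟩ := hu
  by_contra! hlt
  by_cases hRt : t ≤ surplus N M R
  · have h1 := h.bot_le R hR hRt hβ
    have h2 := SignedVizing.surplus_move_lt (a := α) huN h1
      fun hm => huS (meeting_mono (h.le_top R hR hRt) hm)
    have := h.le R hR
    lia
  · by_cases hc : α ∈ R ∧ β ∉ R ∧ ∀ c ∈ M u, c ∈ R → c = α
    · have h1 := surplus_move_le_add_one (N := N) (M := M) u α β R
      have h2 := surplus_supermodular (N := N) (M := M) R S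
      have h3 := h.surplus_lt hβ (Finset.inter_subset_left.trans hR : R ∩ S ⊆ C) (by simp [hc.2.1])
      have hRS := Finset.union_subset hR h.top_subset
      have h4 : surplus N M (R ∪ S) < t := by
        by_contra! h4
        exact hα (h.le_top _ hRS h4 (Finset.mem_union_left S hc.1))
      have := h.top_eq
      lia
    · have := surplus_move_le (N := N) hc
      lia

lemma false_of_private (h : IsExtremal C N M t T S) (hM2 : ∀ y ∈ N, (M y).card = 2)
    (hβ : β ∈ T) (hα : α ∉ S) (h3 : 3 ≤ (star N M S α).card) (hu : u ∈ star N M S α)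
    {R : Finset κ} (hR : R ⊆ C) (hβR : β ∉ R) (hRt : t ≤ surplus N M R + 2) (hαR : α ∈ R)
    (huR : ∀ c ∈ M u, c ∈ R → c = α) {v : ι} (hv : v ∈ N) (hvu : v ≠ u) {p : κ} (hpv : p ∈ M v)
    (hpR : p ∈ R) (hpS : p ∉ S) (hvR : ∀ c ∈ M v, c ∈ R → c = p) : False := by
  have h1 := surplus_supermodular (N := N) (M := M) R S
  have h2 := h.surplus_lt hβ (Finset.inter_subset_left.trans hR : R ∩ S ⊆ C) (by simp [hβR])
  have hRS := Finset.union_subset hR h.top_subset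
  have h4 : surplus N M (R ∪ S) < t := by
    by_contra! h4
    exact hα (h.le_top _ hRS h4 (Finset.mem_union_left S hαR))
  have h5 := h.top_eq
  have hvS : v ∉ meeting N M S := by
    intro hvS
    have hvm : v ∈ meeting N M R := mem_meeting.2 ⟨hv, p, hpv, hpR⟩
    have hvRS : v ∉ meeting N M (R ∩ S) := by
      simp only [mem_meeting, Finset.mem_inter]
      grind
    have := surplus_supermodular_strict hvm hvS hvRS
    lia
  have hcard : (R \ S).card * 2 + 1 ≤ ∑ c ∈ R \ S, (star N M S c).card := by
    have hα' : α ∈ R \ S := Finset.mem_sdiff.2 ⟨hαR, hα⟩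
    rw [← Finset.add_sum_erase _ _ hα']
    have := Finset.card_nsmul_le_sum ((R \ S).erase α) (fun c => (star N M S c).card) 2
      fun c hc => by
        simp only [Finset.mem_erase, Finset.mem_sdiff] at hc
        exact h.two_le_card_star (hR hc.2.1) hc.2.2
    rw [Finset.card_erase_of_mem hα'] at this
    have hpos := Finset.card_pos.2 ⟨α, hα'⟩
    simp only [smul_eq_mul] at this
    lia
  simp only [star, Finset.mem_filter, Finset.mem_sdiff] at hu
  obtain ⟨⟨huN, huS⟩, huα⟩ := hu
  set Y := meeting N M (R ∪ S) \ meeting N M S with hY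
  have huY : u ∈ Y := Finset.mem_sdiff.2 ⟨mem_meeting.2 ⟨huN, α, huα, by simp [hαR]⟩, huS⟩
  have hvY : v ∈ Y := Finset.mem_sdiff.2 ⟨mem_meeting.2 ⟨hv, p, hpv, by simp [hpR]⟩, hvS⟩
  have hYcard : Y.card + (meeting N M S).card = (meeting N M (R ∪ S)).card :=
    Finset.card_sdiff_add_card_eq_card (meeting_mono Finset.subset_union_right)
  have hsub : meeting N M (R ∪ S) ⊆ N := Finset.filter_subset _ _
  have hsum : ∑ y ∈ N \ meeting N M S, (M y ∩ (R \ S)).card = ∑ y ∈ Y, (M y ∩ (R \ S)).card := by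
    refine (Finset.sum_subset (Finset.sdiff_subset_sdiff hsub le_rfl) ?_).symm
    intro y hy hyY
    simp only [Finset.mem_sdiff, mem_meeting] at hy hyY
    rw [Finset.card_eq_zero, Finset.eq_empty_iff_forall_notMem]
    simp only [Finset.mem_inter, Finset.mem_sdiff, Finset.mem_union] at hyY ⊢
    grind
  have hvY' : v ∈ Y.erase u := Finset.mem_erase.2 ⟨hvu, hvY⟩
  rw [sum_card_star, hsum, ← Finset.add_sum_erase _ _ huY, ← Finset.add_sum_erase _ _ hvY'] at hcard
  have hbound : ∑ y ∈ (Y.erase u).erase v, (M y ∩ (R \ S)).card ≤ ((Y.erase u).erase v).card * 2 :=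
    Finset.sum_le_card_nsmul _ _ _ fun y hy => by
      have hyN : y ∈ N := by
        simp only [hY, Finset.mem_erase, Finset.mem_sdiff, mem_meeting] at hy
        exact hy.2.2.1.1
      exact (Finset.card_le_card Finset.inter_subset_left).trans (hM2 y hyN).le
  have : Nonempty κ := ⟨α⟩
  have hu1 : (M u ∩ (R \ S)).card ≤ 1 := Finset.card_le_one_iff_subset_singleton.2
    ⟨α, fun c hc => by
      simp only [Finset.mem_inter, Finset.mem_sdiff] at hc
      simp [huR c hc.1 hc.2.1]⟩
  have hv1 : (M v ∩ (R \ S)).card ≤ 1 := Finset.card_le_one_iff_subset_singleton.2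
    ⟨p, fun c hc => by
      simp only [Finset.mem_inter, Finset.mem_sdiff] at hc
      simp [hvR c hc.1 hc.2.1]⟩
  rw [Finset.card_erase_of_mem hvY', Finset.card_erase_of_mem huY] at hbound
  have hpos : 1 < Y.card := Finset.one_lt_card.2 ⟨v, hvY, u, huY, hvu⟩
  have hRScard : (R \ S).card + S.card = (R ∪ S).card := Finset.card_sdiff_add_card R S
  simp only [surplus] at h1 h2 h4 h5 hRt
  lia

/-- After moving `u` from `α` to `β ∈ T`, a further move of `p` at `v` still decreases the
potential unless `p` is critical for `v`. -/
lemma potential_move_move_lt (h : IsExtremal C N M t T S) (ht : 1 ≤ t)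
    (hM2 : ∀ y ∈ N, (M y).card = 2)
    (hβ : β ∈ T) (hα : α ∉ S) (h3 : 3 ≤ (star N M S α).card) (hu : u ∈ star N M S α)
    {v : ι} {p : κ} (q : κ) (hv : v ∈ N) (hp : p ∈ move M u α β v) (hvp : ¬(v = u ∧ p = β))
    (hcrit : ¬Critical C N M t S β p v) :
    potential C N (move (move M u α β) v p q) < potential C N M := by
  refine potential_lt_potential ht h.bot_subset h.bot_eq fun R hR hRt => ?_
  have hI := h.surplus_move_lt hα hβ hu hR
  have hF := surplus_move_le_add_one (N := N) (M := move M u α β) v p q R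
  refine ⟨by lia, ?_⟩
  by_contra! hcard
  have hI1 := surplus_move_le_add_one (N := N) (M := M) u α β R
  obtain ⟨hpR, -, hvR⟩ : p ∈ R ∧ q ∉ R ∧ ∀ c ∈ move M u α β v, c ∈ R → c = p := by
    by_contra hc
    have := surplus_move_le (N := N) hc
    lia
  have hu' := hu
  simp only [star, Finset.mem_filter, Finset.mem_sdiff, mem_meeting] at hu'
  obtain ⟨⟨huN, huS⟩, huα⟩ := hu'
  have h1 := surplus_supermodular (N := N) (M := M) R S
  have hRS := Finset.union_subset hR h.top_subset
  have hRS' : R ∩ S ⊆ C := Finset.inter_subset_left.trans hR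
  have h2 := h.top_eq
  by_cases hβR : β ∈ R
  · have hvu : v ≠ u := by
      rintro rfl
      exact hvp ⟨rfl, (hvR β (by simp [move]) hβR).symm⟩
    simp only [move, hvu, if_false] at hp hvR
    have h3 := surplus_move_le (N := N) (M := M) (u := u) (a := α) (b := β) (R := R)
      (by simp [hβR])
    by_cases hfR : t ≤ surplus N M R
    · have hTR := h.bot_le R hR hfR
      have hTR' : T = R := Finset.eq_of_subset_of_card_le hTR hcard
      have hmem : v ∈ meeting N M R := mem_meeting.2 ⟨hv, p, hp, hpR⟩
      have h4 : meeting N M (R.erase p) ⊆ (meeting N M R).erase v := by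
        intro y
        simp only [mem_meeting, Finset.mem_erase]
        grind
      have h5 := Finset.card_le_card h4
      rw [Finset.card_erase_of_mem hmem] at h5
      have h6 : t ≤ surplus N M (R.erase p) := by
        have := Finset.card_pos.2 ⟨p, hpR⟩
        have := Finset.card_pos.2 ⟨v, hmem⟩
        simp only [surplus, Finset.card_erase_of_mem hpR] at hfR ⊢
        lia
      have h7 := h.bot_le _ ((Finset.erase_subset p R).trans hR) h6 (hTR' ▸ hpR)
      simp at h7
    · have hRS2 : ¬R ⊆ S := by
        intro hsub
        have := SignedVizing.surplus_move_lt (M := M) (a := α) huN hβR fun hm =>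
          huS (mem_meeting.1 (meeting_mono hsub hm))
        lia
      have h4 : surplus N M (R ∪ S) < t := by
        by_contra! h4
        exact hRS2 (Finset.subset_union_left.trans (h.le_top _ hRS h4))
      have h5 := h.bot_le (R ∩ S) hRS' (by lia)
      have h6 := Finset.card_lt_card (Finset.ssubset_of_subset_of_ssubset h5
        ⟨Finset.inter_subset_left, fun h' => hRS2 fun a ha => (Finset.mem_inter.1 (h' ha)).2⟩)
      lia
  · have h4 := h.surplus_lt hβ hRS' (by simp [hβR])
    by_cases hc : α ∈ R ∧ β ∉ R ∧ ∀ c ∈ M u, c ∈ R → c = α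
    · have hvu : v ≠ u := by
        rintro rfl
        simp only [move, if_true, Finset.mem_insert, Finset.mem_erase] at hp
        grind
      simp only [move, hvu, if_false] at hp hvR
      have h5 : surplus N M (R ∪ S) < t := by
        by_contra! h5
        exact hα (h.le_top _ hRS h5 (Finset.mem_union_left S hc.1))
      by_cases hpS : p ∈ S
      · exact hcrit ⟨hv, hpS, hp, R ∩ S, hRS', by simp [hβR], by lia, by simp [hpR, hpS],
          fun c hcv hcR => hvR c hcv (Finset.mem_inter.1 hcR).1⟩
      · exact h.false_of_private hM2 hβ hα h3 hu hR hβR (by lia) hc.1 hc.2.2 hv hvu hp hpR hpS hvR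
    · have h5 := surplus_move_le (N := N) hc
      have h6 : R ⊆ S := Finset.subset_union_left.trans (h.le_top _ hRS (by lia))
      have hvu : v ≠ u := by
        rintro rfl
        simp only [move, if_true, Finset.mem_insert, Finset.mem_erase] at hp
        grind
      simp only [move, hvu, if_false] at hp hvR
      exact hcrit ⟨hv, h6 hpR, hp, R, hR, hβR, by lia, hpR, hvR⟩

end IsExtremal

/-- If lists of size two on fewer than `|C|` indices have no system of distinct representatives,
then there are colors `α`, `β` such that moving `α` to `β` at any of three indices, possibly
followed by a second move, decreases the potential, where only one index is excluded from the
second move for each color other than `α` and `β`. -/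
lemma exists_decreasing_moves (hM : ∀ y ∈ N, M y ⊆ C) (hM2 : ∀ y ∈ N, (M y).card = 2)
    (hNC : N.card < C.card) (hN : ¬∃ f : N → κ, Function.Injective f ∧ ∀ y : N, f y ∈ M y) :
    ∃ α ∈ C, ∃ β ∈ C, α ≠ β ∧ ∃ U ⊆ N, 3 ≤ U.card ∧ (∀ u ∈ U, α ∈ M u ∧ β ∉ M u) ∧
      ∃ Bad : κ → ι → Prop, (∀ p v w, Bad p v → Bad p w → v = w) ∧
        (∀ v, ¬Bad α v) ∧ (∀ v, ¬Bad β v) ∧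
        ∀ u ∈ U, potential C N (move M u α β) < potential C N M ∧
          ∀ v ∈ N, ∀ p q, p ∈ move M u α β v → ¬(v = u ∧ p = β) → ¬Bad p v →
            potential C N (move (move M u α β) v p q) < potential C N M := by
  obtain ⟨R, hR, hRlt⟩ := exists_surplus_gt hM hN
  obtain ⟨t, T, S, h⟩ := exists_isExtremal C N M
  have htN := hRlt.trans_le (h.le R hR)
  obtain ⟨α, hαC, hαS, h3⟩ := h.exists_three_le_card_star hM hM2 htN
  have ht : 1 ≤ t := by lia
  obtain ⟨β, hβ⟩ : T.Nonempty := by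
    rw [Finset.nonempty_iff_ne_empty]
    rintro rfl
    have := h.bot_eq
    simp only [surplus, Finset.card_empty] at this
    lia
  have hβS : β ∈ S := h.bot_le S h.top_subset h.top_eq.ge hβ
  refine ⟨α, hαC, β, h.bot_subset hβ, fun hαβ => hαS (hαβ ▸ hβS), star N M S α,
    (Finset.filter_subset _ _).trans Finset.sdiff_subset, h3, ?_,
    IsExtremal.Critical C N M t S β, fun p v w => h.critical_unique hβ,
    fun v hv => hαS hv.2.1, ?_, fun u hu => ⟨?_, ?_⟩⟩
  · intro u hu
    simp only [star, Finset.mem_filter, Finset.mem_sdiff, mem_meeting] at hu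
    grind
  · rintro v ⟨-, -, -, R, -, hβR, -, hR, -⟩
    exact hβR hR
  · refine potential_lt_potential ht h.bot_subset h.bot_eq fun R hR hRt => ?_
    exact absurd (h.surplus_move_lt hαS hβ hu hR) (not_lt.2 hRt)
  · exact fun v hv p q hp hvp hbad =>
      h.potential_move_move_lt ht hM2 hβ hαS h3 hu q hv hp hvp hbad

end SetSystems

open Classical in
/-- In a graph of maximum degree at most two, a component has at most two vertices of degree at
most one. -/
lemma false_of_three_ends {W : Type*} [Fintype W] {K : SimpleGraph W}
    (h2 : ∀ v, K.degree v ≤ 2) {a b c : W} (hab : a ≠ b) (hac : a ≠ c) (hbc : b ≠ c)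
    (ha : K.degree a ≤ 1) (hb : K.degree b ≤ 1) (hc : K.degree c ≤ 1)
    (hrb : K.Reachable a b) (hrc : K.Reachable a c) : False := by
  set D := K.connectedComponentMk a with hD
  have hconn := D.connected_toSimpleGraph.card_vert_le_card_edgeSet_add_one
  have hsum := D.toSimpleGraph.sum_degrees_eq_twice_card_edges
  have hdeg : ∀ v : D, D.toSimpleGraph.degree v ≤ K.degree v := by
    intro v
    refine Finset.card_le_card_of_injOn Subtype.val (fun w hw => ?_) Subtype.val_injective.injOn
    simp only [Finset.mem_coe, SimpleGraph.mem_neighborFinset] at hw ⊢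
    exact hw
  let a' : D := ⟨a, rfl⟩
  let b' : D := ⟨b, SimpleGraph.ConnectedComponent.sound hrb.symm⟩
  let c' : D := ⟨c, SimpleGraph.ConnectedComponent.sound hrc.symm⟩
  have hbound : ∑ v : D, (D.toSimpleGraph.degree v +
      if v ∈ ({a', b', c'} : Finset D) then 1 else 0) ≤ Fintype.card D * 2 := by
    refine Finset.sum_le_card_nsmul _ _ _ fun v _ => ?_
    have hv := hdeg v
    split_ifs with hv'
    · simp only [Finset.mem_insert, Finset.mem_singleton] at hv'
      rcases hv' with rfl | rfl | rfl <;> simp only [a', b', c'] at hv ⊢ <;> lia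
    · exact hv.trans (h2 v)
  rw [Finset.sum_add_distrib, hsum, Finset.sum_ite_mem, Finset.univ_inter, Finset.sum_const,
    Finset.card_eq_three.2 ⟨a', b', c', fun h => hab (congrArg Subtype.val h),
      fun h => hac (congrArg Subtype.val h), fun h => hbc (congrArg Subtype.val h), rfl⟩] at hbound
  simp only [Nat.card_eq_fintype_card, SimpleGraph.edgeFinset_card, smul_eq_mul] at *
  lia

section ColorSwap

/-- The involution of the colors exchanging `α` with `β` and `-α` with `-β`. -/
def swap (α β a : ℤ) : ℤ :=
  if a = α then β else if a = β then α else if a = -α then -β else if a = -β then -α else a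

/-- The colors that `swap α β` may move. -/
def Swappable (α β a : ℤ) : Prop := a = α ∨ a = β ∨ a = -α ∨ a = -β

/-- The classes of swappable colors that `swap α β` preserves: `true` for `α` and `β`. -/
def side (α β a : ℤ) : Bool := decide (a = α ∨ a = β)

variable {α β : ℤ}

lemma swap_neg (hα : α ≠ 0) (hβ : β ≠ 0) (a : ℤ) : swap α β (-a) = -swap α β a := by
  unfold swap; split_ifs <;> lia

lemma swap_swap (hα : α ≠ 0) (hβ : β ≠ 0) (a : ℤ) : swap α β (swap α β a) = a := by
  unfold swap; split_ifs <;> lia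

lemma swappable_neg {a : ℤ} : Swappable α β (-a) ↔ Swappable α β a := by
  unfold Swappable; lia

lemma swappable_swap {a : ℤ} (ha : Swappable α β a) : Swappable α β (swap α β a) := by
  unfold Swappable swap at *; split_ifs <;> lia

lemma side_swap (hα : α ≠ 0) (hβ : β ≠ 0) {a : ℤ} (ha : Swappable α β a) :
    side α β (swap α β a) = side α β a := by
  unfold Swappable at ha
  unfold side swap
  rw [decide_eq_decide]
  split_ifs <;> lia

lemma eq_or_eq_swap_of_side_eq {a b : ℤ} (ha : Swappable α β a) (hb : Swappable α β b)
    (h : side α β a = side α β b) : b = a ∨ b = swap α β a := by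
  unfold Swappable at ha hb
  unfold side at h
  rw [decide_eq_decide] at h
  unfold swap
  split_ifs <;> lia

lemma swap_mem_Mset {n : ℕ} (hα : α ∈ Mset n) (hβ : β ∈ Mset n) {a : ℤ} (ha : a ∈ Mset n) :
    swap α β a ∈ Mset n := by
  have hneg : ∀ b ∈ Mset n, -b ∈ Mset n := fun b hb => by simpa [Mset] using hb
  unfold swap
  split_ifs
  exacts [hβ, hα, hneg β hβ, hneg α hα, ha]

open Classical in
/-- Apply `swap α β` to the color `a` at `v` if the class of `a` at `v` belongs to `K`. -/
noncomputable def swapOn {V : Type*} (α β : ℤ) (K : Set (V × Bool)) (v : V) (a : ℤ) : ℤ :=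
  if Swappable α β a ∧ (v, side α β a) ∈ K then swap α β a else a

lemma swapOn_swapOn {V : Type*} (hα : α ≠ 0) (hβ : β ≠ 0) (K : Set (V × Bool)) (v : V) (a : ℤ) :
    swapOn α β K v (swapOn α β K v a) = a := by
  by_cases h : Swappable α β a ∧ (v, side α β a) ∈ K
  · have h' : swapOn α β K v a = swap α β a := if_pos h
    rw [h', swapOn, if_pos, swap_swap hα hβ]
    rw [side_swap hα hβ h.1]
    exact ⟨swappable_swap h.1, h.2⟩
  · have h' : swapOn α β K v a = a := if_neg h
    rw [h', h']

lemma swapOn_injective {V : Type*} (hα : α ≠ 0) (hβ : β ≠ 0) (K : Set (V × Bool)) (v : V) :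
    Function.Injective (swapOn α β K v) :=
  Function.Involutive.injective (swapOn_swapOn hα hβ K v)

lemma swapOn_mem_Mset {V : Type*} {n : ℕ} (hα : α ∈ Mset n) (hβ : β ∈ Mset n)
    (K : Set (V × Bool)) (v : V) {a : ℤ} (ha : a ∈ Mset n) : swapOn α β K v a ∈ Mset n := by
  unfold swapOn
  split_ifs
  exacts [swap_mem_Mset hα hβ ha, ha]

end ColorSwap

section Chains

variable {V : Type*} {H : SimpleGraph V} {σ : Sym2 V → ℤ} {n : ℕ}

/-- The graph of Kempe chains: a vertex is split into the two color classes at it, and the edges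
of `H` with swappable colors join the corresponding classes. -/
def chainGraph (c : SColoring H σ n) (α β : ℤ) : SimpleGraph (V × Bool) where
  Adj a b := H.Adj a.1 b.1 ∧
    (Swappable α β (c.col a.1 s(a.1, b.1)) ∧ side α β (c.col a.1 s(a.1, b.1)) = a.2) ∧
    (Swappable α β (c.col b.1 s(a.1, b.1)) ∧ side α β (c.col b.1 s(a.1, b.1)) = b.2)
  symm := ⟨fun a b h => by
    rw [Sym2.eq_swap]
    exact ⟨h.1.symm, h.2.2, h.2.1⟩⟩
  loopless := ⟨fun a h => H.loopless.irrefl _ h.1⟩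

variable {c : SColoring H σ n} {α β : ℤ}

/-- Swapping colors along a union of Kempe chains yields a proper coloring. -/
lemma exists_swapColoring (hσ : ∀ v w, H.Adj v w → σ s(v, w) = 1 ∨ σ s(v, w) = -1)
    (hc : c.Proper) (hα : α ∈ Mset n) (hβ : β ∈ Mset n) (hα0 : α ≠ 0) (hβ0 : β ≠ 0)
    {K : Set (V × Bool)} (hK : ∀ a b, (chainGraph c α β).Adj a b → (a ∈ K ↔ b ∈ K)) :
    ∃ c' : SColoring H σ n, c'.Proper ∧
      ∀ v a, c.Absent a v → c'.Absent (swapOn α β K v a) v := by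
  refine ⟨⟨fun v e => swapOn α β K v (c.col v e),
    fun v w h => swapOn_mem_Mset hα hβ K v (c.mem_colors h), fun v w h => ?_⟩, ?_, ?_⟩
  · have hcomp := c.compat h
    have hsig := hσ v w h
    have hsw : Swappable α β (c.col v s(v, w)) ↔ Swappable α β (c.col w s(v, w)) := by
      rcases hsig with hs | hs <;> simp [hcomp, hs, swappable_neg]
    have hiff : (Swappable α β (c.col v s(v, w)) ∧ (v, side α β (c.col v s(v, w))) ∈ K) ↔
        (Swappable α β (c.col w s(v, w)) ∧ (w, side α β (c.col w s(v, w))) ∈ K) := by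
      by_cases hQ : Swappable α β (c.col v s(v, w))
      · have := hK (v, side α β (c.col v s(v, w))) (w, side α β (c.col w s(v, w)))
          ⟨h, ⟨hQ, rfl⟩, ⟨hsw.1 hQ, rfl⟩⟩
        rw [this, hsw]
      · simp [hQ, ← hsw]
    change swapOn α β K v (c.col v s(v, w)) = -σ s(v, w) * swapOn α β K w (c.col w s(v, w))
    unfold swapOn
    by_cases hin : Swappable α β (c.col v s(v, w)) ∧ (v, side α β (c.col v s(v, w))) ∈ K
    · rw [if_pos hin, if_pos (hiff.1 hin)]
      rcases hsig with hs | hs <;> simp [hcomp, hs, swap_neg hα0 hβ0]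
    · rwa [if_neg hin, if_neg (mt hiff.2 hin)]
  · intro v w z hw hz hwz heq
    exact hc hw hz hwz (swapOn_injective hα0 hβ0 K v heq)
  · intro v a ha w hw heq
    exact ha hw (swapOn_injective hα0 hβ0 K v heq)

/-- The colors in a class. -/
def palette (α β : ℤ) (s : Bool) : Finset ℤ := if s then {α, β} else {-α, -β}

lemma mem_palette {a : ℤ} (ha : Swappable α β a) : a ∈ palette α β (side α β a) := by
  unfold Swappable at ha
  by_cases h : a = α ∨ a = β
  · simp [palette, side, h]
  · simp only [palette, side, h, decide_false, Bool.false_eq_true, if_false, Finset.mem_insert,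
      Finset.mem_singleton]
    lia

lemma card_palette_le (s : Bool) : (palette α β s).card ≤ 2 := by
  unfold palette; split_ifs <;> exact Finset.card_le_two

open Classical in
lemma degree_chainGraph_le [Fintype V] (hc : c.Proper) {A : Finset ℤ} {v : V} {s : Bool}
    (hA : ∀ w, H.Adj v w → Swappable α β (c.col v s(v, w)) → side α β (c.col v s(v, w)) = s →
      c.col v s(v, w) ∈ A) : (chainGraph c α β).degree (v, s) ≤ A.card := by
  refine Finset.card_le_card_of_injOn (fun b => c.col v s(v, b.1)) (fun b hb => ?_) ?_
  · simp only [Finset.mem_coe, SimpleGraph.mem_neighborFinset] at hb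
    exact hA b.1 hb.1 hb.2.1.1 hb.2.1.2
  · intro b hb d hd hbd
    simp only [Finset.mem_coe, SimpleGraph.mem_neighborFinset] at hb hd
    have h1 : b.1 = d.1 := by
      by_contra hne
      exact hc hb.1 hd.1 hne hbd
    refine Prod.ext h1 ?_
    have h2 := hb.2.2.2
    have h3 := hd.2.2.2
    dsimp only at h2 h3
    rw [← h2, ← h3, h1]

open Classical in
lemma degree_chainGraph_le_two [Fintype V] (hc : c.Proper) (a : V × Bool) :
    (chainGraph c α β).degree a ≤ 2 :=
  (degree_chainGraph_le hc fun _ _ h hs => hs ▸ mem_palette h).trans (card_palette_le a.2)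

open Classical in
lemma degree_chainGraph_le_one [Fintype V] (hc : c.Proper) {v : V} {a : ℤ}
    (ha : Swappable α β a) (hav : c.Absent a v) :
    (chainGraph c α β).degree (v, side α β a) ≤ 1 := by
  refine (degree_chainGraph_le (A := (palette α β (side α β a)).erase a) hc
    fun w hw h hs => Finset.mem_erase.2 ⟨hav hw, by rw [← hs]; exact mem_palette h⟩).trans ?_
  rw [Finset.card_erase_of_mem (mem_palette ha)]
  have := card_palette_le (α := α) (β := β) (side α β a)
  lia

end Chains

section Listings

/-- The signed color set as a finset. -/
noncomputable def colors (n : ℕ) : Finset ℤ :=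
  (Finset.Icc (-(n : ℤ)) n).filter fun a => 2 * a.natAbs ≤ n ∧ (a = 0 → Odd n)

lemma mem_colors {n : ℕ} {a : ℤ} : a ∈ colors n ↔ a ∈ Mset n := by
  simp only [colors, Mset, Finset.mem_filter, Finset.mem_Icc, Set.mem_ofPred_eq,
    and_iff_right_iff_imp]
  lia

variable {V : Type*} {H : SimpleGraph V} {σ : Sym2 V → ℤ} {n : ℕ}

/-- Lists of two colors at the vertices of `N`. Seen from the vertex, each is absent in `c`, where
the sign `ε y` relates the two ends of an edge that is to be colored at `y`. -/
structure IsListing (c : SColoring H σ n) (N : Finset V) (ε : V → ℤ) (M : V → Finset ℤ) :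
    Prop where
  proper : c.Proper
  card : ∀ y ∈ N, (M y).card = 2
  subset : ∀ y ∈ N, M y ⊆ colors n
  absent : ∀ y ∈ N, ∀ a ∈ M y, c.Absent (ε y * a) y

/-- The lists that result from swapping colors on `K`. -/
noncomputable def swapLists (α β : ℤ) (ε : V → ℤ) (K : Set (V × Bool)) (M : V → Finset ℤ) (y : V) :
    Finset ℤ :=
  (M y).image fun a => ε y * swapOn α β K y (ε y * a)

/-- The color `a` in the list at `y` is replaced by one not in the list. -/
def Moved (α β : ℤ) (ε : V → ℤ) (K : Set (V × Bool)) (M : V → Finset ℤ) (y : V) (a : ℤ) : Prop :=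
  a ∈ M y ∧ Swappable α β a ∧ (y, side α β (ε y * a)) ∈ K ∧ swap α β a ∉ M y

variable {c : SColoring H σ n} {N : Finset V} {ε : V → ℤ} {M : V → Finset ℤ} {α β : ℤ}
  {K : Set (V × Bool)}

lemma swappable_sign_mul {e a : ℤ} (he : e = 1 ∨ e = -1) :
    Swappable α β (e * a) ↔ Swappable α β a := by
  rcases he with rfl | rfl <;> simp [swappable_neg]

lemma swap_sign_mul {e a : ℤ} (hα : α ≠ 0) (hβ : β ≠ 0) (he : e = 1 ∨ e = -1) :
    swap α β (e * a) = e * swap α β a := by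
  rcases he with rfl | rfl <;> simp [swap_neg hα hβ]

lemma sign_mul_sign_mul {e : ℤ} (he : e = 1 ∨ e = -1) (a : ℤ) : e * (e * a) = a := by
  rcases he with rfl | rfl <;> simp

lemma sign_mul_mem_Mset {e a : ℤ} (he : e = 1 ∨ e = -1) (ha : a ∈ Mset n) : e * a ∈ Mset n := by
  rcases he with rfl | rfl <;> simpa [Mset] using ha

lemma IsListing.exists_swapLists (h : IsListing c N ε M)
    (hσ : ∀ v w, H.Adj v w → σ s(v, w) = 1 ∨ σ s(v, w) = -1)
    (hε : ∀ y ∈ N, ε y = 1 ∨ ε y = -1) (hα : α ∈ Mset n) (hβ : β ∈ Mset n) (hα0 : α ≠ 0)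
    (hβ0 : β ≠ 0) (hK : ∀ a b, (chainGraph c α β).Adj a b → (a ∈ K ↔ b ∈ K)) :
    ∃ c' : SColoring H σ n, IsListing c' N ε (swapLists α β ε K M) := by
  obtain ⟨c', hc', habs⟩ := exists_swapColoring hσ h.proper hα hβ hα0 hβ0 hK
  refine ⟨c', hc', fun y hy => ?_, fun y hy => ?_, fun y hy => ?_⟩
  · rw [swapLists, Finset.card_image_of_injective, h.card y hy]
    intro a b hab
    have h1 := congrArg (ε y * ·) hab
    simp only [sign_mul_sign_mul (hε y hy)] at h1
    have h2 := congrArg (ε y * ·) (swapOn_injective hα0 hβ0 K y h1)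
    simpa only [sign_mul_sign_mul (hε y hy)] using h2
  · intro b hb
    obtain ⟨a, ha, rfl⟩ := Finset.mem_image.1 hb
    rw [mem_colors]
    refine sign_mul_mem_Mset (hε y hy) (swapOn_mem_Mset hα hβ K y (sign_mul_mem_Mset (hε y hy) ?_))
    exact mem_colors.1 (h.subset y hy ha)
  · intro b hb
    obtain ⟨a, ha, rfl⟩ := Finset.mem_image.1 hb
    rw [sign_mul_sign_mul (hε y hy)]
    exact habs y _ (h.absent y hy a ha)

lemma mem_swapLists (hα0 : α ≠ 0) (hβ0 : β ≠ 0) {y : V} (hε : ε y = 1 ∨ ε y = -1) {b : ℤ} :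
    b ∈ swapLists α β ε K M y ↔
      (b ∈ M y ∧ ¬Moved α β ε K M y b) ∨ ∃ a, Moved α β ε K M y a ∧ swap α β a = b := by
  have hval : ∀ a, (Swappable α β a ∧ (y, side α β (ε y * a)) ∈ K ∧
      ε y * swapOn α β K y (ε y * a) = swap α β a) ∨
      (¬(Swappable α β a ∧ (y, side α β (ε y * a)) ∈ K) ∧
        ε y * swapOn α β K y (ε y * a) = a) := by
    intro a
    unfold swapOn
    rw [swappable_sign_mul hε, swap_sign_mul hα0 hβ0 hε]
    by_cases h : Swappable α β a ∧ (y, side α β (ε y * a)) ∈ K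
    · rw [if_pos h, sign_mul_sign_mul hε]; exact Or.inl ⟨h.1, h.2, rfl⟩
    · rw [if_neg h, sign_mul_sign_mul hε]; exact Or.inr ⟨h, rfl⟩
  have hsw := swap_swap hα0 hβ0
  have hmem : ∀ a, Swappable α β a ∧ (y, side α β (ε y * a)) ∈ K →
      Swappable α β (swap α β a) ∧ (y, side α β (ε y * swap α β a)) ∈ K := by
    rintro a ⟨h1, h2⟩
    rw [← swap_sign_mul hα0 hβ0 hε, side_swap hα0 hβ0 ((swappable_sign_mul hε).2 h1)]
    exact ⟨swappable_swap h1, h2⟩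
  simp only [swapLists, Finset.mem_image, Moved]
  constructor
  · rintro ⟨a, ha, rfl⟩
    rcases hval a with ⟨h1, h2, h3⟩ | ⟨h1, h3⟩
    · rw [h3]
      by_cases h4 : swap α β a ∈ M y
      · refine Or.inl ⟨h4, fun h5 => ?_⟩
        rw [hsw] at h5
        exact h5.2.2.2 ha
      · exact Or.inr ⟨a, ⟨ha, h1, h2, h4⟩, rfl⟩
    · rw [h3]
      exact Or.inl ⟨ha, fun h5 => h1 ⟨h5.2.1, h5.2.2.1⟩⟩
  · rintro (⟨hb, hnb⟩ | ⟨a, ⟨ha, h1, h2, -⟩, rfl⟩)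
    · rcases hval b with ⟨h1, h2, h3⟩ | ⟨h1, h3⟩
      · have h4 : swap α β b ∈ M y := by
          by_contra h4
          exact hnb ⟨hb, h1, h2, h4⟩
        refine ⟨_, h4, ?_⟩
        rcases hval (swap α β b) with ⟨h5, h6, h7⟩ | ⟨h5, h7⟩
        · rw [h7, hsw]
        · exact absurd (hmem b ⟨h1, h2⟩) h5
      · exact ⟨b, hb, h3⟩
    · refine ⟨a, ha, ?_⟩
      rcases hval a with ⟨-, -, h3⟩ | ⟨h3, -⟩
      · exact h3
      · exact absurd ⟨h1, h2⟩ h3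

lemma Moved.eq_of_side_eq {y : V} {a b : ℤ} (hα0 : α ≠ 0) (hβ0 : β ≠ 0) (hε : ε y = 1 ∨ ε y = -1)
    (ha : Moved α β ε K M y a) (hb : Moved α β ε K M y b)
    (h : side α β (ε y * a) = side α β (ε y * b)) : a = b := by
  rcases eq_or_eq_swap_of_side_eq ((swappable_sign_mul hε).2 ha.2.1)
    ((swappable_sign_mul hε).2 hb.2.1) h with h | h
  · have := congrArg (ε y * ·) h
    simpa only [sign_mul_sign_mul hε, eq_comm] using this
  · rw [swap_sign_mul hα0 hβ0 hε] at h
    have := congrArg (ε y * ·) h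
    simp only [sign_mul_sign_mul hε] at this
    exact absurd (this ▸ hb.1) ha.2.2.2

variable [DecidableEq V] {u v : V} {p : ℤ}

lemma swapLists_eq_move (hα0 : α ≠ 0) (hβ0 : β ≠ 0) (hε : ∀ y ∈ N, ε y = 1 ∨ ε y = -1)
    (hM : ∀ y ∈ N, ∀ a, Moved α β ε K M y a ↔ y = u ∧ a = α) :
    ∀ y ∈ N, swapLists α β ε K M y = move M u α β y := by
  intro y hy
  ext b
  simp only [mem_swapLists hα0 hβ0 (hε y hy), hM y hy, move]
  have : swap α β α = β := if_pos rfl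
  grind

lemma swapLists_eq_move_move (hα0 : α ≠ 0) (hβ0 : β ≠ 0) (hε : ∀ y ∈ N, ε y = 1 ∨ ε y = -1)
    (hβu : β ∉ M u) (hp : p ∈ M v)
    (hM : ∀ y ∈ N, ∀ a, Moved α β ε K M y a ↔ (y = u ∧ a = α) ∨ (y = v ∧ a = p)) :
    ∀ y ∈ N, swapLists α β ε K M y = move (move M u α β) v p (swap α β p) y := by
  intro y hy
  ext b
  simp only [mem_swapLists hα0 hβ0 (hε y hy), hM y hy, move]
  have : swap α β α = β := if_pos rfl
  grind

end Listings

section Step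

variable {V : Type*} [Fintype V] {H : SimpleGraph V} {σ : Sym2 V → ℤ} {n : ℕ}
  {c : SColoring H σ n} {N : Finset V} {ε : V → ℤ} {M : V → Finset ℤ} {α β : ℤ}

/-- The Kempe chain at the vertex `y` starting with the color `a` seen from the far end. -/
def chain (c : SColoring H σ n) (α β : ℤ) (ε : V → ℤ) (y : V) (a : ℤ) : Set (V × Bool) :=
  {b | (chainGraph c α β).Reachable (y, side α β (ε y * a)) b}

lemma IsListing.not_three_moved (h : IsListing c N ε M) (hε : ∀ y ∈ N, ε y = 1 ∨ ε y = -1)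
    {K₁ K₂ K₃ : Set (V × Bool)} {y₁ y₂ y₃ : V} {a₁ a₂ a₃ : ℤ} (hy₁ : y₁ ∈ N) (hy₂ : y₂ ∈ N)
    (hy₃ : y₃ ∈ N) (h₁ : Moved α β ε K₁ M y₁ a₁) (h₂ : Moved α β ε K₂ M y₂ a₂)
    (h₃ : Moved α β ε K₃ M y₃ a₃) (hα0 : α ≠ 0) (hβ0 : β ≠ 0) (h₁₂ : ¬(y₁ = y₂ ∧ a₁ = a₂))
    (h₁₃ : ¬(y₁ = y₃ ∧ a₁ = a₃)) (h₂₃ : ¬(y₂ = y₃ ∧ a₂ = a₃))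
    (hr₂ : (y₂, side α β (ε y₂ * a₂)) ∈ chain c α β ε y₁ a₁)
    (hr₃ : (y₃, side α β (ε y₃ * a₃)) ∈ chain c α β ε y₁ a₁) : False := by
  classical
  have hdeg : ∀ {K : Set (V × Bool)} {y : V} {a : ℤ}, y ∈ N → Moved α β ε K M y a →
      (chainGraph c α β).degree (y, side α β (ε y * a)) ≤ 1 := fun hy hm =>
    degree_chainGraph_le_one h.proper ((swappable_sign_mul (hε _ hy)).2 hm.2.1)
      (h.absent _ hy _ hm.1)
  have hne : ∀ {K K' : Set (V × Bool)} {y z : V} {a b : ℤ}, y ∈ N → Moved α β ε K M y a →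
      Moved α β ε K' M z b → ¬(y = z ∧ a = b) →
      (y, side α β (ε y * a)) ≠ (z, side α β (ε z * b)) := by
    intro K K' y z a b hy ha hb hab heq
    obtain ⟨rfl, hs⟩ := Prod.mk.injEq _ _ _ _ ▸ heq
    refine hab ⟨rfl, Moved.eq_of_side_eq (K := Set.univ) hα0 hβ0 (hε _ hy)
      ⟨ha.1, ha.2.1, trivial, ha.2.2.2⟩ ⟨hb.1, hb.2.1, trivial, hb.2.2.2⟩ hs⟩
  exact false_of_three_ends (degree_chainGraph_le_two h.proper) (hne hy₁ h₁ h₂ h₁₂)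
    (hne hy₁ h₁ h₃ h₁₃) (hne hy₂ h₂ h₃ h₂₃) (hdeg hy₁ h₁) (hdeg hy₂ h₂) (hdeg hy₃ h₃) hr₂ hr₃

variable [DecidableEq V]

/-- If the lists have no system of distinct representatives, then swapping colors along a suitable
Kempe chain decreases the potential. -/
lemma IsListing.exists_potential_lt (h : IsListing c N ε M) (hn : Even n)
    (hσ : ∀ v w, H.Adj v w → σ s(v, w) = 1 ∨ σ s(v, w) = -1)
    (hε : ∀ y ∈ N, ε y = 1 ∨ ε y = -1) (hNC : N.card < (colors n).card)
    (hN : ¬∃ f : N → ℤ, Function.Injective f ∧ ∀ y : N, f y ∈ M y) :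
    ∃ (c' : SColoring H σ n) (M' : V → Finset ℤ), IsListing c' N ε M' ∧
      potential (colors n) N M' < potential (colors n) N M := by
  obtain ⟨α, hαC, β, hβC, hαβ, U, hUN, hU3, hU, Bad, hBad, hBadα, hBadβ, hdec⟩ :=
    exists_decreasing_moves h.subset h.card hNC hN
  rw [mem_colors] at hαC hβC
  have hne0 : ∀ a ∈ Mset n, a ≠ 0 := fun a ha h0 => Nat.not_odd_iff_even.2 hn (ha.2 h0)
  have hα0 := hne0 α hαC
  have hβ0 := hne0 β hβC
  by_contra! hcon
  have hstuck : ∀ u ∈ U, potential (colors n) N M ≤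
      potential (colors n) N (swapLists α β ε (chain c α β ε u α) M) := by
    intro u _
    obtain ⟨c', hc'⟩ := h.exists_swapLists hσ hε hαC hβC hα0 hβ0 (K := chain c α β ε u α)
      fun a b hab => ⟨fun ha => ha.trans hab.reachable, fun hb => hb.trans hab.symm.reachable⟩
    exact hcon c' _ hc'
  have hself : ∀ u ∈ U, Moved α β ε (chain c α β ε u α) M u α := by
    intro u hu
    refine ⟨(hU u hu).1, Or.inl rfl, SimpleGraph.Reachable.refl _, ?_⟩
    rw [show swap α β α = β from if_pos rfl]
    exact (hU u hu).2
  have hpartner : ∀ u ∈ U, ∃ v ∈ N, ∃ p, Moved α β ε (chain c α β ε u α) M v p ∧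
      ¬(v = u ∧ p = α) ∧ Bad p v := by
    intro u hu
    by_contra! hgood
    obtain ⟨hdec1, hdec2⟩ := hdec u hu
    by_cases hex : ∃ v ∈ N, ∃ p, Moved α β ε (chain c α β ε u α) M v p ∧ ¬(v = u ∧ p = α)
    · obtain ⟨v, hv, p, hp, hvp⟩ := hex
      have hnb : ¬Bad p v := hgood v hv p hp fun h1 h2 => hvp ⟨h1, h2⟩
      have heq := swapLists_eq_move_move (K := chain c α β ε u α) (u := u) hα0 hβ0 hε
        (hU u hu).2 hp.1 fun y hy a => by
          constructor
          · intro hya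
            by_contra hno
            rw [not_or] at hno
            exact h.not_three_moved hε (hUN hu) hv hy (hself u hu) hp hya hα0 hβ0
              (fun h => hvp ⟨h.1.symm, h.2.symm⟩) (fun h => hno.1 ⟨h.1.symm, h.2.symm⟩)
              (fun h => hno.2 ⟨h.1.symm, h.2.symm⟩) hp.2.2.1 hya.2.2.1
          · rintro (⟨rfl, rfl⟩ | ⟨rfl, rfl⟩)
            exacts [hself y hu, hp]
      have hlt := hdec2 v hv p (swap α β p)
        (by
          have := hp.1
          simp only [move]
          grind)
        (by
          rintro ⟨rfl, rfl⟩
          exact (hU v hu).2 hp.1) hnb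
      rw [← potential_congr heq] at hlt
      exact absurd hlt (not_lt.2 (hstuck u hu))
    · push Not at hex
      have heq := swapLists_eq_move (K := chain c α β ε u α) (u := u) hα0 hβ0 hε
        fun y hy a => by
          constructor
          · intro hya
            by_contra hno
            exact hno (hex y hy a hya)
          · rintro ⟨rfl, rfl⟩
            exact hself y hu
      rw [← potential_congr heq] at hdec1
      exact absurd hdec1 (not_lt.2 (hstuck u hu))
  choose! v hv p hp hvp hbad using hpartner
  have hmaps : ∀ u ∈ U, p u ∈ ({-α, -β} : Finset ℤ) := by
    intro u hu
    have h1 : p u ≠ α := fun h1 => hBadα _ (h1 ▸ hbad u hu)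
    have h2 : p u ≠ β := fun h2 => hBadβ _ (h2 ▸ hbad u hu)
    have h3 := (hp u hu).2.1
    unfold Swappable at h3
    simp only [Finset.mem_insert, Finset.mem_singleton]
    tauto
  obtain ⟨u, hu, w, hw, huw, hpuw⟩ := Finset.exists_ne_map_eq_of_card_lt_of_maps_to
    (lt_of_le_of_lt Finset.card_le_two hU3) hmaps
  have hvuw : v u = v w := hBad (p u) _ _ (hbad u hu) (hpuw ▸ hbad w hw)
  have hpw := hp w hw
  have hvpw := hvp w hw
  rw [← hvuw, ← hpuw] at hpw hvpw
  have hru := (hp u hu).2.2.1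
  have hrw := hpw.2.2.1
  exact h.not_three_moved hε (hv u hu) (hUN hu) (hUN hw) (hp u hu) (hself u hu) (hself w hw)
    hα0 hβ0 (hvp u hu) hvpw (fun h => huw h.1) hru.symm hrw.symm

/-- Some coloring of `H` has lists with a system of distinct representatives. -/
lemma IsListing.exists_injective (h : IsListing c N ε M) (hn : Even n)
    (hσ : ∀ v w, H.Adj v w → σ s(v, w) = 1 ∨ σ s(v, w) = -1)
    (hε : ∀ y ∈ N, ε y = 1 ∨ ε y = -1) (hNC : N.card < (colors n).card) :
    ∃ (c' : SColoring H σ n) (f : V → ℤ), c'.Proper ∧ Set.InjOn f N ∧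
      ∀ y ∈ N, f y ∈ Mset n ∧ c'.Absent (ε y * f y) y := by
  induction hk : potential (colors n) N M using Nat.strong_induction_on generalizing c M with
  | _ k ih =>
    by_cases hN : ∃ f : N → ℤ, Function.Injective f ∧ ∀ y : N, f y ∈ M y
    · obtain ⟨f, hf, hfM⟩ := hN
      have hg : ∀ y (hy : y ∈ N), (fun y => if hy : y ∈ N then f ⟨y, hy⟩ else 0) y = f ⟨y, hy⟩ :=
        fun y hy => dif_pos hy
      refine ⟨c, fun y => if hy : y ∈ N then f ⟨y, hy⟩ else 0, h.proper, ?_, fun y hy => ?_⟩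
      · intro y hy z hz hyz
        rw [hg y hy, hg z hz] at hyz
        exact congrArg Subtype.val (hf hyz)
      · rw [hg y hy]
        exact ⟨mem_colors.1 (h.subset y hy (hfM ⟨y, hy⟩)), h.absent y hy _ (hfM ⟨y, hy⟩)⟩
    · obtain ⟨c', M', h', hlt⟩ := h.exists_potential_lt hn hσ hε hNC hN
      exact ih _ (hk ▸ hlt) h' rfl

end Step

section Extension

lemma card_colors (n : ℕ) : (colors n).card = n := by
  obtain ⟨k, rfl | rfl⟩ := Nat.even_or_odd' n
  · have h : colors (2 * k) = (Finset.Icc (-(k : ℤ)) k).erase 0 := by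
      ext a
      simp only [colors, Finset.mem_filter, Finset.mem_Icc, Finset.mem_erase, ← Nat.not_even_iff_odd,
        even_two_mul, not_true_eq_false]
      lia
    rw [h, Finset.card_erase_of_mem (by simp), Int.card_Icc]
    lia
  · have h : colors (2 * k + 1) = Finset.Icc (-(k : ℤ)) k := by
      ext a
      have : Odd (2 * k + 1) := odd_two_mul_add_one k
      simp only [colors, Finset.mem_filter, Finset.mem_Icc, this, implies_true, and_true]
      lia
    rw [h, Int.card_Icc]
    lia

variable {V : Type*} [DecidableEq V] {G H : SimpleGraph V} {σ : Sym2 V → ℤ} {n : ℕ}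

/-- A coloring of the graph without `x` extends to `G` if the edges at `x` can be given
distinct colors that are absent at their other ends. -/
lemma exists_extension {x : V} (hH : ∀ v w, H.Adj v w ↔ G.Adj v w ∧ v ≠ x ∧ w ≠ x)
    (hσ : ∀ v w, G.Adj v w → σ s(v, w) = 1 ∨ σ s(v, w) = -1)
    {c : SColoring H σ n} (hc : c.Proper) {f : V → ℤ} (hf : ∀ y z, G.Adj x y → G.Adj x z →
      f y = f z → y = z)
    (hfM : ∀ y, G.Adj x y → f y ∈ Mset n ∧ c.Absent (-σ s(x, y) * f y) y) :
    ∃ c' : SColoring G σ n, c'.Proper := by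
  let g (v : V) : Sym2 V → ℤ := Sym2.lift ⟨fun a b =>
    if a = x then (if v = x then f b else -σ s(x, b) * f b)
    else if b = x then (if v = x then f a else -σ s(x, a) * f a) else c.col v s(a, b), by
      intro a b
      by_cases ha : a = x <;> by_cases hb : b = x <;> simp [ha, hb, Sym2.eq_swap]⟩
  have hgx : ∀ y, G.Adj x y → g x s(x, y) = f y := by
    intro y hy
    simp [g]
  have hgy : ∀ y, G.Adj x y → g y s(y, x) = -σ s(x, y) * f y := by
    intro y hy
    simp [g, hy.ne']
  have hg : ∀ v w, v ≠ x → w ≠ x → g v s(v, w) = c.col v s(v, w) := by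
    intro v w hv hw
    simp [g, hv, hw]
  refine ⟨⟨g, fun v w h => ?_, fun v w h => ?_⟩, fun v w z hw hz hwz => ?_⟩
  · by_cases hv : v = x
    · subst hv
      rw [hgx w h]
      exact (hfM w h).1
    by_cases hw : w = x
    · subst hw
      rw [hgy v h.symm]
      refine sign_mul_mem_Mset ?_ (hfM v h.symm).1
      have := hσ w v h.symm
      lia
    rw [hg v w hv hw]
    exact c.mem_colors ((hH v w).2 ⟨h, hv, hw⟩)
  · by_cases hv : v = x
    · subst hv
      have h1 := hgy w h
      rw [Sym2.eq_swap] at h1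
      rw [hgx w h, h1]
      rcases hσ v w h with hs | hs <;> simp [hs]
    by_cases hw : w = x
    · subst hw
      have h1 := hgx v h.symm
      rw [hgy v h.symm, Sym2.eq_swap (a := v), h1]
    have h1 := hg w v hw hv
    rw [Sym2.eq_swap] at h1
    rw [hg v w hv hw, h1]
    exact c.compat ((hH v w).2 ⟨h, hv, hw⟩)
  · change g v s(v, w) ≠ g v s(v, z)
    by_cases hv : v = x
    · subst hv
      rw [hgx w hw, hgx z hz]
      exact fun h => hwz (hf w z hw hz h)
    by_cases hwx : w = x
    · subst hwx
      rw [hgy v hw.symm, hg v z hv hwz.symm]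
      exact ((hfM v hw.symm).2 ((hH v z).2 ⟨hz, hv, hwz.symm⟩)).symm
    by_cases hzx : z = x
    · subst hzx
      rw [hgy v hz.symm, hg v w hv hwz]
      exact (hfM v hz.symm).2 ((hH v w).2 ⟨hw, hv, hwz⟩)
    rw [hg v w hv hwx, hg v z hv hzx]
    exact hc ((hH v w).2 ⟨hw, hv, hwx⟩) ((hH v z).2 ⟨hz, hv, hzx⟩) hwz

variable [Fintype V]

/-- A coloring of the graph without `x` gives lists of two colors at the neighbors of `x`. -/
lemma exists_isListing [DecidableRel G.Adj] {x : V}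
    (hH : ∀ v w, H.Adj v w ↔ G.Adj v w ∧ v ≠ x ∧ w ≠ x) (hdeg : ∀ v, G.degree v < n)
    {ε : V → ℤ} (hε : ∀ y ∈ G.neighborFinset x, ε y = 1 ∨ ε y = -1)
    {c : SColoring H σ n} (hc : c.Proper) :
    ∃ M, IsListing c (G.neighborFinset x) ε M := by
  classical
  have hex : ∀ y ∈ G.neighborFinset x, ∃ A ⊆ (colors n).filter fun a => c.Absent (ε y * a) y,
      A.card = 2 := by
    intro y hy
    refine Finset.exists_subset_card_eq ?_
    have hsub : (colors n).filter (fun a => ¬c.Absent (ε y * a) y) ⊆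
        ((G.neighborFinset y).erase x).image fun w => ε y * c.col y s(y, w) := by
      intro a ha
      have ha' := (Finset.mem_filter.1 ha).2
      simp only [SColoring.Absent, not_forall, not_not] at ha'
      obtain ⟨w, hw, hcol⟩ := ha'
      refine Finset.mem_image.2 ⟨w, ?_, by rw [hcol, sign_mul_sign_mul (hε y hy)]⟩
      rw [hH] at hw
      simp [hw.1, hw.2.2]
    have h1 := (Finset.card_le_card hsub).trans Finset.card_image_le
    have hx : x ∈ G.neighborFinset y := by simpa [G.adj_comm] using hy
    rw [Finset.card_erase_of_mem hx, G.card_neighborFinset_eq_degree] at h1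
    have h2 := Finset.card_filter_add_card_filter_not (s := colors n) fun a => c.Absent (ε y * a) y
    rw [card_colors] at h2
    have h3 := hdeg y
    have h4 : 0 < G.degree y := Finset.card_pos.2 ⟨x, hx⟩
    lia
  choose! M hM hM2 using hex
  exact ⟨M, hc, hM2, fun y hy => (hM y hy).trans (Finset.filter_subset _ _),
    fun y hy a ha => (Finset.mem_filter.1 (hM y hy ha)).2⟩

/-- Every signed graph whose degrees are less than the even number `n` has a proper coloring with
`n` colors. -/
lemma exists_proper (hn : Even n) (hσ : ∀ v w, G.Adj v w → σ s(v, w) = 1 ∨ σ s(v, w) = -1)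
    [DecidableRel G.Adj] (hdeg : ∀ v, G.degree v < n) :
    ∃ c : SColoring G σ n, c.Proper := by
  classical
  suffices h : ∀ (s : Finset V) (F : SimpleGraph V),
      (∀ v w, F.Adj v w ↔ G.Adj v w ∧ v ∈ s ∧ w ∈ s) → ∃ c : SColoring F σ n, c.Proper from
    h Finset.univ G (by simp)
  intro s
  induction s using Finset.induction_on with
  | empty =>
    intro F hF
    simp only [Finset.notMem_empty, and_false] at hF
    exact ⟨⟨fun _ _ => 0, fun v w h => ((hF v w).1 h).elim, fun v w h => ((hF v w).1 h).elim⟩,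
      fun v w z h => ((hF v w).1 h).elim⟩
  | insert x s hx ih =>
    intro F hF
    let H : SimpleGraph V :=
      { Adj := fun v w => G.Adj v w ∧ v ∈ s ∧ w ∈ s
        symm := ⟨fun v w h => ⟨h.1.symm, h.2.2, h.2.1⟩⟩
        loopless := ⟨fun v h => G.loopless.irrefl v h.1⟩ }
    obtain ⟨c, hc⟩ := ih H fun v w => Iff.rfl
    have hH : ∀ v w, H.Adj v w ↔ F.Adj v w ∧ v ≠ x ∧ w ≠ x := by
      intro v w
      simp only [hF, H, Finset.mem_insert]
      grind
    have hFG : F ≤ G := fun v w h => ((hF v w).1 h).1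
    have hFσ : ∀ v w, F.Adj v w → σ s(v, w) = 1 ∨ σ s(v, w) = -1 := fun v w h => hσ v w (hFG h)
    have hFdeg : ∀ v, F.degree v < n := fun v =>
      (SimpleGraph.degree_le_of_le hFG).trans_lt (hdeg v)
    have hε : ∀ y ∈ F.neighborFinset x, -σ s(x, y) = 1 ∨ -σ s(x, y) = -1 := by
      intro y hy
      have := hFσ x y ((F.mem_neighborFinset x y).1 hy)
      lia
    obtain ⟨M, hM⟩ := exists_isListing hH hFdeg hε hc
    obtain ⟨c', f, hc', hf, hfM⟩ := hM.exists_injective hn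
      (fun v w h => hσ v w h.1) hε (by rw [card_colors]; exact hFdeg x)
    refine exists_extension hH hFσ hc' (f := f) ?_ ?_
    · intro y z hy hz hyz
      exact hf (by simpa using hy) (by simpa using hz) hyz
    · intro y hy
      exact hfM y (by simpa using hy)

lemma degree_le_of_proper [DecidableRel G.Adj] {c : SColoring G σ n} (hc : c.Proper) (v : V) :
    G.degree v ≤ n := by
  rw [← card_colors n]
  refine Finset.card_le_card_of_injOn (fun w => c.col v s(v, w)) (fun w hw => ?_) ?_
  · simp only [Finset.mem_coe, SimpleGraph.mem_neighborFinset] at hw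
    exact mem_colors.2 (c.mem_colors hw)
  · intro w hw z hz hwz
    simp only [Finset.mem_coe, SimpleGraph.mem_neighborFinset] at hw hz
    by_contra hne
    exact hc hw hz hne hwz

end Extension

end SignedVizing

/-- **Zero-free Signed Vizing's Theorem.** `Δ(Σ) ≤ χ'(Σ)`, and `Σ` admits a proper
zero-free edge coloring with `Δ(Σ)+1` colors if `Δ(Σ)` is odd, and with `Δ(Σ)+2`
colors if `Δ(Σ)` is even. -/
theorem zero_free_signed_vizing {V : Type*} [Fintype V] (G : SimpleGraph V)
    [DecidableRel G.Adj] (σ : Sym2 V → ℤ)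
    (hσ : ∀ e ∈ G.edgeSet, σ e = 1 ∨ σ e = -1) :
    G.maxDegree ≤ sInf {n : ℕ | ∃ c : SColoring G σ n, c.Proper} ∧
    (Odd G.maxDegree →
      ∃ c : SColoring G σ (G.maxDegree + 1), c.Proper ∧ c.ZeroFree) ∧
    (Even G.maxDegree →
      ∃ c : SColoring G σ (G.maxDegree + 2), c.Proper ∧ c.ZeroFree) := by
  classical
  have hσ' : ∀ v w, G.Adj v w → σ s(v, w) = 1 ∨ σ s(v, w) = -1 := fun v w h => hσ _ h
  have hzero : ∀ {n : ℕ}, Even n → ∀ c : SColoring G σ n, c.ZeroFree := fun hn c v w h h0 =>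
    Nat.not_odd_iff_even.2 hn ((c.mem_colors h).2 h0)
  have hodd : Odd G.maxDegree → ∃ c : SColoring G σ (G.maxDegree + 1), c.Proper :=
    fun h => SignedVizing.exists_proper h.add_one hσ' fun v =>
      (G.degree_le_maxDegree v).trans_lt (by lia)
  have heven : Even G.maxDegree → ∃ c : SColoring G σ (G.maxDegree + 2), c.Proper :=
    fun h => SignedVizing.exists_proper (h.add even_two) hσ' fun v =>
      (G.degree_le_maxDegree v).trans_lt (by lia)
  refine ⟨?_, fun h => ?_, fun h => ?_⟩
  · have hne : {n : ℕ | ∃ c : SColoring G σ n, c.Proper}.Nonempty := by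
      rcases Nat.even_or_odd G.maxDegree with h | h
      exacts [⟨_, heven h⟩, ⟨_, hodd h⟩]
    obtain ⟨c, hc⟩ := Nat.sInf_mem hne
    exact G.maxDegree_le_of_forall_degree_le _ (SignedVizing.degree_le_of_proper hc)
  · obtain ⟨c, hc⟩ := hodd h
    exact ⟨c, hc, hzero h.add_one c⟩
  · obtain ⟨c, hc⟩ := heven h
    exact ⟨c, hc, hzero (h.add even_two) c⟩
end
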